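/- arXiv:1901.00587 — 8 statements merged into one kernel-verified Lean document; each statement's English description precedes it below -/
import Mathlib

section
/- (Artin) Let F be a finite field and let a, b ∈ F[X] be relatively prime polynomials with a ≠ 0. Then for every sufficiently large natural number d there exists an irreducible polynomial p ∈ F[X] of degree d with p ≡ b (mod a); that is, there exists D such that for all d ≥ D there is an irreducible p ∈ F[X] with deg p = d and a divides p − b. -/
/-!
The proof is the analytic one, carried out on coefficients of power series. Let `q = #F`. For a
character `χ` of `F[X] / (a)` put `L(u, χ) = ∑ χ(f) u ^ deg f`, over monic `f`. Unique
factorization says that the coefficients of `u L' / L` are the sums `Sₙ(χ)` of `Λ(f) χ(f)` over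
monic `f` of degree `n` (`logDer_coeffSum`). For the principal character `Sₙ = qⁿ + O(1)`. For any
other one `L` is a polynomial (`coeffSum_eq_zero`), so `Sₙ(χ)` is minus the sum of the `n`-th
powers of the reciprocal roots of `L`, and `Sₙ(χ) = o(qⁿ)` once these have modulus less than `q`.
Orthogonality of characters then gives `qⁿ / φ(a) + o(qⁿ)` for the sum of `Λ(f)` over `f ≡ b`,
while proper prime powers account for only `O(n q^{n/2})`. So some irreducible polynomial of degree
`n`, which can even be taken monic, is congruent to `b`.

The non-vanishing of `L` on `|u| ≤ 1/q` (`root_norm_gt`) is treated uniformly for real and complex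
characters. Suppose `L` has a root `1/β` with `β ≥ q`, positive after a rotation `u ↦ w u`, and
write `L(w u) = (1 - β u) K(u)`. The logarithmic derivative of `K` has coefficients `βⁿ + wⁿ Sₙ`,
whose real parts are nonnegative since `|Sₙ| ≤ qⁿ`. Hence the polynomial `K * conj K` has
nonnegative coefficients, and its being a polynomial forces these real parts to vanish for all
large `n`. Then `Re (wⁿ Sₙ) ≤ -qⁿ` for all large `n`, so that all terms of `wⁿ Sₙ` are extremal and
`(w χ(X))ⁿ = -1` for all large `n`, which is absurd (`frequently_re`).
-/

/-! ### Logarithmic derivatives of power series -/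

namespace ArtinDirichlet
open Polynomial Filter Topology
open scoped ComplexOrder

/-- `LogDer P S` says `X P' = P S`: the series `S` is the logarithmic derivative `X P' / P`,
written without division. -/
def LogDer (P S : PowerSeries ℂ) : Prop :=
  PowerSeries.X * PowerSeries.derivative ℂ P = P * S

lemma LogDer.mul {P Q S T : PowerSeries ℂ} (h : LogDer P S) (h' : LogDer Q T) :
    LogDer (P * Q) (S + T) := by
  unfold LogDer at *
  rw [Derivation.leibniz, smul_eq_mul, smul_eq_mul]
  linear_combination P * h' + Q * h

lemma LogDer.of_mul {P Q S T : PowerSeries ℂ} (h : LogDer P S) (h' : LogDer (P * Q) T)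
    (hP : P ≠ 0) : LogDer Q (T - S) := by
  unfold LogDer at *
  rw [Derivation.leibniz, smul_eq_mul, smul_eq_mul] at h'
  apply mul_left_cancel₀ hP
  linear_combination h' - Q * h

lemma LogDer.unique {P S T : PowerSeries ℂ} (h : LogDer P S) (h₂ : LogDer P T)
    (hP : P ≠ 0) : S = T :=
  mul_left_cancel₀ hP (h.symm.trans h₂)

/-- Coefficientwise form: the recursion `n pₙ = ∑ pᵢ sⱼ` over `i + j = n`. -/
lemma logDer_iff {P S : PowerSeries ℂ} : LogDer P S ↔ ∀ n : ℕ,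
    (n : ℂ) * P.coeff n = ∑ x ∈ Finset.HasAntidiagonal.antidiagonal n, P.coeff x.1 * S.coeff x.2 := by
  unfold LogDer
  rw [PowerSeries.ext_iff]
  refine forall_congr' fun n => ?_
  rw [PowerSeries.coeff_mul n P S]
  cases n with
  | zero => simp
  | succ n =>
    rw [PowerSeries.coeff_succ_X_mul, PowerSeries.coeff_derivative]
    push_cast
    rw [mul_comm]

lemma LogDer.rescale {P S : PowerSeries ℂ} (h : LogDer P S) (w : ℂ) :
    LogDer (PowerSeries.rescale w P) (PowerSeries.rescale w S) := by
  rw [logDer_iff] at *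
  intro n
  simp only [PowerSeries.coeff_rescale]
  rw [mul_left_comm, h n, Finset.mul_sum]
  refine Finset.sum_congr rfl fun x hx => ?_
  rw [← Finset.HasAntidiagonal.mem_antidiagonal.mp hx, pow_add]
  ring

lemma LogDer.conj {P S : PowerSeries ℂ} (h : LogDer P S) :
    LogDer (PowerSeries.map (starRingEnd ℂ) P) (PowerSeries.map (starRingEnd ℂ) S) := by
  rw [logDer_iff] at *
  intro n
  have := congrArg (starRingEnd ℂ) (h n)
  simpa only [map_mul, map_sum, map_natCast, PowerSeries.coeff_map] using this

/-- `X / (X - r) = -∑_{n ≥ 1} (X / r)ⁿ`. -/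
lemma logDer_linear {r : ℂ} (hr : r ≠ 0) :
    LogDer (((X - C r : ℂ[X]) : PowerSeries ℂ))
      (PowerSeries.mk fun n => if n = 0 then 0 else -(r⁻¹) ^ n) := by
  rw [logDer_iff]
  intro n
  rw [← PowerSeries.coeff_mul]
  have e : ((X - C r : ℂ[X]) : PowerSeries ℂ) = PowerSeries.X - PowerSeries.C r := by
    simp
  rw [e, sub_mul]
  rcases n with _ | _ | n
  · simp
  · simp [PowerSeries.coeff_succ_X_mul, hr]
  · simp [PowerSeries.coeff_succ_X_mul, PowerSeries.coeff_X]
    field_simp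
    ring

/-- The coefficients of `X P' / P` are the negated power sums of the reciprocal roots of `P`. -/
lemma logDer_of_poly {P : ℂ[X]} (h0 : P.coeff 0 ≠ 0) :
    LogDer (P : PowerSeries ℂ)
      (PowerSeries.mk fun n => if n = 0 then 0 else -(P.roots.map fun r => (r⁻¹) ^ n).sum) := by
  have key : ∀ s : Multiset ℂ, (∀ r ∈ s, r ≠ 0) →
      LogDer (((s.map fun r => X - C r).prod : ℂ[X]) : PowerSeries ℂ)
        (PowerSeries.mk fun n => if n = 0 then 0 else -(s.map fun r => (r⁻¹) ^ n).sum) := by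
    intro s
    induction s using Multiset.induction with
    | empty =>
      intro _
      rw [logDer_iff]
      intro n
      rcases n with _ | n <;> simp [PowerSeries.coeff_one]
    | cons r s ih =>
      intro hs
      have h1 := (logDer_linear (hs r (by simp))).mul
        (ih fun x hx => hs x (Multiset.mem_cons_of_mem hx))
      convert h1 using 1
      · simp
      · ext n
        by_cases hn : n = 0
        · simp [hn]
        · simp [hn]; ring
  have h1 := key P.roots (by
    rintro r hr rfl
    rw [mem_roots', IsRoot, ← coeff_zero_eq_eval_zero] at hr
    exact h0 hr.2)
  have hc : LogDer ((C P.leadingCoeff : ℂ[X]) : PowerSeries ℂ) 0 := by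
    unfold LogDer; simp
  have h2 := hc.mul h1
  rw [zero_add, ← Polynomial.coe_mul, ← (IsAlgClosed.splits P).eq_prod_roots] at h2
  exact h2

/-- A polynomial whose logarithmic derivative has coefficients of nonnegative real part has only
finitely many such coefficients off the imaginary axis. For `D = K * conj K` the logarithmic
derivative has coefficients `sₙ = 2 Re tₙ ≥ 0`, so the recursion `n Dₙ = ∑ Dᵢ sⱼ` makes all `Dₙ`
nonnegative and gives `n Dₙ ≥ sₙ`; but `Dₙ = 0` for large `n`. -/
lemma eventually_re_eq_zero {K : ℂ[X]} (hK : K.coeff 0 = 1) {T : PowerSeries ℂ}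
    (h : LogDer (K : PowerSeries ℂ) T) (hT : ∀ n, 0 ≤ (T.coeff n).re) :
    ∀ᶠ n in atTop, (T.coeff n).re = 0 := by
  set D : ℂ[X] := K * K.map (starRingEnd ℂ) with hD
  set U : PowerSeries ℂ := T + PowerSeries.map (starRingEnd ℂ) T with hU
  have hDU : LogDer (D : PowerSeries ℂ) U := by
    have := h.mul h.conj
    rwa [← Polynomial.polynomial_map_coe, ← Polynomial.coe_mul] at this
  have hUc : ∀ n, U.coeff n = ((2 * (T.coeff n).re : ℝ) : ℂ) := by
    intro n
    rw [hU, map_add, PowerSeries.coeff_map, Complex.add_conj]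
  have hU0 : ∀ n, 0 ≤ U.coeff n := by
    intro n
    rw [hUc]
    exact_mod_cast mul_nonneg zero_le_two (hT n)
  have hD0 : D.coeff 0 = 1 := by simp [hD, mul_coeff_zero, hK]
  rw [logDer_iff] at hDU
  simp only [Polynomial.coeff_coe] at hDU
  have hDU0 : U.coeff 0 = 0 := by
    have := hDU 0
    simpa [hD0] using this.symm
  have hDn : ∀ n, 0 ≤ D.coeff n := by
    intro n
    induction n using Nat.strong_induction_on with
    | _ n ih =>
      rcases Nat.eq_zero_or_pos n with rfl | hn
      · rw [hD0]; exact zero_le_one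
      · have h1 : 0 ≤ (n : ℂ) * D.coeff n := by
          rw [hDU n]
          refine Finset.sum_nonneg fun x hx => ?_
          by_cases hx2 : x.2 = 0
          · rw [hx2, hDU0, mul_zero]
          · have := Finset.HasAntidiagonal.mem_antidiagonal.mp hx
            exact mul_nonneg (ih _ (by omega)) (hU0 _)
        have h2 : (0 : ℂ) ≤ ((n : ℝ)⁻¹ : ℝ) := by exact_mod_cast inv_nonneg.mpr n.cast_nonneg
        have h3 := mul_nonneg h2 h1
        have h4 : (n : ℂ) ≠ 0 := by exact_mod_cast hn.ne'
        rwa [Complex.ofReal_inv, Complex.ofReal_natCast, inv_mul_cancel_left₀ h4] at h3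
  filter_upwards [eventually_gt_atTop D.natDegree] with n hn
  have h1 := hDU n
  rw [coeff_eq_zero_of_natDegree_lt hn, mul_zero] at h1
  have h2 := (Finset.sum_eq_zero_iff_of_nonneg
    (fun x _ => mul_nonneg (hDn x.1) (hU0 x.2))).mp h1.symm (0, n) (by simp)
  rw [hD0, one_mul, hUc] at h2
  have h3 : 2 * (T.coeff n).re = 0 := by exact_mod_cast h2
  linarith

/-- Non-vanishing of `P` on the closed disc of radius `1 / q`. A root `1 / β` with `β ≥ q`, made
positive by a rotation of the variable, can be divided out; the quotient has logarithmic
derivative with coefficients `βⁿ + wⁿ Sₙ`, of nonnegative real part since `‖Sₙ‖ ≤ qⁿ ≤ βⁿ`. By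
`eventually_re_eq_zero` the real part of `wⁿ Sₙ` is then eventually at most `-qⁿ`, against `hw`. -/
lemma root_norm_gt {P : ℂ[X]} (h0 : P.coeff 0 = 1) {S : PowerSeries ℂ} {q : ℝ} (hq : 0 < q)
    (h : LogDer (P : PowerSeries ℂ) S) (hS : ∀ n, ‖S.coeff n‖ ≤ q ^ n) (hS0 : S.coeff 0 = 0)
    (hw : ∀ w : ℂ, ‖w‖ = 1 → ∃ᶠ n in atTop, -q ^ n < (w ^ n * S.coeff n).re)
    {r : ℂ} (hr : P.IsRoot r) : ‖r⁻¹‖ < q := by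
  by_contra! hlt
  have hr0 : r ≠ 0 := by
    rintro rfl
    rw [IsRoot, ← coeff_zero_eq_eval_zero, h0] at hr
    exact one_ne_zero hr
  set β : ℝ := ‖r⁻¹‖ with hβ
  have hβ0 : 0 < β := norm_pos_iff.mpr (inv_ne_zero hr0)
  set w : ℂ := r * β with hw'
  have hw1 : ‖w‖ = 1 := by
    rw [hw', norm_mul, Complex.norm_real, Real.norm_of_nonneg hβ0.le, hβ, norm_inv,
      mul_inv_cancel₀ (norm_ne_zero_iff.mpr hr0)]
  have hβc : (β : ℂ) ≠ 0 := by exact_mod_cast ne_of_gt hβ0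
  -- after rotating the variable by `w` the root lies at the positive real number `1 / β`
  have hroot : (P.comp (C w * X)).IsRoot ((β : ℂ)⁻¹) := by
    rw [IsRoot, eval_comp, eval_mul, eval_C, eval_X, hw', mul_assoc, mul_inv_cancel₀ hβc, mul_one]
    exact hr
  obtain ⟨K, hK⟩ := dvd_iff_isRoot.mpr hroot
  have hcoe : ((P.comp (C w * X) : ℂ[X]) : PowerSeries ℂ) = PowerSeries.rescale w P := by
    ext n
    rw [Polynomial.coeff_coe, PowerSeries.coeff_rescale, Polynomial.coeff_coe,
      comp_C_mul_X_coeff, mul_comm]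
  have hP' : LogDer ((P.comp (C w * X) : ℂ[X]) : PowerSeries ℂ) (PowerSeries.rescale w S) := by
    rw [hcoe]; exact h.rescale w
  have hlin := logDer_linear (inv_ne_zero hβc)
  rw [hK, Polynomial.coe_mul] at hP'
  have hne : ((X - C (β : ℂ)⁻¹ : ℂ[X]) : PowerSeries ℂ) ≠ 0 := by
    rw [Ne, Polynomial.coe_eq_zero_iff]
    exact X_sub_C_ne_zero _
  have hKT := hlin.of_mul hP' hne
  have hK0 : K.coeff 0 = -(β : ℂ) := by
    have h1 := congrArg (fun p : ℂ[X] => p.coeff 0) hK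
    simp only [mul_coeff_zero, comp_C_mul_X_coeff, h0] at h1
    simp at h1
    field_simp at h1
    linear_combination h1
  have hK1 : ((C (-(β : ℂ)⁻¹) * K : ℂ[X])).coeff 0 = 1 := by
    rw [coeff_C_mul, hK0]; field_simp
  have hC : LogDer ((C (-(β : ℂ)⁻¹) : ℂ[X]) : PowerSeries ℂ) 0 := by
    unfold LogDer; simp
  have hKT' := hC.mul hKT
  rw [zero_add, ← Polynomial.coe_mul] at hKT'
  have hco : ∀ n, n ≠ 0 → ((PowerSeries.rescale w S -
      PowerSeries.mk fun n => if n = 0 then 0 else -(((β : ℂ)⁻¹)⁻¹) ^ n).coeff n).re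
      = (w ^ n * S.coeff n).re + β ^ n := by
    intro n hn
    simp only [map_sub, PowerSeries.coeff_rescale, PowerSeries.coeff_mk, if_neg hn, inv_inv,
      sub_neg_eq_add, Complex.add_re]
    rw [← Complex.ofReal_pow, Complex.ofReal_re]
  have hpow : ∀ n : ℕ, q ^ n ≤ β ^ n := fun n => pow_le_pow_left₀ hq.le hlt n
  have hev := eventually_re_eq_zero hK1 hKT' (by
    intro n
    by_cases hn : n = 0
    · rw [hn, map_sub, PowerSeries.coeff_rescale, hS0]; simp
    · rw [hco n hn]
      have h1 := (abs_le.mp (Complex.abs_re_le_norm (w ^ n * S.coeff n))).1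
      rw [norm_mul, norm_pow, hw1, one_pow, one_mul] at h1
      have := hS n
      have := hpow n
      linarith)
  refine hw w hw1 ?_
  filter_upwards [hev, eventually_ne_atTop 0] with n hn hn0
  rw [hco n hn0] at hn
  have := hpow n
  linarith

lemma tendsto_coeff_div {P : ℂ[X]} (h0 : P.coeff 0 = 1) {S : PowerSeries ℂ} {q : ℝ} (hq : 0 < q)
    (h : LogDer (P : PowerSeries ℂ) S) (hS : ∀ n, ‖S.coeff n‖ ≤ q ^ n) (hS0 : S.coeff 0 = 0)
    (hw : ∀ w : ℂ, ‖w‖ = 1 → ∃ᶠ n in atTop, -q ^ n < (w ^ n * S.coeff n).re) :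
    Tendsto (fun n => S.coeff n / (q : ℂ) ^ n) atTop (𝓝 0) := by
  have hP : (P : PowerSeries ℂ) ≠ 0 := by
    rw [Ne, Polynomial.coe_eq_zero_iff]
    rintro rfl
    simp at h0
  have hSeq := h.unique (logDer_of_poly (by rw [h0]; exact one_ne_zero)) hP
  have key : ∀ s : Multiset ℂ, (∀ r ∈ s, ‖r⁻¹‖ < q) →
      Tendsto (fun n => (s.map fun r => (r⁻¹) ^ n).sum / (q : ℂ) ^ n) atTop (𝓝 0) := by
    intro s
    induction s using Multiset.induction with
    | empty => intro _; simp
    | cons r s ih =>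
      intro hs
      have h1 : Tendsto (fun n : ℕ => (r⁻¹ / (q : ℂ)) ^ n) atTop (𝓝 0) := by
        apply tendsto_pow_atTop_nhds_zero_of_norm_lt_one
        rw [norm_div, Complex.norm_real, Real.norm_of_nonneg hq.le, div_lt_one hq]
        exact hs r (by simp)
      have h2 := h1.add (ih fun x hx => hs x (Multiset.mem_cons_of_mem hx))
      rw [add_zero] at h2
      refine h2.congr fun n => ?_
      rw [Multiset.map_cons, Multiset.sum_cons, add_div, div_pow]
  have h1 := (key P.roots fun r hr => root_norm_gt h0 hq h hS hS0 hw (mem_roots'.mp hr).2).neg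
  rw [neg_zero] at h1
  refine h1.congr' ?_
  filter_upwards [eventually_ne_atTop 0] with n hn
  rw [hSeq, PowerSeries.coeff_mk, if_neg hn, neg_div]
end ArtinDirichlet

/-! ### Polynomials over a finite field and their L-series -/

namespace ArtinDirichlet
open Polynomial Filter Topology

section Arithmetic
variable (F : Type*) [Field F] [Fintype F]

lemma finite_monic (n : ℕ) : {p : F[X] | p.Monic ∧ p.natDegree = n}.Finite := by
  have : Finite (degreeLT F n) := Finite.of_equiv _ (degreeLTEquiv F n).toEquiv.symm
  exact Finite.of_equiv _ (monicEquivDegreeLT n).symm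

/-- The monic polynomials of degree `n`. -/
noncomputable def monics (n : ℕ) : Finset F[X] := (finite_monic F n).toFinset

open Classical in
/-- The monic irreducible polynomials of degree `n`. -/
noncomputable def irreds (n : ℕ) : Finset F[X] := (monics F n).filter Irreducible

variable {F}

lemma mem_monics {n : ℕ} {p : F[X]} : p ∈ monics F n ↔ p.Monic ∧ p.natDegree = n := by
  simp [monics]

lemma mem_irreds {n : ℕ} {p : F[X]} :
    p ∈ irreds F n ↔ (p.Monic ∧ p.natDegree = n) ∧ Irreducible p := by
  simp [irreds, mem_monics]

lemma sum_monics (n : ℕ) [Fintype (degreeLT F n)] (g : F[X] → ℂ) :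
    ∑ f ∈ monics F n, g f = ∑ h : degreeLT F n, g (X ^ n + (h : F[X])) := by
  symm
  refine Finset.sum_bij' (fun h _ => X ^ n + (h : F[X]))
    (fun f hf => monicEquivDegreeLT n ⟨f, mem_monics.mp hf⟩) ?_ ?_ ?_ ?_ ?_
  · intro h _
    exact mem_monics.mpr ((monicEquivDegreeLT n).symm h).2
  · simp
  · intro h _
    exact (monicEquivDegreeLT n).apply_symm_apply h
  · intro f hf
    exact congrArg Subtype.val
      ((monicEquivDegreeLT n).symm_apply_apply ⟨f, mem_monics.mp hf⟩)
  · simp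

lemma card_monics (n : ℕ) : (monics F n).card = Fintype.card F ^ n := by
  have h1 : Nat.card (degreeLT F n) = Fintype.card F ^ n := by
    rw [Nat.card_congr (degreeLTEquiv F n).toEquiv]; simp
  rw [← h1, ← Nat.card_congr (monicEquivDegreeLT n), monics, ← Set.ncard_eq_toFinset_card _ (finite_monic F n)]
  rfl

open UniqueFactorizationMonoid in
open Classical in
/-- `deg f = ∑ deg P` over the prime powers `P ^ k` dividing `f` with `k ≥ 1`: the analogue of
`log n = ∑_{d ∣ n} Λ(d)`. The pair `x` is `(deg P, k)`. -/
lemma natDegree_eq_sum {n : ℕ} {f : F[X]} (hf : f ∈ monics F n) :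
    (n : ℂ) = ∑ x ∈ Finset.Icc 1 n ×ˢ Finset.Icc 1 n, ∑ P ∈ irreds F x.1,
      if P ^ x.2 ∣ f then (x.1 : ℂ) else 0 := by
  obtain ⟨hm, hd⟩ := mem_monics.mp hf
  have hf0 := hm.ne_zero
  have hfac : ∀ P ∈ normalizedFactors f, P.Monic ∧ Irreducible P ∧ P ∣ f := by
    intro P hP
    refine ⟨?_, irreducible_of_normalized_factor P hP, dvd_of_mem_normalizedFactors hP⟩
    rw [← normalize_normalized_factor P hP]
    exact monic_normalize (irreducible_of_normalized_factor P hP).ne_zero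
  have hdvd : ∀ P : F[X], P.Monic → Irreducible P → ∀ k : ℕ,
      P ^ k ∣ f ↔ k ≤ (normalizedFactors f).count P := by
    intro P hP hI k
    have h1 := emultiplicity_eq_count_normalizedFactors hI hf0
    rw [hP.normalize_eq_self] at h1
    rw [pow_dvd_iff_le_emultiplicity, h1, Nat.cast_le]
  -- only exponents up to `n` occur, since `P ^ k ∣ f` forces `k * deg P ≤ n`
  have hcount : ∀ P ∈ (Finset.Icc 1 n).biUnion (irreds F),
      ∑ k ∈ Finset.Icc 1 n, (if P ^ k ∣ f then (P.natDegree : ℂ) else 0)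
        = (normalizedFactors f).count P • (P.natDegree : ℂ) := by
    intro P hP
    obtain ⟨d, hdm, hP⟩ := Finset.mem_biUnion.mp hP
    obtain ⟨⟨hPm, hPd⟩, hPI⟩ := mem_irreds.mp hP
    have h2 : (normalizedFactors f).count P ≤ n := by
      have h3 := natDegree_le_of_dvd
        ((hdvd P hPm hPI ((normalizedFactors f).count P)).mpr le_rfl) hf0
      rw [natDegree_pow, hd, hPd] at h3
      exact (Nat.le_mul_of_pos_right _ (Finset.mem_Icc.mp hdm).1).trans h3
    rw [← Finset.sum_filter, Finset.sum_const]
    congr 1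
    rw [show Finset.filter (fun k => P ^ k ∣ f) (Finset.Icc 1 n)
      = Finset.Icc 1 ((normalizedFactors f).count P) from ?_]
    · simp
    · ext k
      simp only [Finset.mem_filter, Finset.mem_Icc, hdvd P hPm hPI]
      omega
  have hdeg : (n : ℂ) = ∑ P ∈ (normalizedFactors f).toFinset,
      (normalizedFactors f).count P • (P.natDegree : ℂ) := by
    rw [← Finset.sum_multiset_map_count]
    have h1 := prod_normalizedFactors_eq hf0
    rw [hm.normalize_eq_self] at h1
    have h2 := natDegree_multiset_prod_of_monic (normalizedFactors f) (fun P hP => (hfac P hP).1)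
    rw [h1, hd] at h2
    rw [h2, Nat.cast_multiset_sum, Multiset.map_map]
    rfl
  have hsub : (normalizedFactors f).toFinset ⊆ (Finset.Icc 1 n).biUnion (irreds F) := by
    intro P hP
    rw [Multiset.mem_toFinset] at hP
    obtain ⟨h1, h2, h3⟩ := hfac P hP
    refine Finset.mem_biUnion.mpr ⟨P.natDegree, Finset.mem_Icc.mpr ⟨h2.natDegree_pos, ?_⟩,
      mem_irreds.mpr ⟨⟨h1, rfl⟩, h2⟩⟩
    exact hd ▸ natDegree_le_of_dvd h3 hf0
  rw [hdeg, Finset.sum_subset hsub, ← Finset.sum_congr rfl hcount, Finset.sum_biUnion,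
    Finset.sum_product]
  · refine Finset.sum_congr rfl fun d _ => ?_
    rw [Finset.sum_comm]
    refine Finset.sum_congr rfl fun k _ => Finset.sum_congr rfl fun P hP => ?_
    rw [(mem_irreds.mp hP).1.2]
  · intro d _ e _ hde
    refine Finset.disjoint_left.mpr fun P hP hP' => hde ?_
    rw [← (mem_irreds.mp hP).1.2, ← (mem_irreds.mp hP').1.2]
  · intro P _ hP
    rw [Multiset.mem_toFinset] at hP
    rw [Multiset.count_eq_zero_of_notMem hP, zero_smul]

/-- The coefficient of `uⁿ` in the L-series `L(u, ψ) = ∑ ψ(f) u ^ deg f` over monic `f`. -/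
noncomputable def coeffSum (ψ : F[X] →* ℂ) (n : ℕ) : ℂ := ∑ f ∈ monics F n, ψ f

/-- The sum of `Λ(f) ψ(f)` over monic `f` of degree `n`, where `Λ(P ^ k) = deg P`. The pair `x` is
`(deg P, k)`, so `x.1 * x.2 = n`; for `n = 0` the sum is empty. -/
noncomputable def primeSum (ψ : F[X] →* ℂ) (n : ℕ) : ℂ :=
  ∑ x ∈ n.divisorsAntidiagonal, (x.1 : ℂ) * ∑ P ∈ irreds F x.1, ψ P ^ x.2

open Classical in
lemma sum_multiples (ψ : F[X] →* ℂ) (n d k : ℕ) {P : F[X]} (hP : P ∈ irreds F d) :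
    ∑ f ∈ monics F n, (if P ^ k ∣ f then ψ f else 0)
      = if d * k ≤ n then ψ P ^ k * coeffSum ψ (n - d * k) else 0 := by
  obtain ⟨⟨hPm, hPd⟩, hPI⟩ := mem_irreds.mp hP
  have hpd : (P ^ k).natDegree = d * k := by rw [natDegree_pow, hPd, mul_comm]
  split_ifs with h
  · rw [← Finset.sum_filter, coeffSum, Finset.mul_sum]
    symm
    refine Finset.sum_bij (fun g _ => P ^ k * g) ?_ ?_ ?_ ?_
    · intro g hg
      obtain ⟨h1, h2⟩ := mem_monics.mp hg
      refine Finset.mem_filter.mpr ⟨mem_monics.mpr ⟨(hPm.pow k).mul h1, ?_⟩, dvd_mul_right _ _⟩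
      rw [(hPm.pow k).natDegree_mul h1, hpd, h2]
      omega
    · intro g _ g' _ e
      exact mul_left_cancel₀ (hPm.pow k).ne_zero e
    · intro f hf
      obtain ⟨h1, g, rfl⟩ := Finset.mem_filter.mp hf
      obtain ⟨h2, h3⟩ := mem_monics.mp h1
      have hg := (hPm.pow k).of_mul_monic_left h2
      refine ⟨g, mem_monics.mpr ⟨hg, ?_⟩, rfl⟩
      rw [(hPm.pow k).natDegree_mul hg, hpd] at h3
      omega
    · intro g _
      rw [map_mul, map_pow]
  · refine Finset.sum_eq_zero fun f hf => if_neg fun hdvd => h ?_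
    obtain ⟨h1, h2⟩ := mem_monics.mp hf
    rw [← hpd, ← h2]
    exact natDegree_le_of_dvd hdvd h1.ne_zero

lemma coeffSum_zero (ψ : F[X] →* ℂ) : coeffSum ψ 0 = 1 := by
  have : monics F 0 = {1} := by
    ext f
    rw [mem_monics, Finset.mem_singleton]
    constructor
    · rintro ⟨h1, h2⟩
      exact h1.natDegree_eq_zero.mp h2
    · rintro rfl
      exact ⟨monic_one, natDegree_one⟩
  rw [coeffSum, this, Finset.sum_singleton, map_one]

lemma primeSum_zero (ψ : F[X] →* ℂ) : primeSum ψ 0 = 0 := by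
  simp [primeSum]

lemma sum_antidiagonal_eq (n : ℕ) (g : ℕ × ℕ → ℂ) :
    ∑ x ∈ Finset.HasAntidiagonal.antidiagonal n, g x
      = ∑ i ∈ Finset.range (n + 1), g (n - i, i) := by
  rw [Finset.Nat.antidiagonal_eq_map', Finset.sum_map]
  rfl

/-- The prime power sums are the coefficients of `u L'(u, ψ) / L(u, ψ)`. -/
lemma logDer_coeffSum (ψ : F[X] →* ℂ) :
    LogDer (PowerSeries.mk (coeffSum ψ)) (PowerSeries.mk (primeSum ψ)) := by
  classical
  rw [logDer_iff]
  intro n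
  simp only [PowerSeries.coeff_mk]
  have hL : (n : ℂ) * coeffSum ψ n = ∑ x ∈ Finset.Icc 1 n ×ˢ Finset.Icc 1 n,
      if x.1 * x.2 ≤ n then
        ((x.1 : ℂ) * ∑ P ∈ irreds F x.1, ψ P ^ x.2) * coeffSum ψ (n - x.1 * x.2) else 0 := by
    have h1 : (n : ℂ) * coeffSum ψ n = ∑ f ∈ monics F n,
        ∑ x ∈ Finset.Icc 1 n ×ˢ Finset.Icc 1 n, ∑ P ∈ irreds F x.1,
          (x.1 : ℂ) * if P ^ x.2 ∣ f then ψ f else 0 := by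
      rw [coeffSum, Finset.mul_sum]
      refine Finset.sum_congr rfl fun f hf => ?_
      rw [natDegree_eq_sum hf, Finset.sum_mul]
      refine Finset.sum_congr rfl fun x _ => ?_
      rw [Finset.sum_mul]
      refine Finset.sum_congr rfl fun P _ => ?_
      split_ifs <;> simp
    rw [h1, Finset.sum_comm]
    refine Finset.sum_congr rfl fun x _ => ?_
    rw [Finset.sum_comm]
    simp_rw [← Finset.mul_sum]
    rw [Finset.sum_congr rfl fun P hP => sum_multiples ψ n x.1 x.2 hP]
    split_ifs
    · rw [← Finset.sum_mul, mul_assoc]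
    · simp
  have hS : ∀ i ≤ n, primeSum ψ i = ∑ x ∈ Finset.Icc 1 n ×ˢ Finset.Icc 1 n,
      if x.1 * x.2 = i then (x.1 : ℂ) * ∑ P ∈ irreds F x.1, ψ P ^ x.2 else 0 := by
    intro i hi
    rw [primeSum, ← Finset.sum_filter]
    congr 1
    ext ⟨d, k⟩
    simp only [Nat.mem_divisorsAntidiagonal, Finset.mem_filter, Finset.mem_product, Finset.mem_Icc]
    constructor
    · rintro ⟨rfl, h⟩
      have hd : 0 < d := Nat.pos_of_ne_zero fun e => h (by simp [e])
      have hk : 0 < k := Nat.pos_of_ne_zero fun e => h (by simp [e])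
      exact ⟨⟨⟨hd, (Nat.le_mul_of_pos_right d hk).trans hi⟩,
        ⟨hk, (Nat.le_mul_of_pos_left k hd).trans hi⟩⟩, rfl⟩
    · rintro ⟨⟨⟨hd, -⟩, ⟨hk, -⟩⟩, rfl⟩
      exact ⟨rfl, (Nat.mul_pos hd hk).ne'⟩
  rw [hL, sum_antidiagonal_eq]
  have hR : ∀ i ∈ Finset.range (n + 1), coeffSum ψ (n - i) * primeSum ψ i =
      ∑ x ∈ Finset.Icc 1 n ×ˢ Finset.Icc 1 n, if x.1 * x.2 = i then
        ((x.1 : ℂ) * ∑ P ∈ irreds F x.1, ψ P ^ x.2) * coeffSum ψ (n - i) else 0 := by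
    intro i hi
    rw [hS i (Nat.lt_succ_iff.mp (Finset.mem_range.mp hi)), Finset.mul_sum]
    refine Finset.sum_congr rfl fun x _ => ?_
    split_ifs
    · ring
    · simp
  refine Eq.trans ?_ (Finset.sum_congr rfl hR).symm
  rw [Finset.sum_comm]
  refine Finset.sum_congr rfl fun x _ => ?_
  rw [Finset.sum_ite_eq]
  simp

/-- For `ψ = 1` the L-series is `1 / (1 - q u)`. -/
lemma primeSum_one (n : ℕ) (hn : n ≠ 0) :
    primeSum (1 : F[X] →* ℂ) n = (Fintype.card F : ℂ) ^ n := by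
  set q : ℂ := (Fintype.card F : ℂ) with hq
  have hA : ∀ n, coeffSum (1 : F[X] →* ℂ) n = q ^ n := by
    intro n
    simp [coeffSum, card_monics, hq]
  have hz : LogDer (PowerSeries.mk (coeffSum (1 : F[X] →* ℂ)))
      (PowerSeries.mk fun n => if n = 0 then 0 else q ^ n) := by
    rw [logDer_iff]
    intro n
    simp only [PowerSeries.coeff_mk, hA]
    rw [sum_antidiagonal_eq, Finset.sum_range_succ']
    simp only [if_true, mul_zero, add_zero,
      Nat.add_eq_zero_iff, one_ne_zero, and_false, if_false]
    rw [Finset.sum_congr rfl (g := fun _ => q ^ n)]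
    · simp
    · intro i hi
      have := Finset.mem_range.mp hi
      rw [← pow_add]
      congr 1
      omega
  have hne : PowerSeries.mk (coeffSum (1 : F[X] →* ℂ)) ≠ 0 := by
    intro h
    have := congrArg (PowerSeries.coeff 0) h
    rw [PowerSeries.coeff_mk, coeffSum_zero, map_zero] at this
    exact one_ne_zero this
  have h := (logDer_coeffSum (1 : F[X] →* ℂ)).unique hz hne
  have := congrArg (PowerSeries.coeff n) h
  rwa [PowerSeries.coeff_mk, PowerSeries.coeff_mk, if_neg hn] at this

/-- Gauss's formula `∑_{d ∣ n} d * N_d = qⁿ`, with `N_d` the number of monic irreducibles of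
degree `d`. -/
lemma sum_card_irreds (n : ℕ) (hn : n ≠ 0) :
    ∑ x ∈ n.divisorsAntidiagonal, (x.1 : ℝ) * (irreds F x.1).card
      = (Fintype.card F : ℝ) ^ n := by
  have h := primeSum_one (F := F) n hn
  simp only [primeSum, MonoidHom.one_apply, one_pow, Finset.sum_const, nsmul_eq_mul,
    mul_one] at h
  exact_mod_cast h

lemma mul_card_irreds_le (n : ℕ) (hn : n ≠ 0) :
    (n : ℝ) * (irreds F n).card ≤ (Fintype.card F : ℝ) ^ n := by
  rw [← sum_card_irreds n hn]
  exact Finset.single_le_sum (f := fun x : ℕ × ℕ => (x.1 : ℝ) * (irreds F x.1).card)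
    (fun x _ => by positivity) (a := (n, 1)) (by simp [hn])

lemma norm_primeSum_le {ψ : F[X] →* ℂ} (hψ : ∀ f, ‖ψ f‖ ≤ 1) (n : ℕ) :
    ‖primeSum ψ n‖ ≤ (Fintype.card F : ℝ) ^ n := by
  rcases eq_or_ne n 0 with rfl | hn
  · simp [primeSum]
  rw [← sum_card_irreds (F := F) n hn]
  refine (norm_sum_le _ _).trans (Finset.sum_le_sum fun x _ => ?_)
  rw [norm_mul, Complex.norm_natCast]
  refine mul_le_mul_of_nonneg_left ?_ x.1.cast_nonneg
  refine (norm_sum_le _ _).trans ?_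
  rw [← nsmul_one]
  refine Finset.sum_le_card_nsmul _ _ _ fun P _ => ?_
  rw [norm_pow]
  exact pow_le_one₀ (norm_nonneg _) (hψ P)

/-- The extreme value `-qⁿ` is not attained for all large `n`: it would force every term of the sum
to be `-1`, in particular `(w ψ(X))ⁿ = -1` for all large `n`, which fails on passing from `n` to
`2n`. -/
lemma frequently_re {ψ : F[X] →* ℂ} (hψ : ∀ f, ‖ψ f‖ ≤ 1) {w : ℂ} (hw : ‖w‖ = 1) :
    ∃ᶠ n in atTop, -(Fintype.card F : ℝ) ^ n < (w ^ n * primeSum ψ n).re := by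
  -- all terms have real part at least `-1`, and the term of `X ^ n` is kept
  have key : ∀ n ≠ 0, 1 + ((w * ψ X) ^ n).re ≤
      (Fintype.card F : ℝ) ^ n + (w ^ n * primeSum ψ n).re := by
    intro n hn
    have hterm : ∀ P : F[X], ∀ k : ℕ, 0 ≤ 1 + (w ^ n * ψ P ^ k).re := by
      intro P k
      have h1 := (abs_le.mp (Complex.abs_re_le_norm (w ^ n * ψ P ^ k))).1
      rw [norm_mul, norm_pow, norm_pow, hw, one_pow, one_mul] at h1
      have := pow_le_one₀ (n := k) (norm_nonneg _) (hψ P)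
      linarith
    have e : (Fintype.card F : ℝ) ^ n + (w ^ n * primeSum ψ n).re =
        ∑ x ∈ n.divisorsAntidiagonal, (x.1 : ℝ) * ∑ P ∈ irreds F x.1,
          (1 + (w ^ n * ψ P ^ x.2).re) := by
      rw [← sum_card_irreds (F := F) n hn, primeSum, Finset.mul_sum, Complex.re_sum,
        ← Finset.sum_add_distrib]
      refine Finset.sum_congr rfl fun x _ => ?_
      rw [mul_left_comm, ← Complex.ofReal_natCast x.1, Complex.re_ofReal_mul, Finset.mul_sum,
        Complex.re_sum, Finset.sum_add_distrib, mul_add]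
      simp
    rw [e]
    refine le_trans ?_ (Finset.single_le_sum (f := fun x : ℕ × ℕ => (x.1 : ℝ) *
      ∑ P ∈ irreds F x.1, (1 + (w ^ n * ψ P ^ x.2).re))
      (fun x _ => mul_nonneg x.1.cast_nonneg (Finset.sum_nonneg fun P _ => hterm P x.2))
      (a := (1, n)) (by simp [hn]))
    rw [Nat.cast_one, one_mul, mul_pow]
    exact Finset.single_le_sum (f := fun P => 1 + (w ^ n * ψ P ^ n).re)
      (fun P _ => hterm P n) (mem_irreds.mpr ⟨⟨monic_X, natDegree_X⟩, irreducible_X⟩)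
  rw [Filter.Frequently]
  intro hev
  obtain ⟨N, hN⟩ := eventually_atTop.mp hev
  have hz : ∀ n, N + 1 ≤ n → (w * ψ X) ^ n = -1 := by
    intro n hn
    have h1 := key n (by omega)
    have h2 := not_lt.mp (hN n (by omega))
    have h3 : ‖(w * ψ X) ^ n‖ ≤ 1 := by
      rw [norm_pow, norm_mul, hw, one_mul]
      exact pow_le_one₀ (norm_nonneg _) (hψ X)
    have h4 := (abs_le.mp (Complex.abs_re_le_norm ((w * ψ X) ^ n))).1
    have h5 : ((w * ψ X) ^ n).re = -1 := by linarith
    have h6 : ‖(w * ψ X) ^ n‖ ^ 2 ≤ 1 := pow_le_one₀ (norm_nonneg _) h3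
    rw [Complex.sq_norm, Complex.normSq_apply, h5] at h6
    have h7 : ((w * ψ X) ^ n).im = 0 := by nlinarith
    exact Complex.ext (by simpa using h5) (by simpa using h7)
  have h1 := hz (N + 1) le_rfl
  have h2 := hz ((N + 1) * 2) (by omega)
  rw [pow_mul, h1] at h2
  norm_num at h2

/-- If the L-series is a polynomial, then `primeSum ψ n = o(qⁿ)`. -/
theorem tendsto_primeSum {ψ : F[X] →* ℂ} (hψ : ∀ f, ‖ψ f‖ ≤ 1) {m : ℕ}
    (hm : ∀ n, m ≤ n → coeffSum ψ n = 0) :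
    Tendsto (fun n => primeSum ψ n / (Fintype.card F : ℂ) ^ n) atTop (𝓝 0) := by
  set P : ℂ[X] := ∑ i ∈ Finset.range m, monomial i (coeffSum ψ i) with hP
  have hPc : ∀ n, P.coeff n = coeffSum ψ n := by
    intro n
    rw [hP, finsetSum_coeff]
    simp only [coeff_monomial]
    rw [Finset.sum_ite_eq']
    split_ifs with h
    · rfl
    · exact (hm n (by simpa using h)).symm
  have hPS : (P : PowerSeries ℂ) = PowerSeries.mk (coeffSum ψ) := by
    ext n
    rw [Polynomial.coeff_coe, PowerSeries.coeff_mk, hPc]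
  have h := logDer_coeffSum ψ
  rw [← hPS] at h
  have := tendsto_coeff_div (q := (Fintype.card F : ℝ)) (by rw [hPc, coeffSum_zero])
    (by exact_mod_cast Fintype.card_pos) h
    (by simpa using norm_primeSum_le hψ) (by simpa using primeSum_zero ψ)
    (by simpa using fun w hw => frequently_re hψ hw)
  simpa using this

end Arithmetic
end ArtinDirichlet

/-! ### Residue characters and equidistribution -/

namespace ArtinDirichlet
open Polynomial Filter Topology

section Characters
variable {F : Type*} [Field F] {a : F[X]}

/-- A character of `F[X] / (a)`, extended by zero to non-units, pulled back to `F[X]`. -/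
noncomputable def residueHom (χ : MulChar (AdjoinRoot a) ℂ) : F[X] →* ℂ :=
  χ.toMonoidHom.comp (AdjoinRoot.mk a : F[X] →* AdjoinRoot a)

lemma residueHom_apply (χ : MulChar (AdjoinRoot a) ℂ) (f : F[X]) :
    residueHom χ f = χ (AdjoinRoot.mk a f) := rfl

lemma natDegree_le_of_not_isUnit (ha : a ≠ 0) {P : F[X]} (hP : Irreducible P)
    (h : ¬ IsUnit (AdjoinRoot.mk a P)) : P.natDegree ≤ a.natDegree := by
  refine natDegree_le_of_dvd ?_ ha
  by_contra hdvd
  obtain ⟨u, v, huv⟩ := (hP.coprime_iff_not_dvd).mpr hdvd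
  refine h (IsUnit.of_mul_eq_one (AdjoinRoot.mk a u) ?_)
  have := congrArg (AdjoinRoot.mk a) huv
  rwa [map_add, map_mul, map_mul, AdjoinRoot.mk_self, mul_zero, add_zero, map_one,
    mul_comm] at this

variable [Fintype F]

lemma finite_adjoinRoot (ha : a ≠ 0) : Finite (AdjoinRoot a) := by
  have : Module.Finite F (AdjoinRoot a) := (AdjoinRoot.powerBasis ha).finite
  exact Module.finite_of_finite F

lemma norm_residueHom_le (ha : a ≠ 0) (χ : MulChar (AdjoinRoot a) ℂ) (f : F[X]) :
    ‖residueHom χ f‖ ≤ 1 := by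
  have := finite_adjoinRoot ha
  have := Fintype.ofFinite (AdjoinRoot a)ˣ
  rw [residueHom_apply]
  by_cases h : IsUnit (AdjoinRoot.mk a f)
  · obtain ⟨u, hu⟩ := h
    rw [← hu]
    refine (Complex.norm_eq_one_of_pow_eq_one (n := Fintype.card (AdjoinRoot a)ˣ) ?_
      Fintype.card_ne_zero).le
    rw [← map_pow, ← Units.val_pow_eq_pow_val, pow_card_eq_one, Units.val_one, map_one]
  · rw [MulChar.map_nonunit _ h, norm_zero]
    exact zero_le_one

/-- The L-series of a nontrivial character is a polynomial of degree less than `deg a`: for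
`n ≥ deg a` the monic polynomials of degree `n` are equidistributed among the residues mod `a`. -/
lemma coeffSum_eq_zero (ha : a ≠ 0) {χ : MulChar (AdjoinRoot a) ℂ} (hχ : χ ≠ 1)
    {n : ℕ} (hn : a.natDegree ≤ n) : coeffSum (residueHom χ) n = 0 := by
  classical
  have := finite_adjoinRoot ha
  have := Fintype.ofFinite (AdjoinRoot a)
  have : Finite (degreeLT F n) := Finite.of_equiv _ (degreeLTEquiv F n).toEquiv.symm
  have := Fintype.ofFinite (degreeLT F n)
  let φ : degreeLT F n →+ AdjoinRoot a :=
    (AdjoinRoot.mk a : F[X] →+ AdjoinRoot a).comp (degreeLT F n).subtype.toAddMonoidHom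
  have hφ : ∀ h : degreeLT F n, φ h = AdjoinRoot.mk a (h : F[X]) := fun _ => rfl
  have hsurj : Function.Surjective φ := by
    intro y
    obtain ⟨f, rfl⟩ := AdjoinRoot.mk_surjective y
    refine ⟨⟨f % a, mem_degreeLT.mpr ?_⟩, ?_⟩
    · exact (EuclideanDomain.mod_lt f ha).trans_le
        (degree_le_natDegree.trans (by exact_mod_cast hn))
    · rw [hφ, AdjoinRoot.mk_eq_mk]
      refine ⟨-(f / a), ?_⟩
      linear_combination EuclideanDomain.mod_add_div f a
  rw [coeffSum, sum_monics n]
  have h1 : ∀ h : degreeLT F n, residueHom χ (X ^ n + (h : F[X]))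
      = χ (AdjoinRoot.mk a (X ^ n) + φ h) := by
    intro h
    rw [residueHom_apply, map_add, hφ]
  simp_rw [h1]
  -- all fibres of `φ` have the same size, so the sum is a multiple of the full sum of `χ`
  rw [← Finset.sum_fiberwise Finset.univ φ]
  have h2 : ∀ y : AdjoinRoot a, ∑ h with φ h = y, χ (AdjoinRoot.mk a (X ^ n) + φ h)
      = (Finset.univ.filter fun h => φ h = 0).card • χ (AdjoinRoot.mk a (X ^ n) + y) := by
    intro y
    rw [AddMonoidHom.card_fiber_eq_of_mem_range φ (hsurj 0) (hsurj y), ← Finset.sum_const]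
    refine Finset.sum_congr rfl fun h hh => ?_
    rw [(Finset.mem_filter.mp hh).2]
  simp_rw [h2]
  have h3 : ∑ y : AdjoinRoot a, χ (AdjoinRoot.mk a (X ^ n) + y) = ∑ y : AdjoinRoot a, χ y :=
    Equiv.sum_comp (Equiv.addLeft (AdjoinRoot.mk a (X ^ n))) (fun y => χ y)
  rw [← Finset.smul_sum, h3, MulChar.sum_eq_zero_of_ne_one hχ, smul_zero]

/-- The difference counts prime powers `P ^ k` with `P ∣ a`, so only degrees at most `deg a` matter. -/
lemma norm_sub_primeSum_one_le (ha : a ≠ 0) (n : ℕ) (hn : n ≠ 0) :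
    ‖(Fintype.card F : ℂ) ^ n - primeSum (residueHom (1 : MulChar (AdjoinRoot a) ℂ)) n‖
      ≤ ∑ d ∈ Finset.range (a.natDegree + 1), (d : ℝ) * (irreds F d).card := by
  rw [← primeSum_one n hn, primeSum, primeSum, ← Finset.sum_sub_distrib]
  have h1 : ∀ x ∈ n.divisorsAntidiagonal,
      ‖(x.1 : ℂ) * ∑ P ∈ irreds F x.1, (1 : F[X] →* ℂ) P ^ x.2 -
        (x.1 : ℂ) * ∑ P ∈ irreds F x.1,
          residueHom (1 : MulChar (AdjoinRoot a) ℂ) P ^ x.2‖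
      ≤ if x.1 ≤ a.natDegree then (x.1 : ℝ) * (irreds F x.1).card else 0 := by
    intro x hx
    have hx2 : x.2 ≠ 0 := by
      rintro e
      have := Nat.mem_divisorsAntidiagonal.mp hx
      rw [e, mul_zero] at this
      exact this.2 this.1.symm
    rw [← mul_sub, ← Finset.sum_sub_distrib, norm_mul, Complex.norm_natCast]
    split_ifs with h
    · refine mul_le_mul_of_nonneg_left ?_ x.1.cast_nonneg
      refine (norm_sum_le _ _).trans ?_
      rw [← nsmul_one]
      refine Finset.sum_le_card_nsmul _ _ _ fun P _ => ?_
      rw [MonoidHom.one_apply, one_pow, residueHom_apply]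
      by_cases hu : IsUnit (AdjoinRoot.mk a P)
      · rw [MulChar.one_apply hu]; simp
      · rw [MulChar.map_nonunit _ hu]; simp [hx2]
    · rw [Finset.sum_eq_zero, norm_zero, mul_zero]
      intro P hP
      have hu : IsUnit (AdjoinRoot.mk a P) := by
        by_contra hu
        obtain ⟨⟨-, h2⟩, h3⟩ := mem_irreds.mp hP
        exact h (h2 ▸ natDegree_le_of_not_isUnit ha h3 hu)
      rw [residueHom_apply, MulChar.one_apply hu, MonoidHom.one_apply, sub_self]
  refine (norm_sum_le _ _).trans ((Finset.sum_le_sum h1).trans ?_)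
  rw [Nat.sum_divisorsAntidiagonal
    (f := fun d _ => if d ≤ a.natDegree then (d : ℝ) * (irreds F d).card else 0),
    ← Finset.sum_filter]
  refine Finset.sum_le_sum_of_subset_of_nonneg ?_ fun d _ _ => by positivity
  intro d hd
  exact Finset.mem_range.mpr (Nat.lt_succ_of_le (Finset.mem_filter.mp hd).2)

lemma tendsto_primeSum_one (ha : a ≠ 0) :
    Tendsto (fun n => primeSum (residueHom (1 : MulChar (AdjoinRoot a) ℂ)) n /
      (Fintype.card F : ℂ) ^ n) atTop (𝓝 1) := by
  set q : ℂ := (Fintype.card F : ℂ) with hq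
  set B : ℝ := ∑ d ∈ Finset.range (a.natDegree + 1), (d : ℝ) * (irreds F d).card
  have hq1 : (1 : ℝ) < Fintype.card F := by exact_mod_cast Fintype.one_lt_card
  have hq0 : q ≠ 0 := by rw [hq]; exact_mod_cast Fintype.card_ne_zero
  have hB : Tendsto (fun n : ℕ => B * ((Fintype.card F : ℝ)⁻¹) ^ n) atTop (𝓝 0) := by
    simpa using (tendsto_pow_atTop_nhds_zero_of_lt_one (by positivity)
      (inv_lt_one_of_one_lt₀ hq1)).const_mul B
  have h0 : Tendsto (fun n => (q ^ n -
      primeSum (residueHom (1 : MulChar (AdjoinRoot a) ℂ)) n) / q ^ n) atTop (𝓝 0) := by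
    refine squeeze_zero_norm' ?_ hB
    filter_upwards [eventually_ne_atTop 0] with n hn
    rw [norm_div, norm_pow, hq, Complex.norm_natCast, inv_pow, ← div_eq_mul_inv]
    exact div_le_div_of_nonneg_right (norm_sub_primeSum_one_le ha n hn) (by positivity)
  have h1 := h0.const_sub 1
  rw [sub_zero] at h1
  refine h1.congr fun n => ?_
  have := pow_ne_zero n hq0
  field_simp
  ring

lemma sum_mulChar {R : Type*} [CommRing R] [Finite R] [Fintype (MulChar R ℂ)]
    [DecidableEq R] (x : R) :
    ∑ χ : MulChar R ℂ, χ x = if x = 1 then (Fintype.card (MulChar R ℂ) : ℂ) else 0 := by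
  split_ifs with h
  · simp [h]
  · have : NeZero (Monoid.exponent Rˣ) := ⟨Monoid.exponent_ne_zero_of_finite⟩
    obtain ⟨χ, hχ⟩ := MulChar.exists_apply_ne_one_of_hasEnoughRootsOfUnity R ℂ h
    refine eq_zero_of_mul_eq_self_left hχ ?_
    simp only [Finset.mul_sum, ← MulChar.mul_apply]
    exact Fintype.sum_bijective _ (Group.mulLeft_bijective χ) _ _ fun χ' ↦ rfl

open Classical in
/-- The sum of `Λ(f)` over monic `f` of degree `n` with `f ≡ b (mod a)`; the pair `x` is
`(deg P, k)` for `f = P ^ k`. -/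
noncomputable def classSum (a b : F[X]) (n : ℕ) : ℝ :=
  ∑ x ∈ n.divisorsAntidiagonal, (x.1 : ℝ) * ∑ P ∈ irreds F x.1,
    if AdjoinRoot.mk a P ^ x.2 = AdjoinRoot.mk a b then 1 else 0

/-- The prime number theorem for the class of `b`; the constant `c` is the number of characters
mod `a`. -/
lemma tendsto_classSum (ha : a ≠ 0) {b : F[X]} (hab : IsCoprime a b) :
    ∃ c : ℝ, 0 < c ∧
      Tendsto (fun n => c * classSum a b n / (Fintype.card F : ℝ) ^ n) atTop (𝓝 1) := by
  classical
  have := finite_adjoinRoot ha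
  have := Fintype.ofFinite (MulChar (AdjoinRoot a) ℂ)
  have hb : IsUnit (AdjoinRoot.mk a b) := by
    obtain ⟨u, v, huv⟩ := hab
    refine IsUnit.of_mul_eq_one (AdjoinRoot.mk a v) ?_
    have := congrArg (AdjoinRoot.mk a) huv
    rwa [map_add, map_mul, map_mul, AdjoinRoot.mk_self, mul_zero, zero_add, map_one,
      mul_comm] at this
  obtain ⟨u, hu⟩ := hb
  set c : ℝ := (Fintype.card (MulChar (AdjoinRoot a) ℂ) : ℝ) with hc
  refine ⟨c, by rw [hc]; exact_mod_cast Fintype.card_pos, ?_⟩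
  have horth : ∀ n, ∑ χ : MulChar (AdjoinRoot a) ℂ,
      χ (↑u⁻¹ : AdjoinRoot a) * primeSum (residueHom χ) n = ((c * classSum a b n : ℝ) : ℂ) := by
    intro n
    simp only [primeSum, classSum, Finset.mul_sum, Complex.ofReal_sum]
    rw [Finset.sum_comm]
    refine Finset.sum_congr rfl fun x _ => ?_
    rw [Finset.sum_comm]
    refine Finset.sum_congr rfl fun P _ => ?_
    have h1 : ∀ χ : MulChar (AdjoinRoot a) ℂ,
        χ (↑u⁻¹ : AdjoinRoot a) * ((x.1 : ℂ) * residueHom χ P ^ x.2)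
          = (x.1 : ℂ) * χ (↑u⁻¹ * AdjoinRoot.mk a P ^ x.2) := by
      intro χ
      rw [map_mul, map_pow, residueHom_apply]
      ring
    simp_rw [h1]
    rw [← Finset.mul_sum, sum_mulChar, ← hu]
    have h2 : (↑u⁻¹ * AdjoinRoot.mk a P ^ x.2 = 1) ↔ AdjoinRoot.mk a P ^ x.2 = u := by
      rw [Units.inv_mul_eq_one, eq_comm]
    by_cases h3 : AdjoinRoot.mk a P ^ x.2 = u
    · rw [if_pos (h2.mpr h3), if_pos h3]
      push_cast [hc]
      ring
    · rw [if_neg (mt h2.mp h3), if_neg h3]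
      simp
  have hlim : Tendsto (fun n => ∑ χ : MulChar (AdjoinRoot a) ℂ,
      χ (↑u⁻¹ : AdjoinRoot a) * (primeSum (residueHom χ) n / (Fintype.card F : ℂ) ^ n)) atTop
      (𝓝 (∑ χ : MulChar (AdjoinRoot a) ℂ, if χ = 1 then 1 else 0)) := by
    refine tendsto_finsetSum _ fun χ _ => ?_
    split_ifs with h
    · subst h
      simpa [MulChar.one_apply_coe] using tendsto_primeSum_one ha
    · simpa using (tendsto_primeSum (norm_residueHom_le ha χ)
        fun n hn => coeffSum_eq_zero ha h hn).const_mul (χ (↑u⁻¹ : AdjoinRoot a))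
  rw [Finset.sum_ite_eq' Finset.univ, if_pos (Finset.mem_univ _)] at hlim
  have h2 := (Complex.continuous_re.tendsto _).comp hlim
  rw [Complex.one_re] at h2
  refine h2.congr fun n => ?_
  rw [Function.comp_apply]
  simp_rw [← mul_div_assoc]
  rw [← Finset.sum_div, horth, ← Complex.ofReal_natCast, ← Complex.ofReal_pow,
    ← Complex.ofReal_div, Complex.ofReal_re]

/-- Proper prime powers contribute `O(n q^{n/2})`. -/
lemma classSum_le {b : F[X]} {n : ℕ} (hn : n ≠ 0)
    (h : ∀ P ∈ irreds F n, AdjoinRoot.mk a P ≠ AdjoinRoot.mk a b) :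
    classSum a b n ≤ n * √(Fintype.card F : ℝ) ^ n := by
  classical
  have hq1 : (1 : ℝ) ≤ Fintype.card F := by exact_mod_cast Fintype.card_pos
  have hs1 : 1 ≤ √(Fintype.card F : ℝ) := Real.one_le_sqrt.mpr hq1
  have hterm : ∀ x ∈ n.divisorsAntidiagonal, (x.1 : ℝ) * ∑ P ∈ irreds F x.1,
      (if AdjoinRoot.mk a P ^ x.2 = AdjoinRoot.mk a b then 1 else 0 : ℝ)
      ≤ √(Fintype.card F : ℝ) ^ n := by
    intro x hx
    obtain ⟨hx1, -⟩ := Nat.mem_divisorsAntidiagonal.mp hx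
    have hx2 : x.2 ≠ 0 := fun e => hn (by rw [← hx1, e, mul_zero])
    have hx3 : x.1 ≠ 0 := fun e => hn (by rw [← hx1, e, zero_mul])
    by_cases h1 : x.2 = 1
    · have hxn : x.1 = n := by rw [← hx1, h1, mul_one]
      rw [Finset.sum_eq_zero, mul_zero]
      · positivity
      · intro P hP
        rw [h1, pow_one, if_neg (h P (hxn ▸ hP))]
    · -- a proper power: `2 * x.1 ≤ n`
      calc (x.1 : ℝ) * ∑ P ∈ irreds F x.1,
            (if AdjoinRoot.mk a P ^ x.2 = AdjoinRoot.mk a b then 1 else 0 : ℝ)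
          ≤ (x.1 : ℝ) * (irreds F x.1).card := by
            refine mul_le_mul_of_nonneg_left ?_ x.1.cast_nonneg
            rw [← nsmul_one]
            refine Finset.sum_le_card_nsmul _ _ _ fun P _ => ?_
            split_ifs <;> norm_num
        _ ≤ (Fintype.card F : ℝ) ^ x.1 := mul_card_irreds_le x.1 hx3
        _ = √(Fintype.card F : ℝ) ^ (2 * x.1) := by
            rw [pow_mul, Real.sq_sqrt (by positivity)]
        _ ≤ √(Fintype.card F : ℝ) ^ n := by
            refine pow_le_pow_right₀ hs1 ?_
            rw [← hx1, mul_comm 2]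
            exact Nat.mul_le_mul_left _ (by omega)
  rw [classSum]
  refine (Finset.sum_le_card_nsmul _ _ _ hterm).trans ?_
  rw [nsmul_eq_mul]
  refine mul_le_mul_of_nonneg_right ?_ (by positivity)
  rw [← Nat.map_div_right_divisors, Finset.card_map]
  exact_mod_cast Nat.card_divisors_le_self n

end Characters
end ArtinDirichlet

open ArtinDirichlet Filter Topology in
/-- (Artin) Let `F` be a finite field and let `a, b ∈ F[X]` be relatively prime
polynomials with `a ≠ 0`.  Then every sufficiently large natural number `d` is the
degree of some irreducible polynomial `p ∈ F[X]` with `p ≡ b (mod a)`. -/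
theorem artin_dirichlet_for_polynomials_arbitrary_large_degree
    (F : Type*) [Field F] [Fintype F] (a b : Polynomial F)
    (hab : IsCoprime a b) (ha : a ≠ 0) :
    ∃ D : ℕ, ∀ d : ℕ, D ≤ d →
      ∃ p : Polynomial F, Irreducible p ∧ p.natDegree = d ∧ a ∣ (p - b) := by
  obtain ⟨c, hc, hlim⟩ := tendsto_classSum ha hab
  have hq1 : (1 : ℝ) < Fintype.card F := by exact_mod_cast Fintype.one_lt_card
  have hs1 : 1 < √(Fintype.card F : ℝ) := Real.lt_sqrt_of_sq_lt (by simpa using hq1)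
  have hsmall : Tendsto (fun n : ℕ => c * (n * (√(Fintype.card F : ℝ))⁻¹ ^ n)) atTop (𝓝 0) := by
    simpa using (tendsto_self_mul_const_pow_of_lt_one (by positivity)
      (inv_lt_one_of_one_lt₀ hs1)).const_mul c
  obtain ⟨D, hD⟩ := eventually_atTop.mp
    (((hlim.eventually (lt_mem_nhds (show (1 / 2 : ℝ) < 1 by norm_num))).and
      (hsmall.eventually (gt_mem_nhds (show (0 : ℝ) < 1 / 2 by norm_num)))).and
      (eventually_ne_atTop 0))
  refine ⟨D, fun d hd => ?_⟩
  obtain ⟨⟨h1, h2⟩, h3⟩ := hD d hd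
  by_contra hno
  have hle := classSum_le (a := a) (b := b) h3 fun P hP he =>
    hno ⟨P, (mem_irreds.mp hP).2, (mem_irreds.mp hP).1.2, AdjoinRoot.mk_eq_mk.mp he⟩
  have hs0 : 0 < √(Fintype.card F : ℝ) := zero_lt_one.trans hs1
  have h4 : c * classSum a b d / (Fintype.card F : ℝ) ^ d
      ≤ c * (d * (√(Fintype.card F : ℝ))⁻¹ ^ d) := by
    have e : (Fintype.card F : ℝ) ^ d
        = √(Fintype.card F : ℝ) ^ d * √(Fintype.card F : ℝ) ^ d := by
      rw [← mul_pow, Real.mul_self_sqrt (by positivity)]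
    rw [div_le_iff₀ (by positivity), e, inv_pow]
    have h5 : c * (d * (√(Fintype.card F : ℝ) ^ d)⁻¹) *
        (√(Fintype.card F : ℝ) ^ d * √(Fintype.card F : ℝ) ^ d)
        = c * (d * √(Fintype.card F : ℝ) ^ d) := by
      field_simp
    rw [h5]
    exact mul_le_mul_of_nonneg_left hle hc.le
  linarith
end

section
/- (Swindle Lemma) Let A be a principal ideal domain and let M = [[a, b], [s·c, d]] be a matrix in SL_2(A) with a ≡ d (mod s). Then for each sign ε ∈ {1, −1}, the 3×3 matrix diag-block(M, 1) = [[a, b, 0], [s·c, d, 0], [0, 0, 1]] can be transformed into the matrix [[ε·a, −s·b, 0], [c, −ε·d, 0], [0, 0, −1]] by at most 11 elementary row and column operations; equivalently, there exist lists L and R of elementary matrices in SL_3(A) with total length at most 11 such that (product of L) · diag-block(M,1) · (product of R) = [[ε·a, −s·b, 0], [c, −ε·d, 0], [0, 0, −1]]. -/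
/-!
Since `a ≡ d` modulo `s` and `a * d ≡ 1` modulo `s`, one has `s ∣ (d - 1) * (d + 1)`; a principal
ideal domain being a UFD, `s = s₁ * s₂` with `s₁ ∣ d - 1` and `s₂ ∣ d + 1`.

If `d = 1 + s₁ * v`, six elementary operations take the block `[[a, b], [s₁ * c, d]]` in
coordinates `1, 2`, framed by `1`, to the block `[[a, -(s₁ * b)], [-c, d]]` in coordinates `1, 3`,
framed by `1` (`swindle_pos`). If `d = -1 + s₂ * w`, six analogous operations, with coordinates
`2` and `3` exchanged, bring the block back to coordinates `1, 2`, move `s₂` across the diagonal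
and introduce the signs (`swindle_neg`). The last row operation of the first half and
the first of the second half lie in the same root subgroup (both add a multiple of row `2`
to row `3`), so they merge, which leaves `11` operations and gives the case `ε = 1`.

The reflection `X ↦ P * Xᵀ * P` in the antidiagonal of the upper left block, where `P` swaps
coordinates `1` and `2`, exchanges `a` with `d` and `ε` with `-ε` and carries elementary matrices
to elementary matrices. Reflecting both halves (`swindle_pos'`, `swindle_neg'`), for which `a` plays the
role of `d`, gives the case `ε = -1`.
-/

/-- An elementary matrix (transvection) in `SL_n(R)`: a matrix that differs from the
identity matrix in at most one off-diagonal entry. -/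
def IsElementary {n : ℕ} {R : Type*} [CommRing R]
    (E : Matrix.SpecialLinearGroup (Fin n) R) : Prop :=
  ∃ (i j : Fin n) (c : R), i ≠ j ∧
    (E : Matrix (Fin n) (Fin n) R) = Matrix.transvection i j c

open Matrix

/-- The transvection `1 + c * e_ij` as an element of `SL_3`. -/
def elem {A : Type*} [CommRing A] (i j : Fin 3) (h : i ≠ j) (c : A) :
    Matrix.SpecialLinearGroup (Fin 3) A :=
  ⟨Matrix.transvection i j c, Matrix.det_transvection_of_ne i j h c⟩

theorem coe_elem {A : Type*} [CommRing A] (i j : Fin 3) (h : i ≠ j) (c : A) :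
    (elem i j h c : Matrix (Fin 3) (Fin 3) A) = Matrix.transvection i j c :=
  rfl

theorem coe_prod_cons {A : Type*} [CommRing A] (E : Matrix.SpecialLinearGroup (Fin 3) A)
    (L : List (Matrix.SpecialLinearGroup (Fin 3) A)) :
    ((E :: L).prod : Matrix (Fin 3) (Fin 3) A) = (E : Matrix (Fin 3) (Fin 3) A) * L.prod := by
  rw [List.prod_cons]; rfl

theorem coe_prod_nil {A : Type*} [CommRing A] :
    (([] : List (Matrix.SpecialLinearGroup (Fin 3) A)).prod : Matrix (Fin 3) (Fin 3) A) = 1 :=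
  rfl

theorem isElementary_elem {A : Type*} [CommRing A] (i j : Fin 3) (h : i ≠ j) (c : A) :
    IsElementary (elem i j h c) :=
  ⟨i, j, c, h, rfl⟩

section explicit

variable {A : Type*} [CommRing A]

theorem t01 (c : A) : transvection (0 : Fin 3) 1 c = !![1, c, 0; 0, 1, 0; 0, 0, 1] := by
  ext i j; fin_cases i <;> fin_cases j <;> simp [transvection, single, one_apply]
theorem t02 (c : A) : transvection (0 : Fin 3) 2 c = !![1, 0, c; 0, 1, 0; 0, 0, 1] := by
  ext i j; fin_cases i <;> fin_cases j <;> simp [transvection, single, one_apply]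
theorem t10 (c : A) : transvection (1 : Fin 3) 0 c = !![1, 0, 0; c, 1, 0; 0, 0, 1] := by
  ext i j; fin_cases i <;> fin_cases j <;> simp [transvection, single, one_apply]
theorem t12 (c : A) : transvection (1 : Fin 3) 2 c = !![1, 0, 0; 0, 1, c; 0, 0, 1] := by
  ext i j; fin_cases i <;> fin_cases j <;> simp [transvection, single, one_apply]
theorem t20 (c : A) : transvection (2 : Fin 3) 0 c = !![1, 0, 0; 0, 1, 0; c, 0, 1] := by
  ext i j; fin_cases i <;> fin_cases j <;> simp [transvection, single, one_apply]
theorem t21 (c : A) : transvection (2 : Fin 3) 1 c = !![1, 0, 0; 0, 1, 0; 0, c, 1] := by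
  ext i j; fin_cases i <;> fin_cases j <;> simp [transvection, single, one_apply]

/-- Moving a factor `s ∣ d - 1` across the diagonal, the block passing from coordinates `1, 2`
to coordinates `1, 3`. -/
theorem swindle_pos (a b c d s v : A) (hd : d = 1 + s * v) :
    transvection (2 : Fin 3) 1 v * transvection 0 1 (-b) * transvection 1 2 s *
      !![a, b, 0; s * c, d, 0; 0, 0, 1] *
      (transvection 2 0 (-c) * transvection 2 1 (-v) * transvection 1 2 (-s)) =
      !![a, 0, -(s * b); 0, 1, 0; -c, 0, d] := by
  subst hd
  simp only [t01, t12, t20, t21]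
  ext i j; fin_cases i <;> fin_cases j <;> simp [Matrix.mul_apply, Fin.sum_univ_three] <;> ring

/-- Moving a factor `s ∣ d + 1` across the diagonal, the block passing from coordinates `1, 3`
to coordinates `1, 2`; the frame changes from `1` to `-1`. -/
theorem swindle_neg (a b c d s w : A) (hd : d = -1 + s * w) :
    transvection (1 : Fin 3) 2 (-w) * transvection 0 2 b * transvection 2 1 s *
      !![a, 0, b; 0, 1, 0; s * c, 0, d] *
      (transvection 1 0 (-c) * transvection 1 2 (-w) * transvection 2 1 s) =
      !![a, s * b, 0; -c, -d, 0; 0, 0, -1] := by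
  subst hd
  simp only [t02, t12, t10, t21]
  ext i j; fin_cases i <;> fin_cases j <;> simp [Matrix.mul_apply, Fin.sum_univ_three] <;> ring

/-- The reflection of `swindle_pos`: the block passes from coordinates `1, 2` to `2, 3`. -/
theorem swindle_pos' (a b c d s v : A) (ha : a = 1 + s * v) :
    transvection (2 : Fin 3) 0 (-s) * transvection 0 2 (-v) * transvection 1 2 (-c) *
      !![a, b, 0; s * c, d, 0; 0, 0, 1] *
      (transvection 2 0 s * transvection 0 1 (-b) * transvection 0 2 v) =
      !![1, 0, 0; 0, d, -c; 0, -(s * b), a] := by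
  subst ha
  simp only [t01, t12, t20, t02]
  ext i j; fin_cases i <;> fin_cases j <;> simp [Matrix.mul_apply, Fin.sum_univ_three] <;> ring

/-- The reflection of `swindle_neg`: the block passes from coordinates `2, 3` to `1, 2`. -/
theorem swindle_neg' (a b c d s w : A) (ha : a = -1 + s * w) :
    transvection (0 : Fin 3) 2 s * transvection 2 0 (-w) * transvection 1 0 (-c) *
      !![1, 0, 0; 0, d, s * c; 0, b, a] *
      (transvection 0 2 s * transvection 2 1 b * transvection 2 0 (-w)) =
      !![-a, s * b, 0; -c, d, 0; 0, 0, -1] := by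
  subst ha
  simp only [t02, t20, t10, t21]
  ext i j; fin_cases i <;> fin_cases j <;> simp [Matrix.mul_apply, Fin.sum_univ_three] <;> ring

end explicit

/-- In a principal ideal domain, a divisor of `x ^ 2 - 1` splits into a divisor of `x - 1` and
a divisor of `x + 1`. -/
theorem exists_split {A : Type*} [CommRing A] [IsDomain A] [IsPrincipalIdealRing A]
    (x s : A) (h : s ∣ (x - 1) * (x + 1)) :
    ∃ s₁ s₂ v w : A, s = s₁ * s₂ ∧ x = 1 + s₁ * v ∧ x = -1 + s₂ * w := by
  obtain ⟨s₁, s₂, ⟨v, hv⟩, ⟨w, hw⟩, rfl⟩ := exists_dvd_and_dvd_of_dvd_mul h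
  exact ⟨s₁, s₂, v, w, rfl, by rw [← hv]; ring, by rw [← hw]; ring⟩

/-- (Swindle Lemma) Let `A` be a principal ideal domain and let
`[[a, b], [s·c, d]] ∈ SL_2(A)` with `a ≡ d (mod s)`.  Then for each sign `ε ∈ {1, -1}`,
the framed matrix `[[a, b, 0], [s·c, d, 0], [0, 0, 1]]` can be transformed into
`[[ε·a, -s·b, 0], [c, -ε·d, 0], [0, 0, -1]]` by at most `11` elementary row and column
operations. -/
theorem swindle_lemma
    (A : Type*) [CommRing A] [IsDomain A] [IsPrincipalIdealRing A]
    (a b c d s : A) (hdet : a * d - b * (s * c) = 1) (hcong : s ∣ a - d)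
    (ε : A) (hε : ε = 1 ∨ ε = -1) :
    ∃ L R : List (Matrix.SpecialLinearGroup (Fin 3) A),
      L.length + R.length ≤ 11 ∧
      (∀ E ∈ L, IsElementary E) ∧ (∀ E ∈ R, IsElementary E) ∧
      (L.prod : Matrix (Fin 3) (Fin 3) A) * !![a, b, 0; s * c, d, 0; 0, 0, 1] *
        (R.prod : Matrix (Fin 3) (Fin 3) A) =
        !![ε * a, -(s * b), 0; c, -(ε * d), 0; 0, 0, -1] := by
  obtain ⟨t, ht⟩ := hcong
  rcases hε with rfl | rfl
  · obtain ⟨s₁, s₂, v, w, rfl, hv, hw⟩ := exists_split d s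
      ⟨b * c - d * t, by linear_combination hdet - d * ht⟩
    refine ⟨[elem 1 2 (by decide) (-w), elem 0 2 (by decide) (-(s₁ * b)),
        elem 2 1 (by decide) (s₂ + v), elem 0 1 (by decide) (-b), elem 1 2 (by decide) s₁],
      [elem 2 0 (by decide) (-(s₂ * c)), elem 2 1 (by decide) (-v), elem 1 2 (by decide) (-s₁),
        elem 1 0 (by decide) (- -c), elem 1 2 (by decide) (-w), elem 2 1 (by decide) s₂],
      by simp, by simp [isElementary_elem], by simp [isElementary_elem], ?_⟩
    have h₁ := swindle_pos a b (s₂ * c) d s₁ v hv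
    have h₂ := swindle_neg a (-(s₁ * b)) (-c) d s₂ w hw
    rw [mul_neg s₂ c, ← h₁] at h₂
    -- the two middle row operations merge into one
    have hm : transvection (2 : Fin 3) 1 (s₂ + v) = transvection 2 1 s₂ * transvection 2 1 v :=
      (transvection_mul_transvection_same _ _ (by decide) _ _).symm
    simp only [coe_prod_cons, coe_prod_nil, coe_elem, mul_one]
    rw [hm]
    simp only [← mul_assoc] at h₂ ⊢
    rw [h₂]
    ext i j; fin_cases i <;> fin_cases j <;> simp <;> ring
  · obtain ⟨s₁, s₂, v, w, rfl, hv, hw⟩ := exists_split a s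
      ⟨b * c + a * t, by linear_combination hdet + a * ht⟩
    refine ⟨[elem 0 2 (by decide) s₂, elem 2 0 (by decide) (-w), elem 1 0 (by decide) (- -c),
        elem 2 0 (by decide) (-s₁), elem 0 2 (by decide) (-v), elem 1 2 (by decide) (-(s₂ * c))],
      [elem 2 0 (by decide) s₁, elem 0 1 (by decide) (-b), elem 0 2 (by decide) (v + s₂),
        elem 2 1 (by decide) (-(s₁ * b)), elem 2 0 (by decide) (-w)],
      by simp, by simp [isElementary_elem], by simp [isElementary_elem], ?_⟩
    have h₁ := swindle_pos' a b (s₂ * c) d s₁ v hv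
    have h₂ := swindle_neg' a (-(s₁ * b)) (-c) d s₂ w hw
    rw [mul_neg s₂ c, ← h₁] at h₂
    -- the two middle column operations merge into one
    have hm : transvection (0 : Fin 3) 2 (v + s₂) = transvection 0 2 v * transvection 0 2 s₂ :=
      (transvection_mul_transvection_same _ _ (by decide) _ _).symm
    simp only [coe_prod_cons, coe_prod_nil, coe_elem, mul_one]
    rw [hm]
    simp only [← mul_assoc] at h₂ ⊢
    rw [h₂]
    ext i j; fin_cases i <;> fin_cases j <;> simp <;> ring
end

section
/- Let A be a principal ideal domain and let u, v, w ∈ A with u ≠ 0 and such that u, v, w generate the unit ideal (i.e., there exist x, y, z ∈ A with x·u + y·v + z·w = 1). Then there exists t ∈ A such that u and v + t·w are relatively prime (IsCoprime u (v + t·w)). -/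
/-!
The proof is by induction on the prime factorization of `u`. If `u` is a unit, any `t` works.
If `u = p * a` with `p` prime, the triple `a, v, w` is still unimodular, so some `t` makes
`v + t * w` coprime to `a`. Either `p` does not divide `v + t * w`, and `t` works for `p * a` too,
or `p ∣ v + t * w`, and then `t + a` works: modulo `a` nothing changes, while modulo `p` the new
value is `a * w`, where `p ∤ a` by coprimality and `p ∤ w` by unimodularity.
-/

/-- (Stable range lemma) Let `A` be a principal ideal domain and let `u, v, w ∈ A` with
`u ≠ 0` and such that `u, v, w` generate the unit ideal.  Then there exists `t ∈ A` such
that `u` and `v + t·w` are relatively prime. -/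
theorem exists_coprime_of_unimodular_triple
    (A : Type*) [CommRing A] [IsDomain A] [IsPrincipalIdealRing A]
    (u v w : A) (hu : u ≠ 0) (h : ∃ x y z : A, x * u + y * v + z * w = 1) :
    ∃ t : A, IsCoprime u (v + t * w) := by
  induction u using UniqueFactorizationMonoid.induction_on_prime with
  | h₁ => exact absurd rfl hu
  | h₂ u hunit => exact ⟨0, isCoprime_one_left.of_isCoprime_of_dvd_left hunit.dvd⟩
  | h₃ a p ha hp ih =>
    obtain ⟨x, y, z, hxyz⟩ := h
    obtain ⟨t, ht⟩ := ih ha ⟨x * p, y, z, by rw [← hxyz]; ring⟩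
    by_cases hpt : p ∣ v + t * w
    · have hpa : ¬ p ∣ a := fun hd => hp.not_isUnit (ht.isUnit_of_dvd' hd hpt)
      have hpw : ¬ p ∣ w := fun hd => by
        have hpv : p ∣ v := (dvd_add_left (hd.mul_left t)).1 hpt
        apply hp.not_dvd_one
        rw [← hxyz]
        exact dvd_add (dvd_add ((dvd_mul_right p a).mul_left x) (hpv.mul_left y)) (hd.mul_left z)
      have heq : v + (t + a) * w = v + t * w + a * w := by ring
      refine ⟨t + a, ?_⟩
      rw [heq]
      refine IsCoprime.mul_left ?_ (ht.add_mul_left_right w)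
      rw [hp.coprime_iff_not_dvd, dvd_add_right hpt]
      exact hp.not_dvd_mul hpa hpw
    · exact ⟨t, (hp.coprime_iff_not_dvd.2 hpt).mul_left ht⟩
end

section
/- Let A be a principal ideal domain and let n ≥ 3. Every matrix M ∈ SL_n(A) can be transformed by at most (3n² − n)/2 − 5 elementary row and column operations into a framed SL_2 matrix, i.e., there exist lists L and R of elementary matrices in SL_n(A) with total length at most (3n² − n)/2 − 5 such that (product of L) · M · (product of R) is a block diagonal matrix whose upper-left 2×2 block lies in SL_2(A) and whose lower-right block is the identity matrix I_{n−2} (all other entries zero). -/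
section

open Matrix Finset

variable {A : Type*} [CommRing A] {n : ℕ}

/-- `N` is obtained from `M` by at most `k` elementary row and column operations. -/
def Reach (k : ℕ) (M N : SpecialLinearGroup (Fin n) A) : Prop :=
  ∃ L R : List (SpecialLinearGroup (Fin n) A),
    L.length + R.length ≤ k ∧ (∀ E ∈ L, IsElementary E) ∧ (∀ E ∈ R, IsElementary E) ∧
      N = L.prod * M * R.prod

/-- `M` agrees with the identity matrix outside the rows and columns indexed by `S`. -/
def Framed (S : Finset (Fin n)) (M : SpecialLinearGroup (Fin n) A) : Prop :=
  ∀ i j, ¬ (i ∈ S ∧ j ∈ S) → M.1 i j = if i = j then 1 else 0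

theorem Reach.refl (M : SpecialLinearGroup (Fin n) A) : Reach 0 M M :=
  ⟨[], [], by simp⟩

theorem Reach.mono {k l : ℕ} {M N : SpecialLinearGroup (Fin n) A} (h : Reach k M N)
    (hkl : k ≤ l) : Reach l M N := by
  obtain ⟨L, R, h1, h2⟩ := h
  exact ⟨L, R, h1.trans hkl, h2⟩

theorem Reach.trans {k l : ℕ} {M N P : SpecialLinearGroup (Fin n) A} (h : Reach k M N)
    (h' : Reach l N P) : Reach (k + l) M P := by
  obtain ⟨L, R, h1, h2, h3, rfl⟩ := h
  obtain ⟨L', R', h1', h2', h3', rfl⟩ := h'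
  refine ⟨L' ++ L, R ++ R', ?_, ?_, ?_, ?_⟩
  · simp only [List.length_append]; omega
  · intro E hE
    exact (List.mem_append.1 hE).elim (h2' E) (h2 E)
  · intro E hE
    exact (List.mem_append.1 hE).elim (h3 E) (h3' E)
  · simp [mul_assoc]

theorem reach_col (M : SpecialLinearGroup (Fin n) A) {k j : Fin n} (h : k ≠ j) (c : A) :
    ∃ N, Reach 1 M N ∧ (∀ i, N.1 i j = M.1 i j + M.1 i k * c) ∧
      ∀ i l, l ≠ j → N.1 i l = M.1 i l := by
  let E : SpecialLinearGroup (Fin n) A := ⟨transvection k j c, det_transvection_of_ne k j h c⟩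
  refine ⟨M * E, ⟨[], [E], by simp, by simp, ?_, by simp⟩, fun i => ?_, fun i l hl => ?_⟩
  · simpa using ⟨k, j, c, h, rfl⟩
  · change (M.1 * transvection k j c) i j = _
    rw [mul_transvection_apply_same, mul_comm]
  · change (M.1 * transvection k j c) i l = _
    rw [mul_transvection_apply_of_ne _ _ _ _ hl]

theorem reach_row (M : SpecialLinearGroup (Fin n) A) {k j : Fin n} (h : k ≠ j) (c : A) :
    ∃ N, Reach 1 M N ∧ (∀ l, N.1 j l = M.1 j l + c * M.1 k l) ∧
      ∀ i l, i ≠ j → N.1 i l = M.1 i l := by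
  let E : SpecialLinearGroup (Fin n) A :=
    ⟨transvection j k c, det_transvection_of_ne j k h.symm c⟩
  refine ⟨E * M, ⟨[E], [], by simp, ?_, by simp, by simp⟩, fun i => ?_, fun i l hl => ?_⟩
  · simpa using ⟨j, k, c, h.symm, rfl⟩
  · change (transvection j k c * M.1) j i = _
    rw [transvection_mul_apply_same]
  · change (transvection j k c * M.1) i l = _
    rw [transvection_mul_apply_of_ne _ _ _ _ hl]

/-- Adding multiples of the columns in `T` to the single column `j` costs `#T` operations. -/
theorem reach_gather (M : SpecialLinearGroup (Fin n) A) (j : Fin n) (t : Fin n → A)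
    (T : Finset (Fin n)) (hj : j ∉ T) :
    ∃ N, Reach #T M N ∧ (∀ i, N.1 i j = M.1 i j + ∑ k ∈ T, M.1 i k * t k) ∧
      ∀ i l, l ≠ j → N.1 i l = M.1 i l := by
  induction T using Finset.induction_on with
  | empty => exact ⟨M, Reach.refl M, by simp, by simp⟩
  | insert a T ha ih =>
    rw [mem_insert, not_or] at hj
    obtain ⟨N, h1, h2, h3⟩ := ih hj.2
    obtain ⟨P, h1', h2', h3'⟩ := reach_col N (Ne.symm hj.1) (t a)
    refine ⟨P, ?_, fun i => ?_, fun i l hl => ?_⟩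
    · rw [card_insert_of_notMem ha]; exact h1.trans h1'
    · rw [h2', h2, h3 i a (Ne.symm hj.1), sum_insert ha]; ring
    · rw [h3' i l hl, h3 i l hl]

/-- Adding multiples of the column `k` to all columns in `T` costs `#T` operations. -/
theorem reach_spread_col (M : SpecialLinearGroup (Fin n) A) (k : Fin n) (t : Fin n → A)
    (T : Finset (Fin n)) (hk : k ∉ T) :
    ∃ N, Reach #T M N ∧ ∀ i l, N.1 i l = M.1 i l + if l ∈ T then M.1 i k * t l else 0 := by
  induction T using Finset.induction_on with
  | empty => exact ⟨M, Reach.refl M, by simp⟩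
  | insert a T ha ih =>
    rw [mem_insert, not_or] at hk
    obtain ⟨N, h1, h2⟩ := ih hk.2
    obtain ⟨P, h1', h2', h3'⟩ := reach_col N hk.1 (t a)
    refine ⟨P, ?_, fun i l => ?_⟩
    · rw [card_insert_of_notMem ha]; exact h1.trans h1'
    · by_cases hl : l = a
      · subst hl
        rw [h2', h2, h2]; simp [ha, hk.2]
      · rw [h3' i l hl, h2]; simp [hl]

/-- Adding multiples of the row `k` to all rows in `T` costs `#T` operations. -/
theorem reach_spread_row (M : SpecialLinearGroup (Fin n) A) (k : Fin n) (t : Fin n → A)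
    (T : Finset (Fin n)) (hk : k ∉ T) :
    ∃ N, Reach #T M N ∧ ∀ i l, N.1 i l = M.1 i l + if i ∈ T then t i * M.1 k l else 0 := by
  induction T using Finset.induction_on with
  | empty => exact ⟨M, Reach.refl M, by simp⟩
  | insert a T ha ih =>
    rw [mem_insert, not_or] at hk
    obtain ⟨N, h1, h2⟩ := ih hk.2
    obtain ⟨P, h1', h2', h3'⟩ := reach_row N hk.1 (t a)
    refine ⟨P, ?_, fun i l => ?_⟩
    · rw [card_insert_of_notMem ha]; exact h1.trans h1'
    · by_cases hl : i = a
      · subst hl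
        rw [h2', h2, h2]; simp [ha, hk.2]
      · rw [h3' i l hl, h2]; simp [hl]

theorem Framed.gather {S T : Finset (Fin n)} {M N : SpecialLinearGroup (Fin n) A}
    (hM : Framed S M) {j : Fin n} {t : Fin n → A} (hj : j ∈ S) (hT : T ⊆ S)
    (h1 : ∀ i, N.1 i j = M.1 i j + ∑ k ∈ T, M.1 i k * t k)
    (h2 : ∀ i l, l ≠ j → N.1 i l = M.1 i l) : Framed S N := by
  intro i l hil
  by_cases hl : l = j
  · subst hl
    have hi : i ∉ S := fun h => hil ⟨h, hj⟩
    rw [h1, hM i l hil, sum_eq_zero, add_zero]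
    intro k hk
    rw [hM i k (fun h => hi h.1), if_neg, zero_mul]
    rintro rfl
    exact hi (hT hk)
  · rw [h2 i l hl, hM i l hil]

/-- The part of row `r` inside the frame is unimodular. -/
theorem Framed.exists_sum_eq_one {S : Finset (Fin n)} {M : SpecialLinearGroup (Fin n) A}
    (hM : Framed S M) {r : Fin n} (hr : r ∈ S) : ∃ w : Fin n → A, ∑ k ∈ S, M.1 r k * w k = 1 := by
  refine ⟨fun k => (M⁻¹).1 k r, ?_⟩
  have h : (M.1 * (M⁻¹).1) r r = 1 := by
    have h' : M.1 * (M⁻¹).1 = 1 := congrArg Subtype.val (mul_inv_cancel M)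
    rw [h', one_apply_eq]
  rw [mul_apply] at h
  refine (sum_subset (subset_univ S) fun k _ hk => ?_).trans h
  rw [hM r k (fun h => hk h.2), if_neg, zero_mul]
  rintro rfl
  exact hk hr

/-- Once the diagonal entry at `r` is `1`, the index `r` is removed from the frame by clearing
its row and then its column. -/
theorem reach_clear {S : Finset (Fin n)} {M : SpecialLinearGroup (Fin n) A} (hM : Framed S M)
    {r : Fin n} (h1 : M.1 r r = 1) :
    ∃ N, Reach (#(S.erase r) + #(S.erase r)) M N ∧ Framed (S.erase r) N := by
  obtain ⟨P, hP, hP'⟩ := reach_spread_col M r (fun l => - M.1 r l) (S.erase r) (by simp)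
  obtain ⟨N, hN, hN'⟩ := reach_spread_row P r (fun i => - P.1 i r) (S.erase r) (by simp)
  refine ⟨N, hP.trans hN, fun i j hij => ?_⟩
  have hPr : ∀ i, P.1 i r = M.1 i r := fun i => by rw [hP']; simp
  have hProw : ∀ l, P.1 r l = if r = l then 1 else 0 := by
    intro l
    by_cases hl : l = r
    · subst hl; simp [hPr, h1]
    · rw [hP', if_neg (Ne.symm hl)]
      by_cases hS : l ∈ S
      · simp [hl, hS, h1]
      · simp [hS, hM r l (fun h => hS h.2), Ne.symm hl]
  rw [hN', hProw]
  by_cases hi : i = r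
  · subst hi; simp [hProw]
  by_cases hj : j = r
  · subst hj
    by_cases hS : i ∈ S
    · simp [hi, hS]
    · simp [hi, hS, hPr, hM i j (fun h => hS h.1)]
  have hij' : ¬ (i ∈ S ∧ j ∈ S) := by simpa [hi, hj] using hij
  rw [if_neg (Ne.symm hj), hP', hM i j hij']
  by_cases hS : j ∈ S
  · have : i ∉ S := fun h => hij' ⟨h, hS⟩
    simp [hM i r (fun h => this h.1), hi]
  · simp [hS]

/-- The upper-left block has determinant `1`, by the block-diagonal determinant formula. -/
theorem Framed.exists_block (hn : 2 ≤ n) {N : SpecialLinearGroup (Fin n) A}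
    (hN : Framed (univ.filter fun i : Fin n => (i : ℕ) < 2) N) :
    ∃ B : SpecialLinearGroup (Fin 2) A, ∀ i j : Fin n, N.1 i j =
      if h : (i : ℕ) < 2 ∧ (j : ℕ) < 2 then B.1 ⟨i, h.1⟩ ⟨j, h.2⟩
      else if i = j then 1 else 0 := by
  obtain ⟨k, rfl⟩ := Nat.exists_eq_add_of_le hn
  have hblock : N.1.submatrix finSumFinEquiv finSumFinEquiv =
      fromBlocks (N.1.submatrix (Fin.castAdd k) (Fin.castAdd k)) 0 0 1 := by
    ext i j
    rcases i with i | i <;> rcases j with j | j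
    · rfl
    all_goals
      simp only [submatrix_apply, finSumFinEquiv_apply_left, finSumFinEquiv_apply_right]
      rw [hN _ _ (by
        simp only [mem_filter, mem_univ, true_and, Fin.val_castAdd, Fin.val_natAdd]; omega)]
      simp [Fin.ext_iff, one_apply]
    all_goals omega
  refine ⟨⟨N.1.submatrix (Fin.castAdd k) (Fin.castAdd k), ?_⟩, fun i j => ?_⟩
  · have h := N.2
    rw [← det_submatrix_equiv_self finSumFinEquiv, hblock, det_fromBlocks_zero₂₁, det_one,
      mul_one] at h
    exact h
  · split_ifs with h h'
    · rfl
    · rw [hN i j (by simpa using h), if_pos h']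
    · rw [hN i j (by simpa using h), if_neg h']

variable [IsDomain A] [IsPrincipalIdealRing A]

/-- A nonzero element has finitely many prime divisors, so it can be made coprime to a second
element by adding a multiple of a third, if the three generate the unit ideal. -/
theorem exists_isCoprime_add_mul {a b c x y : A} (ha : a ≠ 0) (h : a * x + b * y + c = 1) :
    ∃ s, IsCoprime a (b + s * c) := by
  classical
  obtain ⟨F, hF, hu⟩ := UniqueFactorizationMonoid.exists_prime_factors a ha
  refine ⟨(F.filter (fun p => ¬ p ∣ b)).prod, ?_⟩
  refine isCoprime_of_prime_dvd (fun h => ha h.1) fun p (hp : Prime p) hpa hpb => ?_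
  by_cases hb : p ∣ b
  · have hsc := (dvd_add_right hb).1 hpb
    rcases hp.dvd_or_dvd hsc with hs | hc
    · obtain ⟨q, hq, hpq⟩ := hp.exists_mem_multiset_dvd hs
      rw [Multiset.mem_filter] at hq
      exact hq.2 (((hp.associated_of_dvd (hF q hq.1) hpq).symm.dvd).trans hb)
    · refine hp.not_isUnit (isUnit_of_dvd_one ?_)
      rw [← h]
      exact dvd_add (dvd_add (hpa.mul_right x) (hb.mul_right y)) hc
  · have hpF : p ∣ F.prod := hpa.trans hu.symm.dvd
    obtain ⟨q, hq, hpq⟩ := hp.exists_mem_multiset_dvd hpF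
    have hqp := hp.associated_of_dvd (hF q hq) hpq
    refine hb ((dvd_add_left (Dvd.dvd.mul_right ?_ c)).1 hpb)
    refine hpq.trans (Multiset.dvd_prod (Multiset.mem_filter.2 ⟨hq, fun h => hb ?_⟩))
    exact hqp.dvd.trans h

/-- If `r` lies in a frame `S` of at least three indices, then `#S` column operations inside the
frame make the diagonal entry at `r` equal to `1`. -/
theorem reach_diag_one {S : Finset (Fin n)} {M : SpecialLinearGroup (Fin n) A} (hM : Framed S M)
    {r : Fin n} (hr : r ∈ S) (hS : 3 ≤ #S) :
    ∃ N, Reach #S M N ∧ Framed S N ∧ N.1 r r = 1 := by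
  obtain ⟨w, hw⟩ := hM.exists_sum_eq_one hr
  by_cases h0 : ∃ i ∈ S.erase r, M.1 r i ≠ 0
  · obtain ⟨i, hi, hi0⟩ := h0
    have hir : i ≠ r := ne_of_mem_erase hi
    have hiS : i ∈ S := mem_of_mem_erase hi
    have hc1 : #(S.erase r) = #S - 1 := card_erase_of_mem hr
    have hc2 : #((S.erase r).erase i) = #S - 2 := by rw [card_erase_of_mem hi, hc1]; omega
    obtain ⟨j, hj⟩ : ((S.erase r).erase i).Nonempty := card_pos.1 (by omega)
    have hji : j ≠ i := ne_of_mem_erase hj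
    have hjr : j ≠ r := ne_of_mem_erase (mem_of_mem_erase hj)
    have hjS : j ∈ S := mem_of_mem_erase (mem_of_mem_erase hj)
    have hji' : j ∈ S.erase i := mem_erase.2 ⟨hji, hjS⟩
    have hcT : #((S.erase i).erase j) = #S - 2 := by
      rw [card_erase_of_mem hji', card_erase_of_mem hiS]; omega
    rw [← add_sum_erase S _ hiS, ← add_sum_erase (S.erase i) _ hji', ← add_assoc] at hw
    obtain ⟨s, hs⟩ := exists_isCoprime_add_mul hi0 hw
    obtain ⟨P, hP, hP1, hP2⟩ := reach_gather M j (fun k => s * w k) ((S.erase i).erase j) (by simp)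
    have hPF : Framed S P :=
      hM.gather hjS ((erase_subset _ _).trans (erase_subset _ _)) hP1 hP2
    have hPj : P.1 r j = M.1 r j + s * ∑ k ∈ (S.erase i).erase j, M.1 r k * w k := by
      rw [hP1, mul_sum]
      congr 1
      exact sum_congr rfl fun k _ => by ring
    -- A Bézout relation between columns `i` and `j`, scaled by `1 - P r r`, corrects the diagonal.
    obtain ⟨u, v, huv⟩ := hs
    rw [← hPj, ← hP2 r i hji.symm] at huv
    obtain ⟨N, hN, hN1, hN2⟩ := reach_gather P r
      (fun k => (if k = i then u else v) * (1 - P.1 r r)) {i, j} (by simp [hir.symm, hjr.symm])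
    refine ⟨N, (hP.trans hN).mono ?_, hPF.gather hr ?_ hN1 hN2, ?_⟩
    · rw [hcT, card_pair hji.symm]; omega
    · intro k hk
      rcases mem_insert.1 hk with rfl | hk
      · exact hiS
      · rw [mem_singleton.1 hk]; exact hjS
    · rw [hN1, sum_pair hji.symm, if_pos rfl, if_neg hji]
      linear_combination (1 - P.1 r r) * huv
  · push Not at h0
    have hu : M.1 r r * w r = 1 := by
      rw [← add_sum_erase S _ hr, sum_eq_zero (fun k hk => by rw [h0 k hk, zero_mul]),
        add_zero] at hw
      exact hw
    -- The diagonal entry is a unit: put `1 - M r r` into some column `i`, then add that column.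
    obtain ⟨i, hi⟩ : (S.erase r).Nonempty := card_pos.1 (by rw [card_erase_of_mem hr]; omega)
    have hir : i ≠ r := ne_of_mem_erase hi
    have hiS : i ∈ S := mem_of_mem_erase hi
    obtain ⟨P, hP, hP1, hP2⟩ :=
      reach_gather M i (fun k => w k * (1 - M.1 r r)) {r} (by simpa using hir)
    have hPF : Framed S P := hM.gather hiS (by simpa using hr) hP1 hP2
    obtain ⟨N, hN, hN1, hN2⟩ := reach_gather P r (fun _ => 1) {i} (by simpa using hir.symm)
    refine ⟨N, (hP.trans hN).mono ?_, hPF.gather hr (by simpa using hiS) hN1 hN2, ?_⟩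
    · simp only [card_singleton]; omega
    · rw [hN1, sum_singleton, hP1, sum_singleton, hP2 r r hir.symm, h0 i hi]
      linear_combination (1 - M.1 r r) * hu

theorem reach_erase {S : Finset (Fin n)} {M : SpecialLinearGroup (Fin n) A} (hM : Framed S M)
    {r : Fin n} (hr : r ∈ S) (hS : 3 ≤ #S) :
    ∃ N, Reach (3 * #S - 2) M N ∧ Framed (S.erase r) N := by
  obtain ⟨P, hP, hPF, hP1⟩ := reach_diag_one hM hr hS
  obtain ⟨N, hN, hNF⟩ := reach_clear hPF hP1
  refine ⟨N, (hP.trans hN).mono ?_, hNF⟩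
  rw [card_erase_of_mem hr]; omega

/-- Iterated elimination of the last index, for frames that are initial segments of `Fin n`. -/
theorem reach_two (m : ℕ) (hm : 2 ≤ m) (hmn : m ≤ n) (M : SpecialLinearGroup (Fin n) A)
    (hM : Framed (univ.filter fun i : Fin n => (i : ℕ) < m) M) :
    ∃ N, Reach ((3 * m ^ 2 - m) / 2 - 5) M N ∧
      Framed (univ.filter fun i : Fin n => (i : ℕ) < 2) N := by
  induction m, hm using Nat.le_induction generalizing M with
  | base => exact ⟨M, Reach.refl M, hM⟩
  | succ m hm ih =>
    have hcard : #(univ.filter fun i : Fin n => (i : ℕ) < m + 1) = m + 1 := by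
      rw [Fin.card_filter_val_lt]; omega
    obtain ⟨P, hP, hPF⟩ := reach_erase hM (r := ⟨m, hmn⟩) (by simp) (by omega)
    have hset : (univ.filter fun i : Fin n => (i : ℕ) < m + 1).erase ⟨m, hmn⟩ =
        univ.filter fun i : Fin n => (i : ℕ) < m := by
      ext i
      simp only [mem_erase, mem_filter, mem_univ, true_and, ne_eq, Fin.ext_iff]
      omega
    rw [hset] at hPF
    obtain ⟨N, hN, hNF⟩ := ih (by omega) P hPF
    refine ⟨N, (hP.trans hN).mono ?_, hNF⟩
    rw [hcard]
    -- `2 * m ≤ m ^ 2` keeps the truncated subtractions in the bound from underflowing.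
    have hq : 2 * m ≤ m ^ 2 := by nlinarith
    have hq' : (m + 1) ^ 2 = m ^ 2 + 2 * m + 1 := by ring
    rw [hq']
    omega

end

/-- Let `A` be a principal ideal domain and `n ≥ 3`.  Every matrix `M ∈ SL_n(A)` can be
transformed by at most `(3n² - n)/2 - 5` elementary row and column operations into a
framed `SL_2` matrix: a block diagonal matrix whose upper-left `2×2` block lies in
`SL_2(A)` and whose lower-right block is the identity `I_{n-2}`. -/
theorem reduction_to_framed_sl2
    (A : Type*) [CommRing A] [IsDomain A] [IsPrincipalIdealRing A]
    (n : ℕ) (hn : 3 ≤ n) (M : Matrix.SpecialLinearGroup (Fin n) A) :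
    ∃ L R : List (Matrix.SpecialLinearGroup (Fin n) A),
      L.length + R.length ≤ (3 * n ^ 2 - n) / 2 - 5 ∧
      (∀ E ∈ L, IsElementary E) ∧ (∀ E ∈ R, IsElementary E) ∧
      ∃ B : Matrix.SpecialLinearGroup (Fin 2) A,
        ∀ i j : Fin n,
          (L.prod * M * R.prod : Matrix.SpecialLinearGroup (Fin n) A).1 i j =
            if h : (i : ℕ) < 2 ∧ (j : ℕ) < 2 then B.1 ⟨i, h.1⟩ ⟨j, h.2⟩
            else if i = j then 1 else 0 := by
  obtain ⟨N, ⟨L, R, h1, h2, h3, rfl⟩, hN⟩ :=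
    reach_two n (by omega) le_rfl M (fun i j h => absurd (by simp) h)
  exact ⟨L, R, h1, h2, h3, hN.exists_block (by omega)⟩
end

section
/- Let F be a finite field with q elements, and let M = [[a, b], [c, d]] ∈ SL_2(F[X]) be a matrix whose anti-diagonal entries b and c are irreducible polynomials with gcd(deg b, deg c) = 1. Let δ(c) = (q^{deg c} − 1)/(q − 1), and let y be any positive integer. Then there exist a nonzero u ∈ F and lists L, R of elementary matrices in SL_3(F[X]) with total length at most 14 such that (product of L) · diag-block(M^{y·δ(c)}, 1) · (product of R) = diag(−u, u^{−1}, −1), where diag-block(N, 1) denotes the 3×3 block diagonal matrix with upper-left block N and lower-right entry 1. -/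
/-- The framed `3×3` version `diag-block(N, 1)` of a `2×2` matrix `N`. -/
def frame2 {R : Type*} [CommRing R] (N : Matrix (Fin 2) (Fin 2) R) :
    Matrix (Fin 3) (Fin 3) R :=
  !![N 0 0, N 0 1, 0; N 1 0, N 1 1, 0; 0, 0, 1]

open Polynomial Matrix

/-- `Reduces n X Y`: at most `n` elementary row and column operations turn `X` into `Y`. -/
def Reduces {R : Type*} [CommRing R] (n : ℕ) (X Y : Matrix (Fin 3) (Fin 3) R) : Prop :=
  ∃ L R' : List (SpecialLinearGroup (Fin 3) R),
    L.length + R'.length ≤ n ∧ (∀ E ∈ L, IsElementary E) ∧ (∀ E ∈ R', IsElementary E) ∧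
    (L.prod : Matrix (Fin 3) (Fin 3) R) * X * (R'.prod : Matrix (Fin 3) (Fin 3) R) = Y

theorem Reduces.refl {R : Type*} [CommRing R] (X : Matrix (Fin 3) (Fin 3) R) :
    Reduces 0 X X :=
  ⟨[], [], by simp, by simp, by simp, by simp⟩

theorem Reduces.row {R : Type*} [CommRing R] {n : ℕ} {X X' Y : Matrix (Fin 3) (Fin 3) R}
    (i j : Fin 3) (t : R) (hij : i ≠ j) (hX : transvection i j t * X = X')
    (h : Reduces n X' Y) : Reduces (n + 1) X Y := by
  obtain ⟨L, R', hlen, hL, hR, hprod⟩ := h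
  obtain ⟨T, hT⟩ : ∃ T : SpecialLinearGroup (Fin 3) R, T.1 = transvection i j t :=
    ⟨⟨transvection i j t, det_transvection_of_ne i j hij t⟩, rfl⟩
  refine ⟨L ++ [T], R', ?_, ?_, hR, ?_⟩
  · simp only [List.length_append, List.length_singleton]
    omega
  · intro E hE
    rcases List.mem_append.1 hE with hE | hE
    · exact hL E hE
    · rw [List.mem_singleton.1 hE]
      exact ⟨i, j, t, hij, hT⟩
  · rw [← hprod, ← hX, ← hT]
    simp [Matrix.mul_assoc]

theorem Reduces.col {R : Type*} [CommRing R] {n : ℕ} {X X' Y : Matrix (Fin 3) (Fin 3) R}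
    (i j : Fin 3) (t : R) (hij : i ≠ j) (hX : X * transvection i j t = X')
    (h : Reduces n X' Y) : Reduces (n + 1) X Y := by
  obtain ⟨L, R', hlen, hL, hR, hprod⟩ := h
  obtain ⟨T, hT⟩ : ∃ T : SpecialLinearGroup (Fin 3) R, T.1 = transvection i j t :=
    ⟨⟨transvection i j t, det_transvection_of_ne i j hij t⟩, rfl⟩
  refine ⟨L, T :: R', ?_, hL, ?_, ?_⟩
  · simp only [List.length_cons]
    omega
  · intro E hE
    rcases List.mem_cons.1 hE with hE | hE
    · rw [hE]
      exact ⟨i, j, t, hij, hT⟩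
    · exact hR E hE
  · rw [← hprod, ← hX, ← hT]
    simp [Matrix.mul_assoc]

/-- The fourteen operations. The factors `s₁` and `s₂` leave the lower left entry one after the
other, using `D ≡ 1 mod s₁` and `D ≡ -1 mod s₂`; then `A ≡ u mod c` with `u` invertible finishes
the reduction. -/
theorem reduces_diagonal {R : Type*} [CommRing R] {A D b c s₁ s₂ e f t u v : R}
    (hdet : A * D - (s₁ * s₂) * b * ((s₁ * s₂) * c) = 1)
    (h₁ : D = 1 + s₁ * e) (h₂ : D = -1 + s₂ * f) (hA : A = u + c * t) (huv : u * v = 1) :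
    Reduces 14 !![A, (s₁ * s₂) * b, 0; (s₁ * s₂) * c, D, 0; 0, 0, 1]
      !![u, 0, 0; 0, -v, 0; 0, 0, -1] := by
  obtain ⟨B, hB⟩ : ∃ B, B = (s₁ * s₂) * b := ⟨_, rfl⟩
  rw [← hB] at hdet ⊢
  -- The first move: `s₁` leaves the lower left entry, and `D` passes to the third row.
  refine Reduces.row (X' := !![A, B, 0; s₁ * s₂ * c, D, s₁; 0, 0, 1]) 1 2 s₁ (by decide) ?_ ?_
  · ext i j
    fin_cases i <;> fin_cases j <;>
      simp [transvection, single, Matrix.mul_apply, Fin.sum_univ_three]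
  refine Reduces.col (X' := !![A, B, 0; 0, D, s₁; -(s₂ * c), 0, 1]) 2 0 (-(s₂ * c))
    (by decide) ?_ ?_
  · ext i j
    fin_cases i <;> fin_cases j <;>
      simp [transvection, single, Matrix.mul_apply, Fin.sum_univ_three] <;> grind
  refine Reduces.col (X' := !![A, B, 0; 0, 1, s₁; -(s₂ * c), -e, 1]) 2 1 (-e) (by decide) ?_ ?_
  · ext i j
    fin_cases i <;> fin_cases j <;>
      simp [transvection, single, Matrix.mul_apply, Fin.sum_univ_three] <;> grind
  refine Reduces.col (X' := !![A, B, -(s₁ * B); 0, 1, 0; -(s₂ * c), -e, D]) 1 2 (-s₁)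
    (by decide) ?_ ?_
  · ext i j
    fin_cases i <;> fin_cases j <;>
      simp [transvection, single, Matrix.mul_apply, Fin.sum_univ_three] <;> grind
  refine Reduces.row (X' := !![A, 0, -(s₁ * B); 0, 1, 0; -(s₂ * c), -e, D]) 0 1 (-B)
    (by decide) ?_ ?_
  · ext i j
    fin_cases i <;> fin_cases j <;>
      simp [transvection, single, Matrix.mul_apply, Fin.sum_univ_three]
  -- Adding `e` times the second row would end the first move, and adding `s₂` times it
  -- begins the second move: one operation does both.
  refine Reduces.row (X' := !![A, 0, -(s₁ * B); 0, 1, 0; -(s₂ * c), s₂, D]) 2 1 (e + s₂)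
    (by decide) ?_ ?_
  · ext i j
    fin_cases i <;> fin_cases j <;>
      simp [transvection, single, Matrix.mul_apply, Fin.sum_univ_three]
  refine Reduces.col (X' := !![A, 0, -(s₁ * B); c, 1, 0; 0, s₂, D]) 1 0 c (by decide) ?_ ?_
  · ext i j
    fin_cases i <;> fin_cases j <;>
      simp [transvection, single, Matrix.mul_apply, Fin.sum_univ_three]
  refine Reduces.col (X' := !![A, 0, -(s₁ * B); c, 1, -f; 0, s₂, -1]) 1 2 (-f) (by decide) ?_ ?_
  · ext i j
    fin_cases i <;> fin_cases j <;>
      simp [transvection, single, Matrix.mul_apply, Fin.sum_univ_three] <;> grind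
  refine Reduces.col (X' := !![A, -(s₁ * s₂ * B), -(s₁ * B); c, -D, -f; 0, 0, -1]) 2 1 s₂
    (by decide) ?_ ?_
  · ext i j
    fin_cases i <;> fin_cases j <;>
      simp [transvection, single, Matrix.mul_apply, Fin.sum_univ_three] <;> grind
  refine Reduces.row (X' := !![A, -(s₁ * s₂ * B), 0; c, -D, -f; 0, 0, -1]) 0 2 (-(s₁ * B))
    (by decide) ?_ ?_
  · ext i j
    fin_cases i <;> fin_cases j <;>
      simp [transvection, single, Matrix.mul_apply, Fin.sum_univ_three]
  refine Reduces.row (X' := !![A, -(s₁ * s₂ * B), 0; c, -D, 0; 0, 0, -1]) 1 2 (-f)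
    (by decide) ?_ ?_
  · ext i j
    fin_cases i <;> fin_cases j <;>
      simp [transvection, single, Matrix.mul_apply, Fin.sum_univ_three]
  -- Only `c` is left below `A = u + c t`.
  refine Reduces.row (X' := !![u, t * D - s₁ * s₂ * B, 0; c, -D, 0; 0, 0, -1]) 0 1 (-t)
    (by decide) ?_ ?_
  · ext i j
    fin_cases i <;> fin_cases j <;>
      simp [transvection, single, Matrix.mul_apply, Fin.sum_univ_three] <;> grind
  refine Reduces.row (X' := !![u, t * D - s₁ * s₂ * B, 0; 0, -v, 0; 0, 0, -1]) 1 0 (-(c * v))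
    (by decide) ?_ ?_
  · ext i j
    fin_cases i <;> fin_cases j <;>
      simp [transvection, single, Matrix.mul_apply, Fin.sum_univ_three] <;> grind
  refine Reduces.col (X' := !![u, 0, 0; 0, -v, 0; 0, 0, -1]) 0 1 (-(v * (t * D - s₁ * s₂ * B)))
    (by decide) ?_ (Reduces.refl _)
  · ext i j
    fin_cases i <;> fin_cases j <;>
      simp [transvection, single, Matrix.mul_apply, Fin.sum_univ_three] <;> grind

/-- The powers of a `2 × 2` matrix of determinant one are linear combinations of the identity and
the matrix itself, and modulo the lower left entry the upper left entry is multiplicative. -/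
theorem exists_pow_eq {R : Type*} [CommRing R] (M : SpecialLinearGroup (Fin 2) R) (k : ℕ) :
    ∃ r s : R, (M.1 ^ k) = !![r + s * M.1 0 0, s * M.1 0 1; s * M.1 1 0, r + s * M.1 1 1] ∧
      M.1 1 0 ∣ (r + s * M.1 0 0) - M.1 0 0 ^ k := by
  have hdet : M.1 0 0 * M.1 1 1 - M.1 0 1 * M.1 1 0 = 1 := by
    rw [← det_fin_two]; exact M.2
  induction k with
  | zero =>
    refine ⟨1, 0, ?_, by simp⟩
    ext i j
    fin_cases i <;> fin_cases j <;> simp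
  | succ k ih =>
    obtain ⟨r, s, hM, x, hx⟩ := ih
    -- Reduction of `r M + s M²` by `M² = (tr M) M - 1`.
    refine ⟨-s, r + s * (M.1 0 0 + M.1 1 1), ?_, M.1 0 0 * x + s * M.1 0 1, ?_⟩
    · rw [pow_succ, hM]
      ext i j
      fin_cases i <;> fin_cases j <;> simp [Matrix.mul_apply, Fin.sum_univ_two] <;>
        grind
    · rw [pow_succ]
      linear_combination M.1 0 0 * hx + s * hdet

/-- Modulo an irreducible `c`, the `δ(c)`-th power is the norm from `F[X]/(c)` to `F`, hence a
constant. -/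
theorem exists_const_sub_pow_dvd {F : Type*} [Field F] [Fintype F] {a c : F[X]}
    (hc : Irreducible c) (hac : ¬ c ∣ a) (y : ℕ) :
    ∃ u : F, u ≠ 0 ∧
      c ∣ a ^ (y * ((Fintype.card F ^ c.natDegree - 1) / (Fintype.card F - 1))) - C u := by
  have : Fact (Irreducible c) := ⟨hc⟩
  let pb := AdjoinRoot.powerBasis hc.ne_zero
  have : Module.Finite F (AdjoinRoot c) := pb.finite
  have : Finite (AdjoinRoot c) := Module.finite_of_finite F
  have hcard : Nat.card (AdjoinRoot c) = Fintype.card F ^ c.natDegree := by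
    rw [Module.natCard_eq_pow_finrank (K := F), pb.finrank, Nat.card_eq_fintype_card]
    rfl
  have hne : AdjoinRoot.mk c a ≠ 0 := fun h => hac (AdjoinRoot.mk_eq_zero.1 h)
  refine ⟨Algebra.norm F (AdjoinRoot.mk c a) ^ y,
    pow_ne_zero _ (Algebra.norm_ne_zero_iff.2 hne), ?_⟩
  have hnorm := FiniteField.algebraMap_norm_eq_pow (K := F) (x := AdjoinRoot.mk c a)
  rw [hcard, Nat.card_eq_fintype_card] at hnorm
  rw [← AdjoinRoot.mk_eq_zero, map_sub, map_pow, mul_comm, pow_mul, ← hnorm, map_pow, map_pow,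
    AdjoinRoot.mk_C, AdjoinRoot.algebraMap_eq, sub_self]

/-- (Main step) Let `F` be a finite field with `q` elements and let
`M = [[a, b], [c, d]] ∈ SL_2(F[X])` with `b`, `c` irreducible of relatively prime
degrees.  With `δ(c) = (q^{deg c} - 1)/(q - 1)` and `y` a positive integer, the framed
matrix `diag-block(M^{y·δ(c)}, 1)` can be reduced by at most `14` elementary operations
to `diag(-u, u⁻¹, -1)` for some unit `u ∈ F*`. -/
theorem main_step_framed_power_reduction
    (F : Type*) [Field F] [Fintype F] (q : ℕ) (hq : Fintype.card F = q)
    (M : Matrix.SpecialLinearGroup (Fin 2) (Polynomial F))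
    (hb : Irreducible (M.1 0 1)) (hc : Irreducible (M.1 1 0))
    (hdeg : Nat.gcd ((M.1 0 1).natDegree) ((M.1 1 0).natDegree) = 1)
    (y : ℕ) (hy : 0 < y) :
    ∃ u : F, u ≠ 0 ∧
      ∃ L R : List (Matrix.SpecialLinearGroup (Fin 3) (Polynomial F)),
        L.length + R.length ≤ 14 ∧
        (∀ E ∈ L, IsElementary E) ∧ (∀ E ∈ R, IsElementary E) ∧
        (L.prod : Matrix (Fin 3) (Fin 3) (Polynomial F)) *
          frame2 ((M ^ (y * ((q ^ (M.1 1 0).natDegree - 1) / (q - 1)))) :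
            Matrix (Fin 2) (Fin 2) (Polynomial F)) *
          (R.prod : Matrix (Fin 3) (Fin 3) (Polynomial F)) =
          !![-(Polynomial.C u), 0, 0; 0, Polynomial.C u⁻¹, 0; 0, 0, -1] := by
  have hdet : M.1 0 0 * M.1 1 1 - M.1 0 1 * M.1 1 0 = 1 := by
    rw [← det_fin_two]; exact M.2
  have hca : ¬ M.1 1 0 ∣ M.1 0 0 := by
    rintro ⟨x, hx⟩
    refine hc.not_isUnit (isUnit_iff_dvd_one.2 ⟨x * M.1 1 1 - M.1 0 1, ?_⟩)
    linear_combination -hdet + M.1 1 1 * hx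
  obtain ⟨u, hu, hau⟩ := exists_const_sub_pow_dvd hc hca y
  rw [hq] at hau
  obtain ⟨r, s, hM, hA⟩ := exists_pow_eq M (y * ((q ^ (M.1 1 0).natDegree - 1) / (q - 1)))
  have hdetpow : (r + s * M.1 0 0) * (r + s * M.1 1 1) - (s * M.1 0 1) * (s * M.1 1 0) = 1 := by
    have h := congrArg det hM
    rw [det_pow, M.2, one_pow, det_fin_two_of] at h
    exact h.symm
  -- `hdetpow` reads `r² + r s tr M + s² = 1`.
  have hs : s ∣ (r - 1) * (r + 1) :=
    ⟨-(r * (M.1 0 0 + M.1 1 1) + s), by linear_combination hdetpow - s ^ 2 * hdet⟩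
  obtain ⟨s₁, s₂, ⟨x₁, hx₁⟩, ⟨x₂, hx₂⟩, rfl⟩ := exists_dvd_and_dvd_of_dvd_mul hs
  obtain ⟨t, ht⟩ := dvd_add hA hau
  have huv : C u * C u⁻¹ = 1 := by rw [← C_mul, mul_inv_cancel₀ hu, C_1]
  refine ⟨-u, neg_ne_zero.2 hu, ?_⟩
  have key := reduces_diagonal (e := x₁ + s₂ * M.1 1 1) (f := x₂ + s₁ * M.1 1 1)
    (t := t) hdetpow
    (by linear_combination hx₁) (by linear_combination hx₂)
    (by linear_combination ht) huv
  have hneg : -C (-u) = C u := by simp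
  have hinv : C (-u)⁻¹ = -C u⁻¹ := by rw [inv_neg, C_neg]
  rw [hneg, hinv, hM]
  exact key
end

section
/- Let F be a finite field and let M = [[a, b], [c, d]] ∈ SL_2(F[X]) be a matrix whose anti-diagonal entries b and c are irreducible polynomials with gcd(deg b, deg c) = 1. Then the 3×3 matrix diag-block(M, 1) = [[a, b, 0], [c, d, 0], [0, 0, 1]] ∈ SL_3(F[X]) is a product of at most 32 elementary matrices. -/
section

open Matrix Polynomial

/-- The `3 × 3` analogue of `Matrix.mul_fin_two`. -/
theorem mul_fin_three' {R : Type*} [CommRing R] (a b c d e f g h i a' b' c' d' e' f' g' h' i' : R) :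
    !![a, b, c; d, e, f; g, h, i] * !![a', b', c'; d', e', f'; g', h', i'] =
      !![a * a' + b * d' + c * g', a * b' + b * e' + c * h', a * c' + b * f' + c * i';
         d * a' + e * d' + f * g', d * b' + e * e' + f * h', d * c' + e * f' + f * i';
         g * a' + h * d' + i * g', g * b' + h * e' + i * h', g * c' + h * f' + i * i'] := by
  ext i j
  fin_cases i <;> fin_cases j <;> simp [Matrix.mul_apply, Fin.sum_univ_three]

theorem ext_fin_three' {R : Type*} {a b c d e f g h i a' b' c' d' e' f' g' h' i' : R}
    (h1 : a = a') (h2 : b = b') (h3 : c = c') (h4 : d = d') (h5 : e = e') (h6 : f = f')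
    (h7 : g = g') (h8 : h = h') (h9 : i = i') :
    !![a, b, c; d, e, f; g, h, i] = !![a', b', c'; d', e', f'; g', h', i'] := by
  subst_vars; rfl

/-- The explicit factorization behind the bound `16`. Here `f` is a unit with inverse `h`, and the
first row `(α, v₁ v₂ b)` satisfies `α ≡ f` modulo `b`, `α ≡ u` modulo `v₁ v₂`, `u ≡ -1` modulo `v₁`
and `u ≡ 1` modulo `v₂`. The four factors with parameters `k1 - f - f^2`, `h`, `-f - 1`, `1` amount
to the transvection with parameter `k1` times the diagonal matrix with entries `-f`, `1`, `-h`. -/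
theorem framed_eq_prod_transvection {R : Type*} [CommRing R] (α γ δ b g f h u a v1 v2 k1 k2 w ρ : R)
    (hdet : α * δ - v1 * v2 * b * γ = 1) (hα : α = f + b * g) (hf : f * h = 1)
    (hu : α = u + v1 * v2 * a) (h1 : u = -1 + v1 * k1) (h2 : u = 1 + v2 * k2)
    (hw : w = -γ * h * b + h * a * δ) (hρ : ρ = f^2 * v1 * w + f * k2 * δ) :
    transvection (0 : Fin 3) 2 (-b) * transvection 2 0 (-g * h - v1) *
      (transvection 1 2 (-f * w + h * ρ * k1) * transvection 1 0 (γ * h - h * ρ) *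
        (transvection 0 2 (k1 - f - f^2) * transvection 2 0 h *
          transvection 0 2 (-f - 1) * transvection 2 0 1) *
        (transvection 0 1 (-h * v2) * transvection 1 0 (-f * k2) * transvection 2 0 (-f^2 * v1)) *
        (transvection 0 2 (h^2 * k1 + h * b) * transvection 0 1 (-h * v2) *
          transvection 1 2 (-h * a))) *
      transvection 2 0 g * transvection 2 1 (v1 * v2) =
      !![α, v1 * v2 * b, 0; γ, δ, 0; 0, 0, 1] := by
  have t01 (x : R) : transvection (0 : Fin 3) 1 x = !![1, x, 0; 0, 1, 0; 0, 0, 1] := by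
    ext i j; fin_cases i <;> fin_cases j <;> simp [transvection]
  have t02 (x : R) : transvection (0 : Fin 3) 2 x = !![1, 0, x; 0, 1, 0; 0, 0, 1] := by
    ext i j; fin_cases i <;> fin_cases j <;> simp [transvection]
  have t10 (x : R) : transvection (1 : Fin 3) 0 x = !![1, 0, 0; x, 1, 0; 0, 0, 1] := by
    ext i j; fin_cases i <;> fin_cases j <;> simp [transvection]
  have t12 (x : R) : transvection (1 : Fin 3) 2 x = !![1, 0, 0; 0, 1, x; 0, 0, 1] := by
    ext i j; fin_cases i <;> fin_cases j <;> simp [transvection]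
  have t20 (x : R) : transvection (2 : Fin 3) 0 x = !![1, 0, 0; 0, 1, 0; x, 0, 1] := by
    ext i j; fin_cases i <;> fin_cases j <;> simp [transvection]
  have t21 (x : R) : transvection (2 : Fin 3) 1 x = !![1, 0, 0; 0, 1, 0; 0, x, 1] := by
    ext i j; fin_cases i <;> fin_cases j <;> simp [transvection]
  simp only [t01, t02, t10, t12, t20, t21]
  clear t01 t02 t10 t12 t20 t21
  have hx : δ + h * v2 * ρ = 1 := by
    have hd : f * v1 * v2 * w + u * δ = 1 := by
      -- `f` times the determinant of the block `[h u, -v₁ v₂; w, δ]`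
      linear_combination hdet + f * v1 * v2 * hw + (a * δ * v1 * v2 - γ * b * v1 * v2) * hf - δ * hu
    linear_combination h * v2 * hρ + hd + (f * v1 * v2 * w + v2 * k2 * δ) * hf - δ * h2
  -- a transvection times the diagonal matrix with entries `-f, 1, -h`
  have e1 : !![1, 0, k1 - f - f^2; 0, 1, 0; 0, 0, 1] * !![1, 0, 0; 0, 1, 0; h, 0, 1] *
      !![1, 0, -f - 1; 0, 1, 0; 0, 0, 1] * !![1, 0, 0; 0, 1, 0; 1, 0, 1] =
      !![-f, 0, -h * k1; 0, 1, 0; 0, 0, -h] := by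
    clear hdet hα hu h1 h2 hw hρ hx
    simp only [mul_fin_three']
    apply ext_fin_three' <;> grind
  have e2 : !![1, 0, 0; 0, 1, -f * w + h * ρ * k1; 0, 0, 1] *
      !![1, 0, 0; γ * h - h * ρ, 1, 0; 0, 0, 1] *
      !![-f, 0, -h * k1; 0, 1, 0; 0, 0, -h] =
      !![-f, 0, -h * k1; ρ - γ, 1, w - γ * h^2 * k1; 0, 0, -h] := by
    clear hdet hα hu h1 h2 hw hρ hx e1
    simp only [mul_fin_three']
    apply ext_fin_three' <;> grind
  have e3 : !![1, -h * v2, 0; 0, 1, 0; 0, 0, 1] * !![1, 0, 0; -f * k2, 1, 0; 0, 0, 1] *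
      !![1, 0, 0; 0, 1, 0; -f^2 * v1, 0, 1] =
      !![1 + v2 * k2, -h * v2, 0; -f * k2, 1, 0; -f^2 * v1, 0, 1] := by
    clear hdet hα hu h1 h2 hw hρ hx e1 e2
    simp only [mul_fin_three']
    apply ext_fin_three' <;> grind
  have e4 : !![-f, 0, -h * k1; ρ - γ, 1, w - γ * h^2 * k1; 0, 0, -h] *
      !![1 + v2 * k2, -h * v2, 0; -f * k2, 1, 0; -f^2 * v1, 0, 1] =
      !![f, v2, -h * k1; γ, δ + γ * h * v2, w - γ * h^2 * k1; f * v1, 0, -h] := by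
    clear hdet hα hu hw e1 e2 e3
    simp only [mul_fin_three']
    apply ext_fin_three' <;> grind
  have e5 : !![f, v2, -h * k1; γ, δ + γ * h * v2, w - γ * h^2 * k1; f * v1, 0, -h] *
      (!![1, 0, h^2 * k1 + h * b; 0, 1, 0; 0, 0, 1] * !![1, -h * v2, 0; 0, 1, 0; 0, 0, 1] *
        !![1, 0, 0; 0, 1, -h * a; 0, 0, 1]) =
      !![f, 0, b; γ, δ, 0; f * v1, -(v1 * v2), h * α + v1 * b] := by
    clear hdet hα h2 hρ hx e1 e2 e3 e4
    simp only [mul_fin_three']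
    apply ext_fin_three' <;> grind
  have e6 : !![1, 0, -b; 0, 1, 0; 0, 0, 1] * !![1, 0, 0; 0, 1, 0; -g * h - v1, 0, 1] *
      !![f, 0, b; γ, δ, 0; f * v1, -(v1 * v2), h * α + v1 * b] *
      !![1, 0, 0; 0, 1, 0; g, 0, 1] * !![1, 0, 0; 0, 1, 0; 0, v1 * v2, 1] =
      !![α, v1 * v2 * b, 0; γ, δ, 0; 0, 0, 1] := by
    clear hdet hu h1 h2 hw hρ hx e1 e2 e3 e4 e5
    simp only [mul_fin_three']
    apply ext_fin_three' <;> grind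
  rw [e1, e2, e3, e4, e5, e6]

/-- The matrix `A` is a product of at most `k` elementary matrices. -/
def IsElemProd {R : Type*} [CommRing R] (k : ℕ) (A : Matrix (Fin 3) (Fin 3) R) : Prop :=
  ∃ L : List (SpecialLinearGroup (Fin 3) R),
    L.length ≤ k ∧ (∀ E ∈ L, IsElementary E) ∧ (L.prod : Matrix (Fin 3) (Fin 3) R) = A

theorem IsElemProd.mul {R : Type*} [CommRing R] {k l : ℕ} {A B : Matrix (Fin 3) (Fin 3) R}
    (hA : IsElemProd k A) (hB : IsElemProd l B) : IsElemProd (k + l) (A * B) := by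
  obtain ⟨L, hL, hLE, rfl⟩ := hA
  obtain ⟨L', hL', hLE', rfl⟩ := hB
  refine ⟨L ++ L', by simp; lia, ?_, by simp⟩
  intro E hE
  rcases List.mem_append.1 hE with h | h
  exacts [hLE E h, hLE' E h]

theorem IsElementary.transpose {R : Type*} [CommRing R] {E : SpecialLinearGroup (Fin 3) R}
    (h : IsElementary E) : IsElementary E.transpose := by
  obtain ⟨i, j, c, hij, hE⟩ := h
  refine ⟨j, i, c, hij.symm, ?_⟩
  rw [SpecialLinearGroup.coe_transpose, hE]
  simp [transvection]

theorem IsElemProd.transpose {R : Type*} [CommRing R] {k : ℕ} {A : Matrix (Fin 3) (Fin 3) R}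
    (hA : IsElemProd k A) : IsElemProd k Aᵀ := by
  obtain ⟨L, hL, hLE, rfl⟩ := hA
  refine ⟨(L.map SpecialLinearGroup.transpose).reverse, by simpa using hL, ?_, ?_⟩
  · intro E hE
    obtain ⟨E', hE', rfl⟩ := List.mem_map.1 (List.mem_reverse.1 hE)
    exact (hLE E' hE').transpose
  · clear hL hLE
    induction L with
    | nil => simp
    | cons E L ih => simp [ih, Matrix.transpose_mul]

theorem isElemProd_framed {R : Type*} [CommRing R] (α γ δ b g f h u a v1 v2 k1 k2 : R)
    (hdet : α * δ - v1 * v2 * b * γ = 1) (hα : α = f + b * g) (hf : f * h = 1)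
    (hu : α = u + v1 * v2 * a) (h1 : u = -1 + v1 * k1) (h2 : u = 1 + v2 * k2) :
    IsElemProd 16 !![α, v1 * v2 * b, 0; γ, δ, 0; 0, 0, 1] := by
  have ht (i j : Fin 3) (c : R) (hij : i ≠ j) : IsElemProd 1 (transvection i j c) :=
    ⟨[SpecialLinearGroup.transvection hij c], by simp,
      by simpa using ⟨i, j, c, hij, rfl⟩, by simp; rfl⟩
  rw [← framed_eq_prod_transvection α γ δ b g f h u a v1 v2 k1 k2 _ _ hdet hα hf hu h1 h2 rfl rfl]
  have h02 (c : R) := ht 0 2 c (by decide)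
  have h01 (c : R) := ht 0 1 c (by decide)
  have h10 (c : R) := ht 1 0 c (by decide)
  have h12 (c : R) := ht 1 2 c (by decide)
  have h20 (c : R) := ht 2 0 c (by decide)
  have h21 (c : R) := ht 2 1 c (by decide)
  exact ((((h02 _).mul (h20 _)).mul (((((h12 _).mul (h10 _)).mul
    ((((h02 _).mul (h20 _)).mul (h02 _)).mul (h20 _))).mul
    (((h01 _).mul (h10 _)).mul (h20 _))).mul
    (((h02 _).mul (h01 _)).mul (h12 _)))).mul (h20 _)).mul (h21 _)

theorem frame2_mul {R : Type*} [CommRing R] (A B : Matrix (Fin 2) (Fin 2) R) :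
    frame2 (A * B) = frame2 A * frame2 B := by
  simp only [frame2, mul_fin_three']
  apply ext_fin_three' <;> simp [Matrix.mul_apply]

theorem frame2_transpose {R : Type*} [CommRing R] (A : Matrix (Fin 2) (Fin 2) R) :
    frame2 Aᵀ = (frame2 A)ᵀ := by
  ext i j
  fin_cases i <;> fin_cases j <;> simp [frame2]

theorem SL2_mul_val {R : Type*} [CommRing R] (A B : SpecialLinearGroup (Fin 2) R) :
    (A * B).1 = A.1 * B.1 := rfl

/-- Powers of `M` have the form `u + v M`, written out entrywise; this is Cayley–Hamilton. -/
theorem SL2_pow_eq {R : Type*} [CommRing R] (M : SpecialLinearGroup (Fin 2) R) (n : ℕ) :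
    ∃ u v : R, (M ^ n).1 = !![u + v * M.1 0 0, v * M.1 0 1; v * M.1 1 0, u + v * M.1 1 1] := by
  have hd := M.det_coe
  rw [Matrix.det_fin_two] at hd
  induction n with
  | zero => exact ⟨1, 0, by ext i j; fin_cases i <;> fin_cases j <;> simp⟩
  | succ n ih =>
    obtain ⟨u, v, h⟩ := ih
    refine ⟨-v, u + v * (M.1 0 0 + M.1 1 1), ?_⟩
    rw [pow_succ, SL2_mul_val, h]
    ext i j
    fin_cases i <;> fin_cases j <;> simp [Matrix.mul_apply] <;> grind

/-- Modulo its `(0, 1)` entry `M` is lower triangular, so the `(0, 0)` entry is multiplicative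
on powers. -/
theorem dvd_SL2_pow_sub {R : Type*} [CommRing R] (M : SpecialLinearGroup (Fin 2) R) (n : ℕ) :
    M.1 0 1 ∣ (M ^ n).1 0 0 - M.1 0 0 ^ n := by
  induction n with
  | zero => simp
  | succ n ih =>
    obtain ⟨u, v, h⟩ := SL2_pow_eq M n
    obtain ⟨x, hx⟩ := ih
    refine ⟨x * M.1 0 0 + v * M.1 1 0, ?_⟩
    rw [pow_succ, SL2_mul_val, Matrix.mul_apply, Fin.sum_univ_two, pow_succ]
    have h01 : (M ^ n).1 0 1 = v * M.1 0 1 := by rw [h]; simp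
    rw [h01]
    linear_combination M.1 0 0 * hx

/-- The exponent is a multiple of `(q ^ deg b - 1) / (q - 1)`, so the power is a power of the norm
from the field `F[X]/(b)` to `F`. -/
theorem exists_const_pow {F : Type*} [Field F] [Fintype F] (a b : F[X]) (hb : Irreducible b)
    (hab : ¬ b ∣ a) (s : ℕ) :
    ∃ f : F, f ≠ 0 ∧
      b ∣ a ^ ((∑ i ∈ Finset.range b.natDegree, Fintype.card F ^ i) * s) - C f := by
  have : Fact (Irreducible b) := ⟨hb⟩
  have hfin : Module.Finite F (AdjoinRoot b) := (AdjoinRoot.powerBasis hb.ne_zero).finite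
  have : Finite (AdjoinRoot b) := Module.finite_of_finite F
  have hrank : Module.finrank F (AdjoinRoot b) = b.natDegree := by
    rw [(AdjoinRoot.powerBasis hb.ne_zero).finrank, AdjoinRoot.powerBasis_dim]
  have hne : AdjoinRoot.mk b a ≠ 0 := by rwa [Ne, AdjoinRoot.mk_eq_zero]
  refine ⟨Algebra.norm F (AdjoinRoot.mk b a) ^ s,
    pow_ne_zero _ (Algebra.norm_ne_zero_iff.2 hne), ?_⟩
  have key := FiniteField.algebraMap_norm_eq_pow_sum F (AdjoinRoot b) (AdjoinRoot.mk b a)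
  rw [hrank, Nat.card_eq_fintype_card] at key
  rw [← AdjoinRoot.mk_eq_zero, map_sub, map_pow, pow_mul, ← key, AdjoinRoot.mk_C,
    map_pow, AdjoinRoot.algebraMap_eq, sub_self]

theorem isElemProd_pow {F : Type*} [Field F] [Fintype F] (M : SpecialLinearGroup (Fin 2) F[X])
    (hb : Irreducible (M.1 0 1)) (s : ℕ) :
    IsElemProd 16 (frame2
      (M ^ ((∑ i ∈ Finset.range (M.1 0 1).natDegree, Fintype.card F ^ i) * s)).1) := by
  set N := (∑ i ∈ Finset.range (M.1 0 1).natDegree, Fintype.card F ^ i) * s with hN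
  have hd := M.det_coe
  rw [Matrix.det_fin_two] at hd
  have hab : ¬ M.1 0 1 ∣ M.1 0 0 := fun h ↦ hb.not_isUnit <| isUnit_of_dvd_one <| by
    have := dvd_sub (h.mul_right (M.1 1 1)) (dvd_mul_right (M.1 0 1) (M.1 1 0))
    rwa [hd] at this
  obtain ⟨f, hf, hfb⟩ := exists_const_pow _ _ hb hab s
  rw [← hN] at hfb
  obtain ⟨g, hg⟩ := dvd_add (dvd_SL2_pow_sub M N) hfb
  obtain ⟨u, v, huv⟩ := SL2_pow_eq M N
  have hdN := (M ^ N).det_coe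
  rw [huv, Matrix.det_fin_two_of] at hdN
  -- `det (u + v M) = u ^ 2 + u v tr M + v ^ 2`
  have hv : v ∣ (u + 1) * (u - 1) :=
    ⟨-(u * (M.1 0 0 + M.1 1 1) + v), by linear_combination hdN - v ^ 2 * hd⟩
  obtain ⟨v1, v2, ⟨k1, h1⟩, ⟨k2, h2⟩, rfl⟩ := exists_dvd_and_dvd_of_dvd_mul hv
  have h00 : (M ^ N).1 0 0 = u + v1 * v2 * M.1 0 0 := by rw [huv]; simp
  have := isElemProd_framed (u + v1 * v2 * M.1 0 0) (v1 * v2 * M.1 1 0) (u + v1 * v2 * M.1 1 1)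
    (M.1 0 1) g (C f) (C f⁻¹) u (M.1 0 0) v1 v2 k1 k2 (by linear_combination hdN)
    (by rw [← h00]; linear_combination hg) (by rw [← C_mul, mul_inv_cancel₀ hf, C_1]) rfl
    (by linear_combination h1) (by linear_combination h2)
  rw [huv]
  simpa [frame2] using this

theorem isElemProd_zpow {F : Type*} [Field F] [Fintype F] (M : SpecialLinearGroup (Fin 2) F[X])
    (hb : Irreducible (M.1 0 1)) (s : ℤ) :
    IsElemProd 16 (frame2
      (M ^ (((∑ i ∈ Finset.range (M.1 0 1).natDegree, Fintype.card F ^ i : ℕ) : ℤ) * s)).1) := by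
  obtain ⟨n, rfl | rfl⟩ := s.eq_nat_or_neg
  · exact_mod_cast isElemProd_pow M hb n
  · have h01 : (M⁻¹).1 0 1 = -M.1 0 1 := by
      simp [Matrix.adjugate_fin_two]
    have := isElemProd_pow M⁻¹ (by rw [h01]; exact (Associated.refl _).neg_right.irreducible hb) n
    rw [h01, natDegree_neg, inv_pow] at this
    rw [mul_neg, _root_.zpow_neg]
    exact_mod_cast this

/-- Version of `isElemProd_zpow` for the `(1, 0)` entry, by transposition. -/
theorem isElemProd_zpow' {F : Type*} [Field F] [Fintype F] (M : SpecialLinearGroup (Fin 2) F[X])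
    (hc : Irreducible (M.1 1 0)) (s : ℤ) :
    IsElemProd 16 (frame2
      (M ^ (((∑ i ∈ Finset.range (M.1 1 0).natDegree, Fintype.card F ^ i : ℕ) : ℤ) * s)).1) := by
  have hpow (n : ℕ) : M.transpose ^ n = (M ^ n).transpose :=
    Subtype.ext (Matrix.transpose_pow M.1 n).symm
  have hinv (A : SpecialLinearGroup (Fin 2) F[X]) : A.transpose⁻¹ = A⁻¹.transpose :=
    Subtype.ext (Matrix.adjugate_transpose A.1).symm
  have hz (z : ℤ) : M.transpose ^ z = (M ^ z).transpose := by
    obtain ⟨n, rfl | rfl⟩ := z.eq_nat_or_neg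
    · simpa using hpow n
    · rw [_root_.zpow_neg, _root_.zpow_neg, zpow_natCast, zpow_natCast, hpow, hinv]
  have := (isElemProd_zpow M.transpose hc s).transpose
  rw [hz, SpecialLinearGroup.coe_transpose, frame2_transpose, Matrix.transpose_transpose] at this
  exact this

theorem coprime_geomSum {q m n : ℕ} (hq : 1 < q) (h : Nat.gcd m n = 1) :
    Nat.Coprime (∑ i ∈ Finset.range m, q ^ i) (∑ i ∈ Finset.range n, q ^ i) := by
  have hg (k : ℕ) : (∑ i ∈ Finset.range k, q ^ i) * (q - 1) = q ^ k - 1 := by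
    rw [Nat.geomSum_eq hq, Nat.div_mul_cancel]
    simpa using Nat.sub_dvd_pow_sub_pow q 1 k
  have := Nat.pow_sub_one_gcd_pow_sub_one q m n
  rw [← hg, ← hg, Nat.gcd_mul_right, h, pow_one] at this
  exact Nat.eq_of_mul_eq_mul_right (Nat.sub_pos_of_lt hq) (by rw [this, one_mul])

end

/-- Let `F` be a finite field and let `M = [[a, b], [c, d]] ∈ SL_2(F[X])` with
anti-diagonal entries `b`, `c` irreducible of relatively prime degrees.  Then the framed
matrix `diag-block(M, 1) ∈ SL_3(F[X])` is a product of at most `32` elementary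
matrices. -/
theorem framed_matrix_with_prime_antidiagonal_is_product_of_32_elementary
    (F : Type*) [Field F] [Fintype F]
    (M : Matrix.SpecialLinearGroup (Fin 2) (Polynomial F))
    (hb : Irreducible (M.1 0 1)) (hc : Irreducible (M.1 1 0))
    (hdeg : Nat.gcd ((M.1 0 1).natDegree) ((M.1 1 0).natDegree) = 1) :
    ∃ L : List (Matrix.SpecialLinearGroup (Fin 3) (Polynomial F)),
      L.length ≤ 32 ∧ (∀ E ∈ L, IsElementary E) ∧
      (L.prod : Matrix (Fin 3) (Fin 3) (Polynomial F)) =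
        frame2 (M : Matrix (Fin 2) (Fin 2) (Polynomial F)) := by
  obtain ⟨x, y, hxy⟩ := Nat.isCoprime_iff_coprime.2
    (coprime_geomSum (Fintype.one_lt_card (α := F)) hdeg)
  have h := (isElemProd_zpow M hb x).mul (isElemProd_zpow' M hc y)
  rw [← frame2_mul, ← SL2_mul_val, ← _root_.zpow_add, mul_comm _ x, mul_comm _ y, hxy,
    zpow_one] at h
  exact h
end

section
/- Let F be a finite field and let M = [[a, b], [c, d]] ∈ SL_2(F[X]) with a ≠ 0. Then there exist lists L, R of elementary matrices in SL_2(F[X]) with total length at most 2 such that (product of L) · M · (product of R) is a matrix [[a, b'], [c', d']] ∈ SL_2(F[X]) whose anti-diagonal entries b' and c' are irreducible polynomials with gcd(deg b', deg c') = 1. -/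
/-! ### Power sums and logarithmic derivatives of complex polynomials -/

open Polynomial in
/-- The polynomial `∏ (1 - α X)` over the multiset `s` of its inverse roots `α`. -/
noncomputable def eulerPoly (s : Multiset ℂ) : ℂ[X] := (s.map fun α => 1 - C α * X).prod

/-- The `n`-th power sum of `s` with a minus sign. The value at `n = 0` is set to `0`, so that the
generating function is `X` times the logarithmic derivative of `eulerPoly s`. -/
def negPsum (s : Multiset ℂ) (n : ℕ) : ℂ := if n = 0 then 0 else -(s.map (· ^ n)).sum

/-- The coefficientwise form of `X * L' = L * B`, where `L = ∑ A n X ^ n` and `B = ∑ B n X ^ n`. -/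
def IsLogDeriv (A B : ℕ → ℂ) : Prop :=
  ∀ n : ℕ, (n : ℂ) * A n = ∑ p ∈ Finset.HasAntidiagonal.antidiagonal n, A p.1 * B p.2

lemma isLogDeriv_iff (A B : ℕ → ℂ) :
    IsLogDeriv A B ↔ PowerSeries.X * PowerSeries.derivative ℂ (PowerSeries.mk A) =
      PowerSeries.mk A * PowerSeries.mk B := by
  rw [PowerSeries.ext_iff]
  refine forall_congr' fun n => ?_
  rw [PowerSeries.coeff_mul n (PowerSeries.mk A)]
  simp only [PowerSeries.coeff_mk]
  rcases n with _ | n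
  · simp
  · rw [PowerSeries.coeff_succ_X_mul, PowerSeries.coeff_derivative, PowerSeries.coeff_mk, mul_comm]
    push_cast; rfl

lemma eulerPoly_coeff_zero (s : Multiset ℂ) : (eulerPoly s).coeff 0 = 1 := by
  induction s using Multiset.induction_on with
  | empty => simp [eulerPoly]
  | cons a s ih =>
    have : eulerPoly (a ::ₘ s) = (1 - Polynomial.C a * Polynomial.X) * eulerPoly s := by
      simp [eulerPoly]
    rw [this, Polynomial.mul_coeff_zero, ih]; simp

/-- Newton's identities, valid in all degrees. -/
lemma isLogDeriv_eulerPoly (s : Multiset ℂ) :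
    IsLogDeriv (fun n => (eulerPoly s).coeff n) (negPsum s) := by
  rw [isLogDeriv_iff]
  have hmk : ∀ p : Polynomial ℂ, PowerSeries.mk (fun n => p.coeff n) = (p : PowerSeries ℂ) := by
    intro p; ext n; simp
  rw [hmk]
  induction s using Multiset.induction_on with
  | empty =>
    have : PowerSeries.mk (negPsum 0) = 0 := by ext n; simp [negPsum]
    rw [this]; simp [eulerPoly]
  | cons a s ih =>
    have h1 : eulerPoly (a ::ₘ s) = (1 - Polynomial.C a * Polynomial.X) * eulerPoly s := by
      simp [eulerPoly]
    have h2 : PowerSeries.mk (negPsum (a ::ₘ s)) = PowerSeries.mk (negPsum s)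
        - PowerSeries.mk (fun n => if n = 0 then 0 else a ^ n) := by
      ext n
      by_cases hn : n = 0
      · simp [negPsum, hn]
      · simp [negPsum, hn]; ring
    have h3 : (1 - PowerSeries.C a * PowerSeries.X) *
        PowerSeries.mk (fun n => if n = 0 then 0 else a ^ n) = PowerSeries.C a * PowerSeries.X := by
      ext n
      rw [sub_mul, one_mul, mul_assoc, map_sub, PowerSeries.coeff_C_mul, PowerSeries.coeff_C_mul]
      rcases n with _ | n
      · simp
      · rw [PowerSeries.coeff_succ_X_mul, PowerSeries.coeff_X]
        rcases n with _ | n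
        · simp
        · simp; ring
    rw [h1, h2]
    push_cast
    rw [Derivation.leibniz]
    simp only [smul_eq_mul, map_sub, Derivation.leibniz, PowerSeries.derivative_C,
      PowerSeries.derivative_X, PowerSeries.derivative_one]
    linear_combination (1 - PowerSeries.C a * PowerSeries.X) * ih +
      (eulerPoly s : PowerSeries ℂ) * h3

lemma IsLogDeriv.unique {A B C : ℕ → ℂ} (hA : A 0 ≠ 0) (hB : IsLogDeriv A B)
    (hC : IsLogDeriv A C) : B = C := by
  rw [isLogDeriv_iff] at hB hC
  have h0 : PowerSeries.mk A ≠ 0 := by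
    intro h
    apply hA
    simpa using congrArg (PowerSeries.coeff 0) h
  have := mul_left_cancel₀ h0 (hB.symm.trans hC)
  funext n
  simpa using congrArg (PowerSeries.coeff n) this

open scoped ComplexOrder in
/-- If the logarithmic derivative of a polynomial has nonnegative coefficients, then so has the
polynomial, and Newton's identity beyond the degree forces the power sums to vanish. The order on
`ℂ` encodes that these numbers are real. -/
lemma negPsum_eventually_zero (s : Multiset ℂ) (hs : ∀ k, 0 ≤ negPsum s k) :
    ∀ n > (eulerPoly s).natDegree, negPsum s n = 0 := by
  have hrec := isLogDeriv_eulerPoly s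
  have hnn : ∀ n, 0 ≤ (eulerPoly s).coeff n := by
    intro n
    induction n using Nat.strong_induction_on with
    | _ n ih =>
      rcases Nat.eq_zero_or_pos n with rfl | hn
      · rw [eulerPoly_coeff_zero]; exact zero_le_one
      · have h1 : 0 ≤ (n : ℂ) * (eulerPoly s).coeff n := by
          rw [hrec n]
          refine Finset.sum_nonneg fun p hp => ?_
          rw [Finset.HasAntidiagonal.mem_antidiagonal] at hp
          by_cases h : p.2 = 0
          · simp [negPsum, h]
          · exact mul_nonneg (ih p.1 (by omega)) (hs _)
        have hn' : (0 : ℂ) < n := by exact_mod_cast hn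
        have h2 := mul_nonneg (inv_nonneg.2 hn'.le) h1
        rwa [inv_mul_cancel_left₀ hn'.ne'] at h2
  intro n hn
  have h := hrec n
  beta_reduce at h
  rw [Polynomial.coeff_eq_zero_of_natDegree_lt hn, mul_zero, eq_comm,
    Finset.sum_eq_zero_iff_of_nonneg (fun p _ => mul_nonneg (hnn _) (hs _))] at h
  simpa [eulerPoly_coeff_zero] using h (0, n) (by simp)

lemma exists_eulerPoly (L : Polynomial ℂ) (hL : L.coeff 0 = 1) : ∃ s, L = eulerPoly s := by
  have hsp := (IsAlgClosed.splits L).eq_prod_roots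
  have hL0 : L ≠ 0 := by rintro rfl; simp at hL
  have key : ∀ t : Multiset ℂ, (0 : ℂ) ∉ t → ∃ c : ℂ,
      (t.map fun z => Polynomial.X - Polynomial.C z).prod =
        Polynomial.C c * eulerPoly (t.map (·⁻¹)) := by
    intro t
    induction t using Multiset.induction_on with
    | empty => intro _; exact ⟨1, by simp [eulerPoly]⟩
    | cons z t ih =>
      intro h
      simp only [Multiset.mem_cons, not_or] at h
      obtain ⟨c, hc⟩ := ih h.2
      refine ⟨-z * c, ?_⟩
      have hz : (Polynomial.C z : Polynomial ℂ) * Polynomial.C z⁻¹ = 1 := by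
        rw [← Polynomial.C_mul, mul_inv_cancel₀ (Ne.symm h.1), Polynomial.C_1]
      have : eulerPoly ((z ::ₘ t).map (·⁻¹)) =
          (1 - Polynomial.C z⁻¹ * Polynomial.X) * eulerPoly (t.map (·⁻¹)) := by
        simp [eulerPoly]
      rw [this, Multiset.map_cons, Multiset.prod_cons, hc, Polynomial.C_mul, Polynomial.C_neg]
      linear_combination (-Polynomial.X * Polynomial.C c * eulerPoly (t.map (·⁻¹))) * hz
  obtain ⟨c, hc⟩ := key L.roots (by
    intro h
    rw [Polynomial.mem_roots hL0, Polynomial.IsRoot, ← Polynomial.coeff_zero_eq_eval_zero, hL] at h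
    exact one_ne_zero h)
  rw [hc, ← mul_assoc, ← Polynomial.C_mul] at hsp
  refine ⟨L.roots.map (·⁻¹), ?_⟩
  have h1 := congrArg (fun p => Polynomial.coeff p 0) hsp
  simp only [Polynomial.coeff_C_mul, eulerPoly_coeff_zero, hL, mul_one] at h1
  rw [← h1, Polynomial.C_1, one_mul] at hsp
  exact hsp

open scoped ComplexOrder in
/-- The nonvanishing statement: if the power sums of `s` are bounded by `q ^ k`, strictly for
arbitrarily large `k`, then all members of `s` have norm less than `q`. If `‖α‖ = r ≥ q` and
`α = r * w`, remove `α` from `s`, divide by `w` and adjoin the complex conjugates: the resulting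
multiset has power sums of constant sign, which contradicts `negPsum_eventually_zero`. -/
lemma norm_lt_of_mem {s : Multiset ℂ} {q : ℝ} (hq : 0 < q)
    (hB : ∀ k, ‖negPsum s k‖ ≤ q ^ k) (hB' : ∀ N, ∃ k ≥ N, ‖negPsum s k‖ < q ^ k) :
    ∀ α ∈ s, ‖α‖ < q := by
  intro α hα
  by_contra! hle
  obtain ⟨t, rfl⟩ := Multiset.exists_cons_of_mem hα
  set r := ‖α‖ with hr
  have hr0 : 0 < r := hq.trans_le hle
  set w : ℂ := α / r with hw
  have hwn : ‖w‖ = 1 := by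
    rw [hw, norm_div, Complex.norm_real, Real.norm_of_nonneg hr0.le, ← hr, div_self hr0.ne']
  have hw0 : w ≠ 0 := by intro h; simp [h] at hwn
  have hαw : α = r * w := by
    rw [hw]; field_simp
  let u := t.map (· / w)
  let v := u + u.map (starRingEnd ℂ)
  -- Removing one `α` is what contributes `2 * r ^ k`, which dominates the other term.
  have hv : ∀ k, k ≠ 0 → negPsum v k =
      ((2 * r ^ k + 2 * (negPsum (α ::ₘ t) k / w ^ k).re : ℝ) : ℂ) := by
    intro k hk
    have e1 : negPsum u k = negPsum (α ::ₘ t) k / w ^ k + (r : ℂ) ^ k := by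
      simp only [negPsum, hk, if_false, u, Multiset.map_map, Multiset.map_cons, Multiset.sum_cons,
        Function.comp_def, div_pow, Multiset.sum_map_div]
      rw [hαw, mul_pow]
      field_simp
      ring
    have e2 : negPsum v k = negPsum u k + (starRingEnd ℂ) (negPsum u k) := by
      simp only [negPsum, hk, if_false, v, Multiset.map_add, Multiset.sum_add, Multiset.map_map,
        Function.comp_def, map_neg, map_multiset_sum, map_pow]
      ring
    rw [e2, Complex.add_conj, e1]
    have : ((r : ℂ) ^ k).re = r ^ k := by rw [← Complex.ofReal_pow, Complex.ofReal_re]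
    rw [Complex.add_re, this]
    congr 1; ring
  have hre : ∀ k, -‖negPsum (α ::ₘ t) k‖ ≤ (negPsum (α ::ₘ t) k / w ^ k).re := by
    intro k
    have := neg_le_of_abs_le (Complex.abs_re_le_norm (negPsum (α ::ₘ t) k / w ^ k))
    simpa [hwn] using this
  have hqr : ∀ k, q ^ k ≤ r ^ k := fun k => pow_le_pow_left₀ hq.le hle k
  have hz := negPsum_eventually_zero v (by
    intro k
    by_cases hk : k = 0
    · simp [negPsum, hk]
    · rw [hv k hk]
      have h1 := hre k
      have h2 := hB k
      have h3 := hqr k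
      exact_mod_cast (by linarith : (0 : ℝ) ≤ _))
  obtain ⟨k, hk, hlt⟩ := hB' ((eulerPoly v).natDegree + 1)
  have h0 := hz k (by omega)
  rw [hv k (by omega)] at h0
  have h1 := hre k
  have h3 := hqr k
  have h4 : 2 * r ^ k + 2 * (negPsum (α ::ₘ t) k / w ^ k).re = 0 := by exact_mod_cast h0
  linarith

open Filter Topology in
lemma tendsto_of_isLogDeriv {A B : ℕ → ℂ} {q : ℝ} (hq : 0 < q) (hA0 : A 0 = 1) (D : ℕ)
    (hA : ∀ n ≥ D, A n = 0) (h : IsLogDeriv A B) (hB : ∀ k, ‖B k‖ ≤ q ^ k)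
    (hB' : ∀ N, ∃ k ≥ N, ‖B k‖ < q ^ k) :
    Tendsto (fun k => ‖B k‖ / q ^ k) atTop (𝓝 0) := by
  let L : Polynomial ℂ := ∑ n ∈ Finset.range D, Polynomial.monomial n (A n)
  have hL : ∀ n, L.coeff n = A n := by
    intro n
    simp only [L, Polynomial.finsetSum_coeff, Polynomial.coeff_monomial, Finset.sum_ite_eq',
      Finset.mem_range]
    split_ifs with hn
    · rfl
    · exact (hA n (by omega)).symm
  obtain ⟨s, hs⟩ := exists_eulerPoly L (by rw [hL, hA0])
  have hAs : A = fun n => (eulerPoly s).coeff n := by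
    funext n; rw [← hs, hL]
  obtain rfl : B = negPsum s := by
    refine h.unique (by rw [hA0]; exact one_ne_zero) ?_
    rw [hAs]; exact isLogDeriv_eulerPoly s
  have hlt := norm_lt_of_mem hq hB hB'
  have h1 : Tendsto (fun k : ℕ => (s.map fun α => (α / (q : ℂ)) ^ k).sum) atTop (𝓝 0) := by
    have := tendsto_multiset_sum (f := fun α (k : ℕ) => (α / q : ℂ) ^ k) (x := atTop)
      (a := fun _ => 0) s (by
        intro α hα
        apply tendsto_pow_atTop_nhds_zero_of_norm_lt_one
        rw [norm_div, Complex.norm_real, Real.norm_of_nonneg hq.le, div_lt_one hq]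
        exact hlt α hα)
    simpa using this
  have h2 := h1.norm
  rw [norm_zero] at h2
  refine h2.congr' ?_
  filter_upwards [eventually_ne_atTop 0] with k hk
  simp only [negPsum, hk, if_false, div_pow, Multiset.sum_map_div, norm_neg, norm_div, norm_pow,
    Complex.norm_real, Real.norm_of_nonneg hq.le]

/-! ### Counting monic and irreducible polynomials over a finite field -/

section Counting

variable {F : Type*} [Field F]

lemma monicParam_injective (n : ℕ) : Function.Injective fun c : Fin n → F =>
    Polynomial.X ^ n + ((Polynomial.degreeLTEquiv F n).symm c : Polynomial F) := by
  intro c c' h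
  exact (Polynomial.degreeLTEquiv F n).symm.injective (Subtype.ext (add_left_cancel h))

variable (F) [Fintype F]

open Classical in
/-- The monic polynomials of degree `n`, parametrized as `X ^ n + g` with `deg g < n`. -/
noncomputable def monicsOfDegree (n : ℕ) : Finset (Polynomial F) :=
  Finset.univ.image fun c : Fin n → F =>
    Polynomial.X ^ n + ((Polynomial.degreeLTEquiv F n).symm c : Polynomial F)

open Classical in
/-- The monic irreducible polynomials of degree `n`. -/
noncomputable def primesOfDegree (n : ℕ) : Finset (Polynomial F) :=
  (monicsOfDegree F n).filter Irreducible

variable {F}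

lemma mem_monicsOfDegree {n : ℕ} {f : Polynomial F} :
    f ∈ monicsOfDegree F n ↔ f.Monic ∧ f.natDegree = n := by
  simp only [monicsOfDegree, Finset.mem_image, Finset.mem_univ, true_and]
  constructor
  · rintro ⟨c, rfl⟩
    have h := Polynomial.mem_degreeLT.1 ((Polynomial.degreeLTEquiv F n).symm c).2
    refine ⟨Polynomial.monic_X_pow_add h, ?_⟩
    rw [Polynomial.natDegree_add_eq_left_of_degree_lt (by simpa using h), Polynomial.natDegree_X_pow]
  · rintro ⟨hm, rfl⟩
    have h : f - Polynomial.X ^ f.natDegree ∈ Polynomial.degreeLT F f.natDegree := by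
      rw [Polynomial.mem_degreeLT, ← Polynomial.degree_eq_natDegree hm.ne_zero]
      exact Polynomial.degree_sub_lt_left (by
        rw [Polynomial.degree_X_pow, Polynomial.degree_eq_natDegree hm.ne_zero]) hm.ne_zero
        (by rw [hm.leadingCoeff, (Polynomial.monic_X_pow _).leadingCoeff])
    exact ⟨Polynomial.degreeLTEquiv F _ ⟨_, h⟩, by simp⟩

lemma mem_primesOfDegree {n : ℕ} {f : Polynomial F} :
    f ∈ primesOfDegree F n ↔ f.Monic ∧ f.natDegree = n ∧ Irreducible f := by
  simp only [primesOfDegree, Finset.mem_filter, mem_monicsOfDegree, and_assoc]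

lemma sum_monicsOfDegree {β : Type*} [AddCommMonoid β] (n : ℕ) (g : Polynomial F → β) :
    ∑ f ∈ monicsOfDegree F n, g f = ∑ c : Fin n → F,
      g (Polynomial.X ^ n + ((Polynomial.degreeLTEquiv F n).symm c : Polynomial F)) := by
  classical
  rw [monicsOfDegree, Finset.sum_image fun _ _ _ _ h => monicParam_injective n h]

lemma card_monicsOfDegree (n : ℕ) : (monicsOfDegree F n).card = Fintype.card F ^ n := by
  classical
  rw [monicsOfDegree, Finset.card_image_of_injective _ (monicParam_injective n)]
  simp

open Classical in
lemma sum_dvd_monicsOfDegree (ψ : Polynomial F →* ℂ) {Q : Polynomial F} (hQ : Q.Monic) (i : ℕ) :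
    ∑ f ∈ monicsOfDegree F (i + Q.natDegree), (if Q ∣ f then ψ f else 0) =
      ψ Q * ∑ e ∈ monicsOfDegree F i, ψ e := by
  rw [← Finset.sum_filter, Finset.mul_sum]
  symm
  refine Finset.sum_nbij (fun e => Q * e) ?_ ?_ ?_ ?_
  · intro e he
    rw [mem_monicsOfDegree] at he
    simp only [Finset.mem_filter, mem_monicsOfDegree, dvd_mul_right, and_true]
    exact ⟨hQ.mul he.1, by rw [hQ.natDegree_mul he.1, he.2, add_comm]⟩
  · intro e _ e' _ h
    exact mul_left_cancel₀ hQ.ne_zero h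
  · intro f hf
    simp only [Finset.coe_filter, Set.mem_ofPred_eq, mem_monicsOfDegree] at hf
    obtain ⟨⟨hm, hd⟩, e, rfl⟩ := hf
    have he : e.Monic := hQ.of_mul_monic_left hm
    refine ⟨e, ?_, rfl⟩
    rw [Finset.mem_coe, mem_monicsOfDegree]
    refine ⟨he, ?_⟩
    rw [hQ.natDegree_mul he] at hd
    omega
  · intro e _
    rw [map_mul]

open Classical in
/-- The identity `∑_{g ∣ f} Λ(g) = deg f`, with the prime powers `g = P ^ (k / d)` sorted by their
degree `k = p.2` and the degree `d` of `P`. -/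
lemma sum_vonMangoldt {n : ℕ} {f : Polynomial F} (hf : f ∈ monicsOfDegree F n) :
    ∑ p ∈ Finset.HasAntidiagonal.antidiagonal n, ∑ d ∈ p.2.divisors, ∑ P ∈ primesOfDegree F d,
      (if P ^ (p.2 / d) ∣ f then d else 0) = n := by
  rw [mem_monicsOfDegree] at hf
  obtain ⟨hm, hd⟩ := hf
  set T := UniqueFactorizationMonoid.normalizedFactors f with hT
  have hTm : ∀ P ∈ T, P.Monic ∧ Irreducible P := by
    intro P hP
    have h1 := UniqueFactorizationMonoid.irreducible_of_normalized_factor P hP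
    have h2 := UniqueFactorizationMonoid.normalize_normalized_factor P hP
    exact ⟨h2 ▸ Polynomial.monic_normalize h1.ne_zero, h1⟩
  have hprod : T.prod = f := by
    rw [hT, UniqueFactorizationMonoid.prod_normalizedFactors_eq hm.ne_zero, hm.normalize_eq_self]
  have hdvd : ∀ P : Polynomial F, P.Monic → Irreducible P → ∀ j, P ^ j ∣ f ↔ j ≤ T.count P := by
    intro P hPm hPi j
    rw [pow_dvd_iff_le_emultiplicity,
      UniqueFactorizationMonoid.emultiplicity_eq_count_normalizedFactors hPi hm.ne_zero,
      hPm.normalize_eq_self, Nat.cast_le]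
  have hn : n = ∑ P ∈ T.toFinset, ∑ _j ∈ Finset.Icc 1 (T.count P), P.natDegree := by
    rw [← hd, ← hprod, Polynomial.natDegree_multiset_prod_of_monic _ fun P hP => (hTm P hP).1,
      Finset.sum_multiset_map_count]
    simp
  conv_rhs => rw [hn]
  simp_rw [Finset.sum_sigma', ← Finset.sum_filter]
  refine Finset.sum_bij'
    (fun x _ => (⟨x.2.2, x.1.2 / x.2.1⟩ : (_ : Polynomial F) × ℕ))
    (fun y _ => (⟨(n - y.2 * y.1.natDegree, y.2 * y.1.natDegree), y.1.natDegree, y.1⟩ :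
      (_ : ℕ × ℕ) × (_ : ℕ) × Polynomial F)) ?_ ?_ ?_ ?_ ?_
  · rintro ⟨⟨i, k⟩, d, P⟩ h
    simp only [Finset.mem_filter, Finset.mem_sigma, Nat.mem_divisors, mem_primesOfDegree,
      Finset.HasAntidiagonal.mem_antidiagonal] at h
    obtain ⟨⟨hik, ⟨hdk, hk⟩, hPm, hPd, hPi⟩, hPf⟩ := h
    rw [hdvd P hPm hPi] at hPf
    have hpos : 1 ≤ k / d := Nat.div_pos (Nat.le_of_dvd (by omega) hdk)
      (Nat.pos_of_dvd_of_pos hdk (by omega))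
    simp only [Finset.mem_sigma, Multiset.mem_toFinset, Finset.mem_Icc]
    exact ⟨Multiset.count_pos.1 (by omega), hpos, hPf⟩
  · rintro ⟨P, j⟩ h
    simp only [Finset.mem_sigma, Multiset.mem_toFinset, Finset.mem_Icc] at h
    obtain ⟨hP, hj1, hj⟩ := h
    obtain ⟨hPm, hPi⟩ := hTm P hP
    have hpos := hPi.natDegree_pos
    have hPf := (hdvd P hPm hPi j).2 hj
    have hle := Polynomial.natDegree_le_of_dvd hPf hm.ne_zero
    rw [hPm.natDegree_pow, hd] at hle
    simp only [Finset.mem_filter, Finset.mem_sigma, Nat.mem_divisors, mem_primesOfDegree,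
      Finset.HasAntidiagonal.mem_antidiagonal]
    refine ⟨⟨by omega, ⟨dvd_mul_left _ _, ?_⟩, hPm, trivial, hPi⟩, ?_⟩
    · positivity
    · rwa [Nat.mul_div_cancel _ hpos]
  · rintro ⟨⟨i, k⟩, d, P⟩ h
    simp only [Finset.mem_filter, Finset.mem_sigma, Nat.mem_divisors, mem_primesOfDegree,
      Finset.HasAntidiagonal.mem_antidiagonal] at h
    obtain ⟨⟨hik, ⟨hdk, hk⟩, hPm, hPd, hPi⟩, hPf⟩ := h
    subst hPd
    simp only [Nat.div_mul_cancel hdk]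
    have : n - k = i := by omega
    rw [this]
  · rintro ⟨P, j⟩ h
    simp only [Finset.mem_sigma, Multiset.mem_toFinset, Finset.mem_Icc] at h
    have hpos := (hTm P h.1).2.natDegree_pos
    simp only [Nat.mul_div_cancel _ hpos]
  · rintro ⟨⟨i, k⟩, d, P⟩ h
    simp only [Finset.mem_filter, Finset.mem_sigma, mem_primesOfDegree] at h
    exact h.1.2.2.2.1.symm

/-- The `n`-th coefficient of the L-function of `ψ` as a power series in `u = q ^ (-s)`. -/
noncomputable def lCoeff (ψ : Polynomial F →* ℂ) (n : ℕ) : ℂ := ∑ f ∈ monicsOfDegree F n, ψ f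

/-- The sum `∑ Λ(f) ψ(f)` over monic `f` of degree `k`, written as a sum over prime powers
`f = P ^ (k / d)` with `deg P = d`. It is `0` for `k = 0`, as `Nat.divisors 0 = ∅`. -/
noncomputable def primePowerSum (ψ : Polynomial F →* ℂ) (k : ℕ) : ℂ :=
  ∑ d ∈ k.divisors, ∑ P ∈ primesOfDegree F d, (d : ℂ) * ψ P ^ (k / d)

/-- The logarithmic derivative of the Euler product. -/
lemma isLogDeriv_lCoeff (ψ : Polynomial F →* ℂ) : IsLogDeriv (lCoeff ψ) (primePowerSum ψ) := by
  classical
  intro n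
  have h1 : (n : ℂ) * lCoeff ψ n = ∑ f ∈ monicsOfDegree F n,
      ∑ p ∈ Finset.HasAntidiagonal.antidiagonal n, ∑ d ∈ p.2.divisors, ∑ P ∈ primesOfDegree F d,
        (d : ℂ) * (if P ^ (p.2 / d) ∣ f then ψ f else 0) := by
    rw [lCoeff, Finset.mul_sum]
    refine Finset.sum_congr rfl fun f hf => ?_
    conv_lhs => rw [← sum_vonMangoldt hf]
    push_cast
    simp only [Finset.sum_mul]
    refine Finset.sum_congr rfl fun p _ => Finset.sum_congr rfl fun d _ =>
      Finset.sum_congr rfl fun P _ => ?_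
    split_ifs <;> simp
  rw [h1, Finset.sum_comm]
  refine Finset.sum_congr rfl fun p hp => ?_
  rw [Finset.sum_comm, primePowerSum, Finset.mul_sum]
  refine Finset.sum_congr rfl fun d hd => ?_
  rw [Finset.sum_comm, Finset.mul_sum]
  refine Finset.sum_congr rfl fun P hP => ?_
  rw [mem_primesOfDegree] at hP
  rw [Finset.HasAntidiagonal.mem_antidiagonal] at hp
  have hdeg : (P ^ (p.2 / d)).natDegree = p.2 := by
    rw [hP.1.natDegree_pow, hP.2.1, Nat.div_mul_cancel (Nat.dvd_of_mem_divisors hd)]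
  have h2 := sum_dvd_monicsOfDegree ψ (hP.1.pow (p.2 / d)) p.1
  rw [hdeg, hp] at h2
  rw [← Finset.mul_sum, h2, map_pow, lCoeff]
  ring

lemma lCoeff_zero (ψ : Polynomial F →* ℂ) : lCoeff ψ 0 = 1 := by
  have : ∀ f ∈ monicsOfDegree F 0, f = 1 := fun f hf => by
    rw [mem_monicsOfDegree] at hf
    exact hf.1.natDegree_eq_zero.1 hf.2
  have h2 : ∀ f ∈ monicsOfDegree F 0, ψ f = 1 := fun f hf => by rw [this f hf, map_one]
  rw [lCoeff, Finset.sum_congr rfl h2]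
  simp [card_monicsOfDegree]

/-- The prime number theorem for `F[X]` in exact form: `∑_{d ∣ k} d π(d) = q ^ k`, where `π(d)`
is the number of monic irreducible polynomials of degree `d`. -/
lemma primePowerSum_one {k : ℕ} (hk : k ≠ 0) :
    ∑ d ∈ k.divisors, ∑ _P ∈ primesOfDegree F d, (d : ℝ) = (Fintype.card F : ℝ) ^ k := by
  have h1 : IsLogDeriv (lCoeff (1 : Polynomial F →* ℂ))
      (fun k => if k = 0 then 0 else (Fintype.card F : ℂ) ^ k) := by
    intro n
    simp only [lCoeff, MonoidHom.one_apply, Finset.sum_const, card_monicsOfDegree, nsmul_eq_mul,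
      mul_one, Nat.cast_pow]
    rw [Finset.Nat.sum_antidiagonal_eq_sum_range_succ_mk, ← Finset.sum_range_reflect,
      Finset.sum_range_succ']
    simp only [Nat.add_sub_cancel, Nat.succ_eq_add_one]
    rw [Finset.sum_congr rfl (g := fun _ => (Fintype.card F : ℂ) ^ n)]
    · simp
    · intro i hi
      rw [Finset.mem_range] at hi
      have h : n - (n - (i + 1)) = i + 1 := by omega
      simp only [h, Nat.succ_ne_zero, if_false]
      rw [← pow_add]
      congr 1; omega
  have h2 := (isLogDeriv_lCoeff (1 : Polynomial F →* ℂ)).unique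
    (by rw [lCoeff_zero]; exact one_ne_zero) h1
  have h3 := congrFun h2 k
  simp only [primePowerSum, hk, if_false, MonoidHom.one_apply, one_pow, mul_one] at h3
  exact_mod_cast h3

lemma norm_primePowerSum_le {ψ : Polynomial F →* ℂ} (hψ : ∀ f, ‖ψ f‖ ≤ 1) (k : ℕ) :
    ‖primePowerSum ψ k‖ ≤ (Fintype.card F : ℝ) ^ k := by
  rcases eq_or_ne k 0 with rfl | hk
  · simp [primePowerSum]
  rw [← primePowerSum_one hk]
  refine norm_sum_le_of_le _ fun d _ => norm_sum_le_of_le _ fun P _ => ?_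
  rw [norm_mul, norm_pow, Complex.norm_natCast]
  exact mul_le_of_le_one_right (Nat.cast_nonneg _) (pow_le_one₀ (norm_nonneg _) (hψ P))

lemma norm_primePowerSum_lt {ψ : Polynomial F →* ℂ} (hψ : ∀ f, ‖ψ f‖ ≤ 1) {P : Polynomial F}
    (hPm : P.Monic) (hPi : Irreducible P) (hP : ψ P = 0) {k : ℕ} (hk : k ≠ 0)
    (hd : P.natDegree ∣ k) :
    ‖primePowerSum ψ k‖ < (Fintype.card F : ℝ) ^ k := by
  rw [← primePowerSum_one hk]
  have hle : ∀ d : ℕ, ∀ Q : Polynomial F, ‖(d : ℂ) * ψ Q ^ (k / d)‖ ≤ (d : ℝ) := by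
    intro d Q
    rw [norm_mul, norm_pow, Complex.norm_natCast]
    exact mul_le_of_le_one_right (Nat.cast_nonneg _) (pow_le_one₀ (norm_nonneg _) (hψ Q))
  refine (norm_sum_le _ _).trans_lt (Finset.sum_lt_sum
    (fun d _ => norm_sum_le_of_le _ fun Q _ => hle d Q)
    ⟨P.natDegree, Nat.mem_divisors.2 ⟨hd, hk⟩, (norm_sum_le _ _).trans_lt (Finset.sum_lt_sum
      (fun Q _ => hle _ Q) ⟨P, mem_primesOfDegree.2 ⟨hPm, rfl, hPi⟩, ?_⟩)⟩)
  have h1 : 0 < k / P.natDegree :=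
    Nat.div_pos (Nat.le_of_dvd (by omega) hd) hPi.natDegree_pos
  rw [hP, zero_pow h1.ne', mul_zero, norm_zero]
  exact_mod_cast hPi.natDegree_pos

end Counting

/-! ### Characters modulo a polynomial and primes in residue classes -/

section Dirichlet

variable {F : Type*} [Field F]

/-- A character of `F[X]/(a)` as a completely multiplicative function on `F[X]`; it vanishes at the
polynomials that are not coprime to `a`. -/
noncomputable def pullbackChar {a : Polynomial F}
    (χ : MulChar (Polynomial F ⧸ Ideal.span {a}) ℂ) : Polynomial F →* ℂ :=
  χ.toMonoidHom.comp (Ideal.Quotient.mk (Ideal.span {a})).toMonoidHom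

lemma pullbackChar_apply {a : Polynomial F} (χ : MulChar (Polynomial F ⧸ Ideal.span {a}) ℂ)
    (f : Polynomial F) : pullbackChar χ f = χ (Ideal.Quotient.mk _ f) := rfl

lemma isUnit_mk {a f : Polynomial F} (h : IsCoprime a f) :
    IsUnit (Ideal.Quotient.mk (Ideal.span {a}) f) := by
  obtain ⟨u, v, huv⟩ := h
  refine IsUnit.of_mul_eq_one (Ideal.Quotient.mk _ v) ?_
  rw [← map_mul, ← map_one (Ideal.Quotient.mk _), Ideal.Quotient.eq, Ideal.mem_span_singleton]
  exact ⟨-u, by linear_combination huv⟩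

lemma mk_degreeLT_surjective {a : Polynomial F} (ha : a ≠ 0) {n : ℕ} (hn : a.natDegree ≤ n) :
    Function.Surjective fun c : Fin n → F => Ideal.Quotient.mk (Ideal.span {a})
      ((Polynomial.degreeLTEquiv F n).symm c : Polynomial F) := by
  intro r
  obtain ⟨f, rfl⟩ := Ideal.Quotient.mk_surjective r
  have h : f % a ∈ Polynomial.degreeLT F n := by
    rw [Polynomial.mem_degreeLT]
    refine (Polynomial.degree_mod_lt f ha).trans_le ?_
    rw [Polynomial.degree_eq_natDegree ha]
    exact_mod_cast hn
  refine ⟨Polynomial.degreeLTEquiv F n ⟨_, h⟩, ?_⟩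
  simp only [LinearEquiv.symm_apply_apply]
  rw [Ideal.Quotient.eq, Ideal.mem_span_singleton]
  refine ⟨-(f / a), ?_⟩
  linear_combination EuclideanDomain.div_add_mod f a

variable [Fintype F]

lemma finite_quotient {a : Polynomial F} (ha : a ≠ 0) :
    Finite (Polynomial F ⧸ Ideal.span {a}) :=
  Finite.of_surjective _ (mk_degreeLT_surjective ha le_rfl)

lemma norm_mulChar_le_one {R : Type*} [CommRing R] [Finite R] (χ : MulChar R ℂ) (x : R) :
    ‖χ x‖ ≤ 1 := by
  by_cases hx : IsUnit x
  · obtain ⟨u, rfl⟩ := hx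
    refine (Complex.norm_eq_one_of_pow_eq_one (n := Nat.card Rˣ) ?_ Nat.card_pos.ne').le
    rw [← map_pow, ← Units.val_pow_eq_pow_val, pow_card_eq_one', Units.val_one, map_one]
  · simp [χ.map_nonunit hx]

/-- The L-function of a nontrivial character is a polynomial: for `n ≥ deg a` the monic polynomials
of degree `n` are equidistributed among the residue classes modulo `a`. -/
lemma lCoeff_eq_zero {a : Polynomial F} (ha : a ≠ 0)
    {χ : MulChar (Polynomial F ⧸ Ideal.span {a}) ℂ} (hχ : χ ≠ 1) {n : ℕ} (hn : a.natDegree ≤ n) :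
    lCoeff (pullbackChar χ) n = 0 := by
  classical
  have := finite_quotient ha
  have := Fintype.ofFinite (Polynomial F ⧸ Ideal.span {a})
  let φ : (Fin n → F) →+ (Polynomial F ⧸ Ideal.span {a}) :=
    (Ideal.Quotient.mk (Ideal.span {a})).toAddMonoidHom.comp
      ((Polynomial.degreeLT F n).subtype.toAddMonoidHom.comp
        (Polynomial.degreeLTEquiv F n).symm.toLinearMap.toAddMonoidHom)
  have hφ : Function.Surjective φ := mk_degreeLT_surjective ha hn
  let x := Ideal.Quotient.mk (Ideal.span {a}) (Polynomial.X ^ n)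
  have h1 : lCoeff (pullbackChar χ) n = ∑ c, χ (x + φ c) := by
    rw [lCoeff, sum_monicsOfDegree]
    refine Finset.sum_congr rfl fun c _ => ?_
    rw [pullbackChar_apply, map_add]
    rfl
  rw [h1, Finset.sum_comp (fun y => χ (x + y)) φ, Finset.image_univ_of_surjective hφ,
    Finset.sum_congr rfl fun y _ => by
      rw [AddMonoidHom.card_fiber_eq_of_mem_range φ (hφ y) (hφ 0)],
    ← Finset.smul_sum, Fintype.sum_equiv (Equiv.addLeft x) (fun y => χ (x + y)) χ fun _ => rfl,
    MulChar.sum_eq_zero_of_ne_one hχ, smul_zero]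

open Filter Topology in
/-- It is here that `a` must not be a unit: at a prime factor of `a` the character vanishes, which
makes the bound on `primePowerSum` strict in infinitely many degrees. -/
lemma tendsto_primePowerSum {a : Polynomial F} (ha : a ≠ 0) (hau : ¬ IsUnit a)
    {χ : MulChar (Polynomial F ⧸ Ideal.span {a}) ℂ} (hχ : χ ≠ 1) :
    Tendsto (fun k => ‖primePowerSum (pullbackChar χ) k‖ / (Fintype.card F : ℝ) ^ k)
      atTop (𝓝 0) := by
  have := finite_quotient ha
  have hψ : ∀ f, ‖pullbackChar χ f‖ ≤ 1 := fun f => norm_mulChar_le_one χ _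
  refine tendsto_of_isLogDeriv (by exact_mod_cast Fintype.card_pos) (lCoeff_zero _) a.natDegree
    (fun n hn => lCoeff_eq_zero ha hχ hn) (isLogDeriv_lCoeff _)
    (norm_primePowerSum_le hψ) fun N => ?_
  obtain ⟨P, hPm, hPi, hPa⟩ := Polynomial.exists_monic_irreducible_factor a hau
  have hP : pullbackChar χ P = 0 := by
    rw [pullbackChar_apply]
    refine χ.map_nonunit fun hu => hPi.not_isUnit ?_
    obtain ⟨y, hy⟩ := hu.exists_right_inv
    obtain ⟨g, rfl⟩ := Ideal.Quotient.mk_surjective y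
    rw [← map_mul, ← map_one (Ideal.Quotient.mk _), Ideal.Quotient.eq,
      Ideal.mem_span_singleton] at hy
    have h1 : P ∣ P * g - (P * g - 1) := dvd_sub (dvd_mul_right _ _) (hPa.trans hy)
    rw [sub_sub_cancel] at h1
    exact isUnit_of_dvd_one h1
  have hpos := hPi.natDegree_pos
  exact ⟨(N + 1) * P.natDegree, by nlinarith,
    norm_primePowerSum_lt hψ hPm hPi hP (by positivity) (dvd_mul_left _ _)⟩

lemma sum_mulChar_eq_zero {R : Type*} [CommRing R] [Finite R] [Fintype (MulChar R ℂ)] {x : R}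
    (hx : x ≠ 1) : ∑ χ : MulChar R ℂ, χ x = 0 := by
  obtain ⟨χ, hχ⟩ := MulChar.exists_apply_ne_one_of_hasEnoughRootsOfUnity R ℂ hx
  refine eq_zero_of_mul_eq_self_left hχ ?_
  simp only [Finset.mul_sum, ← MulChar.mul_apply]
  exact Fintype.sum_bijective _ (Group.mulLeft_bijective χ) _ _ fun χ' ↦ rfl

open Filter Topology in
/-- Dirichlet's theorem for `F[X]` with control on degrees: a residue class coprime to `a` contains
a monic irreducible polynomial of every sufficiently large prime degree. -/
theorem eventually_exists_prime_modEq {a b : Polynomial F} (ha : a ≠ 0) (hau : ¬ IsUnit a)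
    (hab : IsCoprime a b) :
    ∀ᶠ k : ℕ in atTop, k.Prime → ∃ P ∈ primesOfDegree F k, a ∣ P - b := by
  classical
  have := finite_quotient ha
  have := Fintype.ofFinite (MulChar (Polynomial F ⧸ Ideal.span {a}) ℂ)
  set q : ℝ := (Fintype.card F : ℝ) with hq
  have hq1 : 1 < q := by rw [hq]; exact_mod_cast Fintype.one_lt_card
  have hq0 : 0 < q := by linarith
  set X : Finset (MulChar (Polynomial F ⧸ Ideal.span {a}) ℂ) := Finset.univ.erase 1 with hX
  have hlim : Tendsto (fun k : ℕ => ∑ χ ∈ X, ‖primePowerSum (pullbackChar χ) k‖ / q ^ k +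
      ((X.card + 1) * q) / q ^ k) atTop (𝓝 0) := by
    have h1 := tendsto_finsetSum X fun χ hχ =>
      tendsto_primePowerSum ha hau (Finset.ne_of_mem_erase hχ)
    have h2 : Tendsto (fun k : ℕ => ((X.card + 1) * q) / q ^ k) atTop (𝓝 0) :=
      (tendsto_pow_atTop_atTop_of_one_lt hq1).const_div_atTop _
    simpa using h1.add h2
  filter_upwards [hlim.eventually_lt_const one_pos, eventually_gt_atTop a.natDegree]
    with k hlt hka hk
  by_contra! hno
  have hqk : 0 < q ^ k := pow_pos hq0 k
  have hcard : ((primesOfDegree F 1).card : ℝ) ≤ q := by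
    have h := Finset.card_filter_le (monicsOfDegree F 1) Irreducible
    rw [card_monicsOfDegree, pow_one] at h
    rw [hq]
    exact_mod_cast h
  obtain ⟨v, hv⟩ := (isUnit_mk hab).exists_right_inv
  have hvu : IsUnit v := IsUnit.of_mul_eq_one _ ((mul_comm _ _).trans hv)
  let S : MulChar (Polynomial F ⧸ Ideal.span {a}) ℂ → ℂ := fun χ =>
    ∑ P ∈ primesOfDegree F k, (k : ℂ) * pullbackChar χ P
  -- As `k` is prime, only irreducible polynomials of degree `1` and `k` enter `primePowerSum`.
  have hS : ∀ χ, primePowerSum (pullbackChar χ) k =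
      ∑ P ∈ primesOfDegree F 1, pullbackChar χ P ^ k + S χ := by
    intro χ
    rw [primePowerSum, hk.divisors, Finset.sum_pair hk.one_lt.ne]
    simp [S, Nat.div_self hk.pos]
  have hSle : ∀ χ, ‖S χ‖ ≤ ‖primePowerSum (pullbackChar χ) k‖ + q := by
    intro χ
    rw [← sub_eq_iff_eq_add'.2 (hS χ)]
    refine (norm_sub_le _ _).trans (add_le_add_right (le_trans ?_ hcard) _)
    refine (norm_sum_le _ _).trans ?_
    rw [← nsmul_one, ← Finset.sum_const]
    refine Finset.sum_le_sum fun P _ => ?_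
    rw [norm_pow]
    exact pow_le_one₀ (norm_nonneg _) (norm_mulChar_le_one χ _)
  -- No irreducible polynomial of degree `k > deg a` divides `a`, so `S 1` counts all of them.
  have hS1 : q ^ k - q ≤ ‖S 1‖ := by
    have h1 := primePowerSum_one (F := F) hk.ne_zero
    rw [hk.divisors, Finset.sum_pair hk.one_lt.ne] at h1
    have h2 : S 1 = ((∑ _P ∈ primesOfDegree F k, (k : ℝ) : ℝ) : ℂ) := by
      push_cast
      refine Finset.sum_congr rfl fun P hP => ?_
      rw [mem_primesOfDegree] at hP
      have hcop : IsCoprime a P := by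
        rw [isCoprime_comm, hP.2.2.coprime_iff_not_dvd]
        intro hd
        have := Polynomial.natDegree_le_of_dvd hd ha
        omega
      rw [pullbackChar_apply, MulChar.one_apply (isUnit_mk hcop), mul_one]
    rw [h2, Complex.norm_real]
    refine le_trans ?_ (le_abs_self _)
    simp only [Finset.sum_const, nsmul_eq_mul, Nat.cast_one, mul_one] at h1 ⊢
    linarith
  -- Orthogonality: by assumption no `P` of degree `k` is congruent to `b`.
  have horth : ∑ χ, χ v * S χ = 0 := by
    simp only [S, Finset.mul_sum]
    rw [Finset.sum_comm]
    refine Finset.sum_eq_zero fun P hP => ?_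
    have hne : v * Ideal.Quotient.mk (Ideal.span {a}) P ≠ 1 := by
      intro h
      refine hno P hP ?_
      rw [← Ideal.mem_span_singleton, ← Ideal.Quotient.eq]
      exact hvu.mul_left_cancel (h.trans ((mul_comm _ _).trans hv).symm)
    rw [Finset.sum_congr rfl (g := fun χ : MulChar (Polynomial F ⧸ Ideal.span {a}) ℂ =>
      (k : ℂ) * χ (v * Ideal.Quotient.mk (Ideal.span {a}) P)) fun χ _ => by
        rw [map_mul, pullbackChar_apply]; ring, ← Finset.mul_sum, sum_mulChar_eq_zero hne, mul_zero]
  rw [← Finset.add_sum_erase _ _ (Finset.mem_univ 1), MulChar.one_apply hvu, one_mul,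
    ← hX, add_eq_zero_iff_eq_neg] at horth
  have hfin : q ^ k - q ≤ ∑ χ ∈ X, (‖primePowerSum (pullbackChar χ) k‖ + q) := by
    refine hS1.trans ?_
    rw [horth, norm_neg]
    refine norm_sum_le_of_le _ fun χ _ => ?_
    rw [norm_mul]
    exact (mul_le_of_le_one_left (norm_nonneg _) (norm_mulChar_le_one χ v)).trans (hSle χ)
  rw [Finset.sum_add_distrib, Finset.sum_const, nsmul_eq_mul] at hfin
  rw [← Finset.sum_div, ← add_div, div_lt_one hqk] at hlt
  linarith

end Dirichlet

/-- Let `F` be a finite field and `M = [[a, b], [c, d]] ∈ SL_2(F[X])` with `a ≠ 0`.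
Then at most `2` elementary operations turn `M` into a matrix `[[a, b'], [c', d']]`
whose anti-diagonal entries `b'`, `c'` are irreducible polynomials with relatively
prime degrees. -/
theorem reduction_to_prime_antidiagonal
    (F : Type*) [Field F] [Fintype F]
    (M : Matrix.SpecialLinearGroup (Fin 2) (Polynomial F))
    (ha : M.1 0 0 ≠ 0) :
    ∃ L R : List (Matrix.SpecialLinearGroup (Fin 2) (Polynomial F)),
      L.length + R.length ≤ 2 ∧
      (∀ E ∈ L, IsElementary E) ∧ (∀ E ∈ R, IsElementary E) ∧
      (L.prod * M * R.prod).1 0 0 = M.1 0 0 ∧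
      Irreducible ((L.prod * M * R.prod).1 0 1) ∧
      Irreducible ((L.prod * M * R.prod).1 1 0) ∧
      Nat.gcd (((L.prod * M * R.prod).1 0 1).natDegree)
        (((L.prod * M * R.prod).1 1 0).natDegree) = 1 := by
  have hdet : M.1 0 0 * M.1 1 1 - M.1 0 1 * M.1 1 0 = 1 := by
    rw [← Matrix.det_fin_two]; exact M.2
  obtain ⟨b', c', hb, hc, hb', hc', hgcd⟩ : ∃ b' c' : Polynomial F,
      M.1 0 0 ∣ b' - M.1 0 1 ∧ M.1 0 0 ∣ c' - M.1 1 0 ∧ Irreducible b' ∧ Irreducible c' ∧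
        Nat.gcd b'.natDegree c'.natDegree = 1 := by
    by_cases hau : IsUnit (M.1 0 0)
    · exact ⟨Polynomial.X, Polynomial.X, hau.dvd, hau.dvd, Polynomial.irreducible_X,
        Polynomial.irreducible_X, by simp⟩
    · have hB := eventually_exists_prime_modEq (b := M.1 0 1) ha hau
        ⟨M.1 1 1, -M.1 1 0, by linear_combination hdet⟩
      have hC := eventually_exists_prime_modEq (b := M.1 1 0) ha hau
        ⟨M.1 1 1, -M.1 0 1, by linear_combination hdet⟩
      obtain ⟨N, hN⟩ := Filter.eventually_atTop.1 (hB.and hC)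
      obtain ⟨p, hpN, hp⟩ := Nat.exists_infinite_primes N
      obtain ⟨r, hrp, hr⟩ := Nat.exists_infinite_primes (p + 1)
      obtain ⟨b', hb', hb⟩ := (hN p hpN).1 hp
      obtain ⟨c', hc', hc⟩ := (hN r (by omega)).2 hr
      rw [mem_primesOfDegree] at hb' hc'
      refine ⟨b', c', hb, hc, hb'.2.2, hc'.2.2, ?_⟩
      rw [hb'.2.1, hc'.2.1]
      exact (Nat.coprime_primes hp hr).2 (by omega)
  obtain ⟨s, hs⟩ := hb
  obtain ⟨t, ht⟩ := hc
  let E₁ : Matrix.SpecialLinearGroup (Fin 2) (Polynomial F) :=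
    ⟨Matrix.transvection 1 0 t, Matrix.det_transvection_of_ne _ _ (by decide) _⟩
  let E₂ : Matrix.SpecialLinearGroup (Fin 2) (Polynomial F) :=
    ⟨Matrix.transvection 0 1 s, Matrix.det_transvection_of_ne _ _ (by decide) _⟩
  have hprod : (([E₁].prod * M * [E₂].prod).1 : Matrix (Fin 2) (Fin 2) (Polynomial F)) =
      Matrix.transvection 1 0 t * M.1 * Matrix.transvection 0 1 s := by
    rw [List.prod_singleton, List.prod_singleton]; rfl
  have h00 : ([E₁].prod * M * [E₂].prod).1 0 0 = M.1 0 0 := by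
    rw [hprod, Matrix.mul_transvection_apply_of_ne _ _ _ _ (by decide),
      Matrix.transvection_mul_apply_of_ne _ _ _ _ (by decide)]
  have h01 : ([E₁].prod * M * [E₂].prod).1 0 1 = b' := by
    rw [hprod, Matrix.mul_transvection_apply_same,
      Matrix.transvection_mul_apply_of_ne _ _ _ _ (by decide),
      Matrix.transvection_mul_apply_of_ne _ _ _ _ (by decide)]
    linear_combination -hs
  have h10 : ([E₁].prod * M * [E₂].prod).1 1 0 = c' := by
    rw [hprod, Matrix.mul_transvection_apply_of_ne _ _ _ _ (by decide),
      Matrix.transvection_mul_apply_same]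
    linear_combination -ht
  refine ⟨[E₁], [E₂], by simp, ?_, ?_, h00, h01 ▸ hb', h10 ▸ hc', by rw [h01, h10, hgcd]⟩
  · intro E hE
    rw [List.mem_singleton.1 hE]
    exact ⟨1, 0, t, by decide, rfl⟩
  · intro E hE
    rw [List.mem_singleton.1 hE]
    exact ⟨0, 1, s, by decide, rfl⟩
end

section
/- Let F be a finite field and let n ≥ 3. Then SL_n(F[X]) is not boundedly generated by cyclic subgroups: there do not exist finitely many elements g_1, …, g_m ∈ SL_n(F[X]) such that every element of SL_n(F[X]) can be written as g_1^{k_1} · g_2^{k_2} ⋯ g_m^{k_m} for some integers k_1, …, k_m. -/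
/-!
Let `q = |F|`, `p = char F` and `N = |SL_n(F)|`, and reduce modulo `X ^ D` with `D = p ^ k`.
If `g ∈ SL_n(F[X])` then `g ^ N` is trivial modulo `X`, so `g ^ N = 1 + X A`, and in
characteristic `p` this gives `g ^ (N D) = 1 + X ^ D A ^ D ≡ 1` modulo `X ^ D`
(`map_pow_eq_one`). Hence a product of `m` cyclic subgroups has at most `(N D) ^ m` elements
modulo `X ^ D` (`card_le_pow_of_products`), polynomially many in `D`. On the other hand the
elementary matrices `e₀₁(f)` with `deg f < D` are `q ^ D` distinct elements of the reduction
(`injective_mk_ofCoeffs`). Letting `k → ∞` gives a contradiction.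
-/

open Polynomial

/-- In a group, `m` cyclic subgroups whose generators are killed by `E` have at most `E ^ m`
products. -/
lemma card_le_pow_of_products {Q T : Type*} [Group Q] [Fintype T] {m E : ℕ} (hE : 0 < E)
    (h : Fin m → Q) (hpow : ∀ i, h i ^ E = 1) (ψ : T → Q) (hψ : Function.Injective ψ)
    (hprod : ∀ t, ∃ k : Fin m → ℤ, ψ t = (List.ofFn (fun i => h i ^ k i)).prod) :
    Fintype.card T ≤ E ^ m := by
  have : NeZero E := ⟨hE.ne'⟩
  choose k hk using hprod
  have hinj : Function.Injective (fun t => fun i => ((k t i : ℤ) : ZMod E)) := by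
    intro s t hst
    apply hψ
    rw [hk, hk]
    congr 2
    funext i
    have hi : ((k s i : ℤ) : ZMod E) = (k t i : ℤ) := congrFun hst i
    rw [ZMod.intCast_eq_intCast_iff] at hi
    refine (zpow_eq_zpow_iff_modEq).2 (hi.of_dvd ?_)
    exact_mod_cast orderOf_dvd_of_pow_eq_one (hpow i)
  simpa [ZMod.card] using Fintype.card_le_of_injective _ hinj

/-- The polynomial of degree `< D` with prescribed coefficients. -/
noncomputable def ofCoeffs {F : Type*} [Field F] (D : ℕ) (t : Fin D → F) : F[X] :=
  ∑ i : Fin D, C (t i) * X ^ (i : ℕ)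

lemma coeff_ofCoeffs {F : Type*} [Field F] (D : ℕ) (t : Fin D → F) (j : Fin D) :
    (ofCoeffs D t).coeff j = t j := by
  simp [ofCoeffs, coeff_X_pow, Fin.val_inj]

lemma injective_mk_ofCoeffs {F : Type*} [Field F] (D : ℕ) :
    Function.Injective fun t : Fin D → F =>
      Ideal.Quotient.mk (Ideal.span {(X : F[X]) ^ D}) (ofCoeffs D t) := by
  intro s t hst
  have h := (Ideal.Quotient.mk_eq_mk_iff_sub_mem _ _).1 hst
  rw [Ideal.mem_span_singleton, X_pow_dvd_iff] at h
  funext j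
  have hj := h j j.2
  rwa [coeff_sub, coeff_ofCoeffs, coeff_ofCoeffs, sub_eq_zero] at hj

/-- Modulo `X ^ (p ^ k)` the exponent of `SL_n(F[X])` divides `|SL_n(F)| * p ^ k`. -/
lemma map_pow_eq_one {F : Type*} [Field F] [Fintype F] (p : ℕ) [Fact p.Prime] [CharP F p]
    {n : ℕ} [NeZero n] (k : ℕ) (g : Matrix.SpecialLinearGroup (Fin n) F[X]) :
    Matrix.SpecialLinearGroup.map (Ideal.Quotient.mk (Ideal.span {(X : F[X]) ^ (p ^ k)})) g ^
      (Nat.card (Matrix.SpecialLinearGroup (Fin n) F) * p ^ k) = 1 := by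
  set N := Nat.card (Matrix.SpecialLinearGroup (Fin n) F)
  have h0 : Matrix.SpecialLinearGroup.map (constantCoeff (R := F)) (g ^ N) = 1 := by
    rw [map_pow]; exact pow_card_eq_one'
  have hdvd : ∀ i j, (X : F[X]) ∣ ((g ^ N).1 - 1) i j := by
    intro i j
    rw [X_dvd_iff]
    have := congrArg (fun M => M.1 i j) h0
    simp only [Matrix.SpecialLinearGroup.map_apply_coe, RingHom.mapMatrix_apply, Matrix.map_apply,
      Matrix.SpecialLinearGroup.coe_one, constantCoeff_apply] at this
    rw [Matrix.sub_apply, coeff_sub, this]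
    by_cases hij : i = j <;> simp [Matrix.one_apply, hij]
  choose A hA using hdvd
  have hgN : (g ^ N).1 = 1 + (X : F[X]) • Matrix.of A := by
    ext1 i j
    have := hA i j
    simp only [Matrix.sub_apply] at this
    simp [← this]
  have hpow : ((g ^ N) ^ p ^ k).1 = 1 + (X : F[X]) ^ p ^ k • Matrix.of A ^ p ^ k := by
    rw [Matrix.SpecialLinearGroup.coe_pow (g ^ N), hgN,
      add_pow_char_pow_of_commute p _ (Commute.one_left _), one_pow, _root_.smul_pow]
  rw [← map_pow, pow_mul]
  ext i j
  have hX : Ideal.Quotient.mk (Ideal.span {(X : F[X]) ^ (p ^ k)}) (X ^ p ^ k) = 0 :=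
    Ideal.Quotient.eq_zero_iff_mem.2 (Ideal.mem_span_singleton_self _)
  rw [Matrix.SpecialLinearGroup.map_apply_coe, hpow, RingHom.mapMatrix_apply, Matrix.map_apply,
    Matrix.add_apply, Matrix.smul_apply, smul_eq_mul, map_add, map_mul, hX, zero_mul, add_zero]
  by_cases hij : i = j <;> simp [Matrix.one_apply, hij]


/-- Let `F` be a finite field and `n ≥ 3`.  Then `SL_n(F[X])` is not boundedly generated
by cyclic subgroups: there do not exist finitely many elements `g₁, …, gₘ` such that
every element of `SL_n(F[X])` is of the form `g₁^{k₁} ⋯ gₘ^{kₘ}`. -/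
theorem sl_n_polynomial_finite_field_not_boundedly_cyclically_generated
    (F : Type*) [Field F] [Fintype F] (n : ℕ) (hn : 3 ≤ n) :
    ¬ ∃ (m : ℕ) (g : Fin m → Matrix.SpecialLinearGroup (Fin n) (Polynomial F)),
      ∀ x : Matrix.SpecialLinearGroup (Fin n) (Polynomial F),
        ∃ k : Fin m → ℤ, x = (List.ofFn (fun i => g i ^ k i)).prod := by

  rintro ⟨m, g, hg⟩
  have : NeZero n := ⟨by omega⟩
  obtain ⟨p, hp⟩ := CharP.exists F
  have : Fact p.Prime := ⟨CharP.char_is_prime F p⟩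
  have hp1 : 1 < p := (Fact.out : p.Prime).one_lt
  let i₀ : Fin n := ⟨0, by omega⟩
  let i₁ : Fin n := ⟨1, by omega⟩
  have h01 : i₀ ≠ i₁ := by simp [i₀, i₁]
  set N := Nat.card (Matrix.SpecialLinearGroup (Fin n) F)
  have hN : 0 < N := Nat.card_pos
  have key : ∀ k : ℕ, 2 ^ p ^ k ≤ (N * p ^ k) ^ m := by
    intro k
    let φ := Matrix.SpecialLinearGroup.map (n := Fin n)
      (Ideal.Quotient.mk (Ideal.span {(X : F[X]) ^ (p ^ k)}))
    let e : (Fin (p ^ k) → F) → Matrix.SpecialLinearGroup (Fin n) F[X] := fun t =>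
      ⟨Matrix.transvection i₀ i₁ (ofCoeffs _ t), Matrix.det_transvection_of_ne _ _ h01 _⟩
    have hcard := card_le_pow_of_products (Nat.mul_pos hN (pow_pos (by omega) k))
      (fun i => φ (g i)) (fun i => map_pow_eq_one p k (g i)) (fun t => φ (e t)) ?_ ?_
    · refine le_trans ?_ hcard
      rw [Fintype.card_fun, Fintype.card_fin]
      exact Nat.pow_le_pow_left Fintype.one_lt_card _
    · intro s t hst
      apply injective_mk_ofCoeffs
      have : Ideal.Quotient.mk (Ideal.span {(X : F[X]) ^ (p ^ k)})
            (Matrix.transvection i₀ i₁ (ofCoeffs _ s) i₀ i₁) =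
          Ideal.Quotient.mk _ (Matrix.transvection i₀ i₁ (ofCoeffs _ t) i₀ i₁) :=
        congrArg (fun M => M.1 i₀ i₁) hst
      simpa [Matrix.transvection, Matrix.one_apply, h01] using this
    · intro t
      obtain ⟨l, hl⟩ := hg (e t)
      refine ⟨l, ?_⟩
      simp only [hl, map_list_prod, List.map_ofFn]
      congr 2
      funext i
      simp
  -- `D ^ m / 2 ^ D → 0`, so the exponential eventually exceeds the polynomial bound.
  have hlim := (tendsto_pow_const_div_const_pow_of_one_lt m (one_lt_two (α := ℝ))).comp
    (tendsto_pow_atTop_atTop_of_one_lt hp1)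
  have hNm : (0 : ℝ) < (N : ℝ) ^ m := by positivity
  obtain ⟨k, hk⟩ := (hlim.eventually (gt_mem_nhds (inv_pos.2 hNm))).exists
  have hk' : ((p ^ k : ℕ) : ℝ) ^ m / 2 ^ p ^ k < ((N : ℝ) ^ m)⁻¹ := hk
  have hkey : (2 : ℝ) ^ p ^ k ≤ (N : ℝ) ^ m * ((p ^ k : ℕ) : ℝ) ^ m := by
    rw [← mul_pow]; exact_mod_cast key k
  rw [div_lt_iff₀ (by positivity), inv_mul_eq_div, lt_div_iff₀ hNm] at hk'
  linarith
end
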